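/- arXiv:2401.05372 — 4 statements merged into one kernel-verified Lean document; each statement's English description precedes it below -/
import Mathlib

section
/- Let τ = (1+√5)/2 and let W_a, W_b be nonempty compact subsets of ℝ satisfying W_a = τ⁻²·W_a ∪ τ⁻²·(W_a − τ) ∪ τ⁻²·(W_b + τ²) and W_b = τ⁻²·(W_a − 2τ) ∪ τ⁻²·W_b. Then both W_a and W_b have positive Lebesgue measure. -/
open MeasureTheory

/-- physical embedding -/
noncomputable def rtPhi (τ : ℝ) (p : ℤ × ℤ) : ℝ := p.1 + p.2 * τ

/-- internal (conjugate) embedding -/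
noncomputable def rtPsi (τ : ℝ) (p : ℤ × ℤ) : ℝ := p.1 + p.2 * (1 - τ)

lemma rtPhi_add (τ : ℝ) (p q : ℤ × ℤ) : rtPhi τ (p + q) = rtPhi τ p + rtPhi τ q := by
  simp only [rtPhi, Prod.fst_add, Prod.snd_add]; push_cast; ring

lemma rtPsi_add (τ : ℝ) (p q : ℤ × ℤ) : rtPsi τ (p + q) = rtPsi τ p + rtPsi τ q := by
  simp only [rtPsi, Prod.fst_add, Prod.snd_add]; push_cast; ring

lemma rt_pow (τ : ℝ) (h2 : τ ^ 2 = τ + 1) (n : ℕ) :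
    ∃ p : ℤ × ℤ, rtPhi τ p = τ ^ n ∧ rtPsi τ p = (1 - τ) ^ n := by
  induction n with
  | zero => exact ⟨(1, 0), by simp [rtPhi], by simp [rtPsi]⟩
  | succ n ih =>
    obtain ⟨⟨m, k⟩, h, h'⟩ := ih
    refine ⟨(k, m + k), ?_, ?_⟩
    · rw [pow_succ, ← h]; simp only [rtPhi]; push_cast; linear_combination (-(k : ℝ)) * h2
    · rw [pow_succ, ← h']; simp only [rtPsi]; push_cast; linear_combination (-(k : ℝ)) * h2

lemma rt_norm (τ : ℝ) (h2 : τ ^ 2 = τ + 1) (hirr : Irrational τ) (p q : ℤ × ℤ) (hpq : p ≠ q) :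
    1 ≤ |rtPhi τ p - rtPhi τ q| * |rtPsi τ p - rtPsi τ q| := by
  obtain ⟨m, k⟩ := p
  obtain ⟨m', k'⟩ := q
  set a : ℤ := m - m' with ha
  set b : ℤ := k - k' with hb
  have hab : ¬ (a = 0 ∧ b = 0) := by
    rintro ⟨h, h'⟩
    apply hpq
    ext <;> simp <;> omega
  have e1 : rtPhi τ (m, k) - rtPhi τ (m', k') = a + b * τ := by
    simp only [rtPhi, ha, hb]; push_cast; ring
  have e2 : rtPsi τ (m, k) - rtPsi τ (m', k') = a + b * (1 - τ) := by
    simp only [rtPsi, ha, hb]; push_cast; ring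
  rw [e1, e2, ← abs_mul]
  have e3 : ((a : ℝ) + b * τ) * (a + b * (1 - τ)) = ((a ^ 2 + a * b - b ^ 2 : ℤ) : ℝ) := by
    push_cast; linear_combination (-(b : ℝ) ^ 2) * h2
  have hne : ∀ σ : ℝ, Irrational σ → (a : ℝ) + b * σ ≠ 0 := by
    intro σ hσ h0
    by_cases hb0 : b = 0
    · apply hab
      refine ⟨?_, hb0⟩
      rw [hb0] at h0
      simpa using h0
    · have := (hσ.intCast_mul hb0).intCast_add a
      rw [h0] at this
      exact not_irrational_zero this
  have h1 : Irrational (1 - τ) := by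
    have := hirr.intCast_sub 1
    simpa using this
  have hn := mul_ne_zero (hne τ hirr) (hne _ h1)
  rw [e3] at hn ⊢
  have : (a ^ 2 + a * b - b ^ 2 : ℤ) ≠ 0 := by exact_mod_cast hn
  have := Int.one_le_abs this
  exact_mod_cast this

lemma rt_main (τ : ℝ) (t2 : τ ^ 2 = τ + 1) (t1 : 1 < τ) (Wa Wb : Set ℝ)
    (ha0 : ∀ w ∈ Wa, (1 - τ) ^ 2 * w ∈ Wa)
    (ha1 : ∀ w ∈ Wa, (1 - τ) ^ 2 * w + (1 - τ) ∈ Wa)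
    (ha2 : ∀ w ∈ Wb, (1 - τ) ^ 2 * w + 1 ∈ Wa)
    (hb0 : ∀ w ∈ Wa, (1 - τ) ^ 2 * w + 2 * (1 - τ) ∈ Wb)
    (hb1 : ∀ w ∈ Wb, (1 - τ) ^ 2 * w ∈ Wb) (n : ℕ) :
    (∃ S : Finset (ℤ × ℤ), τ ^ (2 * n) ≤ S.card ∧ ∀ p ∈ S, 0 ≤ rtPhi τ p ∧
      rtPhi τ p < τ ^ (2 * n + 1) ∧ ∀ w ∈ Wa, rtPsi τ p + (1 - τ) ^ (2 * n) * w ∈ Wa ∪ Wb) ∧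
    (∃ S : Finset (ℤ × ℤ), τ ^ (2 * n) ≤ τ * S.card ∧ ∀ p ∈ S, 0 ≤ rtPhi τ p ∧
      rtPhi τ p < τ ^ (2 * n) ∧ ∀ w ∈ Wb, rtPsi τ p + (1 - τ) ^ (2 * n) * w ∈ Wa ∪ Wb) := by
  induction n with
  | zero =>
    refine ⟨⟨{0}, by simp, ?_⟩, ⟨{0}, by simp [t1.le], ?_⟩⟩
    · intro p hp
      rw [Finset.mem_singleton] at hp
      subst hp
      refine ⟨by simp [rtPhi], by simp [rtPhi]; linarith, ?_⟩
      intro w hw; left; simpa [rtPsi] using hw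
    · intro p hp
      rw [Finset.mem_singleton] at hp
      subst hp
      refine ⟨by simp [rtPhi], by simp [rtPhi], ?_⟩
      intro w hw; right; simpa [rtPsi] using hw
  | succ n ih =>
    obtain ⟨⟨A, hAc, hA⟩, ⟨B, hBc, hB⟩⟩ := ih
    obtain ⟨u, hu, hu'⟩ := rt_pow τ t2 (2 * n)
    obtain ⟨v, hv, hv'⟩ := rt_pow τ t2 (2 * n + 1)
    have hT : 0 < τ ^ (2 * n) := by positivity
    set T := τ ^ (2 * n) with hTd
    set R := (1 - τ) ^ (2 * n) with hRd
    have eT1 : τ ^ (2 * n + 1) = T * τ := by rw [pow_succ]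
    have eT2 : τ ^ (2 * (n + 1)) = T * (τ + 1) := by rw [← t2, hTd]; ring
    have eT3 : τ ^ (2 * (n + 1) + 1) = T * (2 * τ + 1) := by
      rw [pow_succ, eT2]; linear_combination T * t2
    have eR1 : (1 - τ) ^ (2 * n + 1) = R * (1 - τ) := by rw [pow_succ]
    have eR2 : (1 - τ) ^ (2 * (n + 1)) = R * (1 - τ) ^ 2 := by rw [hRd]; ring
    rw [eT1] at hv hA
    rw [eR1] at hv'
    rw [eT3, eT2, eR2]
    have hTτ : 0 < T * τ := by positivity
    constructor
    · have d1 : Disjoint A (A.map (addLeftEmbedding v)) := by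
        rw [Finset.disjoint_left]
        intro p hp hq
        simp only [Finset.mem_map, addLeftEmbedding_apply] at hq
        obtain ⟨q, hq, rfl⟩ := hq
        have h1 := hA _ hp
        have h2 := hA _ hq
        rw [rtPhi_add] at h1
        linarith [h1.2.1, h2.1]
      have d2 : Disjoint (A ∪ A.map (addLeftEmbedding v)) (B.map (addLeftEmbedding (v + v))) := by
        rw [Finset.disjoint_left]
        intro p hp hq
        simp only [Finset.mem_map, addLeftEmbedding_apply, Finset.mem_union] at hq hp
        obtain ⟨q, hq, rfl⟩ := hq
        have h2 := hB _ hq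
        rcases hp with hp | ⟨r, hr, hp⟩
        · have h1 := hA _ hp
          rw [rtPhi_add, rtPhi_add] at h1
          linarith [h1.2.1, h2.1]
        · have h1 := hA _ hr
          have := congrArg (rtPhi τ) hp
          simp only [rtPhi_add] at this
          linarith [h1.2.1, h2.1]
      refine ⟨(A ∪ A.map (addLeftEmbedding v)) ∪ B.map (addLeftEmbedding (v + v)), ?_, ?_⟩
      · rw [Finset.card_union_of_disjoint d2, Finset.card_union_of_disjoint d1,
          Finset.card_map, Finset.card_map]
        push_cast
        have h3 : T * (τ - 1) ≤ B.card := by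
          have : (τ - 1) * T ≤ (τ - 1) * (τ * B.card) :=
            mul_le_mul_of_nonneg_left hBc (by linarith)
          have e : (τ - 1) * (τ * (B.card : ℝ)) = B.card := by
            linear_combination (B.card : ℝ) * t2
          linarith
        linarith
      · intro p hp
        simp only [Finset.mem_map, addLeftEmbedding_apply, Finset.mem_union] at hp
        rcases hp with (hp | ⟨q, hq, rfl⟩) | ⟨q, hq, rfl⟩
        · obtain ⟨h1, h2, h3⟩ := hA _ hp
          refine ⟨h1, by linarith, ?_⟩
          intro w hw
          have := h3 _ (ha0 w hw)
          rwa [← mul_assoc] at this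
        · obtain ⟨h1, h2, h3⟩ := hA _ hq
          rw [rtPhi_add, rtPsi_add, hv, hv']
          refine ⟨by linarith, by linarith, ?_⟩
          intro w hw
          have := h3 _ (ha1 w hw)
          convert this using 1
          ring
        · obtain ⟨h1, h2, h3⟩ := hB _ hq
          rw [rtPhi_add, rtPsi_add, rtPhi_add, rtPsi_add, hv, hv']
          refine ⟨by linarith, by linarith, ?_⟩
          intro w hw
          have := h3 _ (hb0 w hw)
          convert this using 1
          ring
    · have d1 : Disjoint B (A.map (addLeftEmbedding u)) := by
        rw [Finset.disjoint_left]
        intro p hp hq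
        simp only [Finset.mem_map, addLeftEmbedding_apply] at hq
        obtain ⟨q, hq, rfl⟩ := hq
        have h1 := hB _ hp
        have h2 := hA _ hq
        rw [rtPhi_add] at h1
        linarith [h1.2.1, h2.1]
      refine ⟨B ∪ A.map (addLeftEmbedding u), ?_, ?_⟩
      · rw [Finset.card_union_of_disjoint d1, Finset.card_map]
        push_cast
        have : τ * T ≤ τ * A.card := mul_le_mul_of_nonneg_left hAc (by linarith)
        linarith
      · intro p hp
        simp only [Finset.mem_map, addLeftEmbedding_apply, Finset.mem_union] at hp
        rcases hp with hp | ⟨q, hq, rfl⟩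
        · obtain ⟨h1, h2, h3⟩ := hB _ hp
          refine ⟨h1, by linarith, ?_⟩
          intro w hw
          have := h3 _ (hb1 w hw)
          rwa [← mul_assoc] at this
        · obtain ⟨h1, h2, h3⟩ := hA _ hq
          rw [rtPhi_add, rtPsi_add, hu, hu']
          refine ⟨by linarith, by linarith, ?_⟩
          intro w hw
          have := h3 _ (ha2 w hw)
          convert this using 1
          ring

lemma rt_thick (τ : ℝ) (t2 : τ ^ 2 = τ + 1) (t1 : 1 < τ) (hirr : Irrational τ) (K : Set ℝ)
    (n : ℕ) (c : ℝ) (S : Finset (ℤ × ℤ)) (hc : τ ^ (2 * n) ≤ S.card)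
    (hS : ∀ p ∈ S, 0 ≤ rtPhi τ p ∧ rtPhi τ p < τ ^ (2 * n + 1) ∧ rtPsi τ p + c ∈ K) :
    ENNReal.ofReal τ⁻¹ ≤ volume (Metric.cthickening ((τ ^ (2 * n + 1))⁻¹ / 2) K) := by
  have hL : 0 < τ ^ (2 * n + 1) := by positivity
  set L := τ ^ (2 * n + 1) with hLd
  have hsub : (⋃ p ∈ S, Metric.ball (rtPsi τ p + c) (L⁻¹ / 2)) ⊆
      Metric.cthickening (L⁻¹ / 2) K := by
    intro x hx
    simp only [Set.mem_iUnion] at hx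
    obtain ⟨p, hp, hx⟩ := hx
    exact Metric.mem_cthickening_of_dist_le x _ _ K (hS p hp).2.2 (Metric.mem_ball.1 hx).le
  have hdisj : (S : Set (ℤ × ℤ)).PairwiseDisjoint
      (fun p => Metric.ball (rtPsi τ p + c) (L⁻¹ / 2)) := by
    intro p hp q hq hpq
    apply Metric.ball_disjoint_ball
    have h := rt_norm τ t2 hirr p q hpq
    obtain ⟨p1, p2, -⟩ := hS p hp
    obtain ⟨q1, q2, -⟩ := hS q hq
    have hle : |rtPhi τ p - rtPhi τ q| ≤ L := by rw [abs_le]; constructor <;> linarith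
    have h3 : 1 ≤ L * |rtPsi τ p - rtPsi τ q| :=
      h.trans (mul_le_mul_of_nonneg_right hle (abs_nonneg _))
    rw [Real.dist_eq, add_sub_add_right_eq_sub, add_halves, inv_le_iff_one_le_mul₀' hL]
    exact h3
  refine le_trans ?_ (measure_mono hsub)
  rw [measure_biUnion_finset hdisj (fun _ _ => Metric.isOpen_ball.measurableSet)]
  simp only [Real.volume_ball, Finset.sum_const, nsmul_eq_mul]
  rw [← ENNReal.ofReal_natCast, ← ENNReal.ofReal_mul (by positivity)]
  apply ENNReal.ofReal_le_ofReal
  have e : 2 * (L⁻¹ / 2) = L⁻¹ := by ring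
  rw [e]
  calc τ⁻¹ = τ ^ (2 * n) * L⁻¹ := by
        rw [hLd, pow_succ]; field_simp
    _ ≤ _ := mul_le_mul_of_nonneg_right hc (by positivity)

open scoped Pointwise in
lemma rt_affine (r s : ℝ) (hr : r ≠ 0) (A B : Set ℝ) (h : ∀ w ∈ A, r * w + s ∈ B)
    (hA : 0 < volume A) : 0 < volume B := by
  have h1 : (fun x => x + s) '' ((fun x => r * x) '' A) ⊆ B := by
    rintro _ ⟨_, ⟨w, hw, rfl⟩, rfl⟩
    exact h w hw
  refine lt_of_lt_of_le ?_ (measure_mono h1)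
  rw [Set.image_add_right, measure_preimage_add_right]
  have : (fun x => r * x) '' A = r • A := rfl
  rw [this, Measure.addHaar_smul]
  refine ENNReal.mul_pos ?_ hA.ne'
  simp [hr]

/-- The windows of the substitution ρ̃ = (a ↦ aab, b ↦ ba) have positive
Lebesgue measure. -/
theorem rho_tilde_windows_pos_measure (τ : ℝ) (hτ : τ = (1 + Real.sqrt 5) / 2)
    (Wa Wb : Set ℝ) (hWa : Wa.Nonempty) (hWb : Wb.Nonempty)
    (hca : IsCompact Wa) (hcb : IsCompact Wb)
    (h1 : Wa = (fun x : ℝ => (τ ^ 2)⁻¹ * x) '' Wa ∪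
               (fun x : ℝ => (τ ^ 2)⁻¹ * (x - τ)) '' Wa ∪
               (fun x : ℝ => (τ ^ 2)⁻¹ * (x + τ ^ 2)) '' Wb)
    (h2 : Wb = (fun x : ℝ => (τ ^ 2)⁻¹ * (x - 2 * τ)) '' Wa ∪
               (fun x : ℝ => (τ ^ 2)⁻¹ * x) '' Wb) :
    0 < volume Wa ∧ 0 < volume Wb := by
  have hg : τ = Real.goldenRatio := hτ
  have t2 : τ ^ 2 = τ + 1 := by rw [hg]; exact Real.goldenRatio_sq
  have t1 : 1 < τ := by rw [hg]; exact Real.one_lt_goldenRatio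
  have hirr : Irrational τ := by rw [hg]; exact Real.goldenRatio_irrational
  have hinv : (τ ^ 2)⁻¹ = (1 - τ) ^ 2 := by
    apply inv_eq_of_mul_eq_one_left
    linear_combination (τ ^ 2 - τ + 1) * t2
  have e1 : (1 - τ) ^ 2 * τ = τ - 1 := by linear_combination (τ - 1) * t2
  have e2 : (1 - τ) ^ 2 * τ ^ 2 = 1 := by linear_combination (τ ^ 2 - τ + 1) * t2
  rw [hinv] at h1 h2
  have ha0 : ∀ w ∈ Wa, (1 - τ) ^ 2 * w ∈ Wa := by
    intro w hw; rw [h1]; exact Or.inl (Or.inl ⟨w, hw, rfl⟩)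
  have ha1 : ∀ w ∈ Wa, (1 - τ) ^ 2 * w + (1 - τ) ∈ Wa := by
    intro w hw; rw [h1]
    exact Or.inl (Or.inr ⟨w, hw, by simp only; linear_combination -e1⟩)
  have ha2 : ∀ w ∈ Wb, (1 - τ) ^ 2 * w + 1 ∈ Wa := by
    intro w hw; rw [h1]
    exact Or.inr ⟨w, hw, by simp only; linear_combination e2⟩
  have hb0 : ∀ w ∈ Wa, (1 - τ) ^ 2 * w + 2 * (1 - τ) ∈ Wb := by
    intro w hw; rw [h2]
    exact Or.inl ⟨w, hw, by simp only; linear_combination -2 * e1⟩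
  have hb1 : ∀ w ∈ Wb, (1 - τ) ^ 2 * w ∈ Wb := by
    intro w hw; rw [h2]; exact Or.inr ⟨w, hw, rfl⟩
  obtain ⟨w, hw⟩ := hWa
  have hr : (1 - τ) ^ 2 ≠ 0 := pow_ne_zero _ (by linarith)
  have hK : IsCompact (Wa ∪ Wb) := hca.union hcb
  have key : ∀ n : ℕ, ENNReal.ofReal τ⁻¹ ≤
      volume (Metric.cthickening ((τ ^ (2 * n + 1))⁻¹ / 2) (Wa ∪ Wb)) := by
    intro n
    obtain ⟨⟨S, hc, hS⟩, -⟩ := rt_main τ t2 t1 Wa Wb ha0 ha1 ha2 hb0 hb1 n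
    exact rt_thick τ t2 t1 hirr _ n ((1 - τ) ^ (2 * n) * w) S hc
      (fun p hp => ⟨(hS p hp).1, (hS p hp).2.1, (hS p hp).2.2 w hw⟩)
  have hlim : Filter.Tendsto (fun n : ℕ => (τ ^ (2 * n + 1))⁻¹ / 2) Filter.atTop (nhds 0) := by
    have a1 : Filter.Tendsto (fun n : ℕ => 2 * n + 1) Filter.atTop Filter.atTop :=
      Filter.tendsto_atTop_mono (fun n => by simp only [id]; omega) Filter.tendsto_id
    have a2 := (tendsto_inv_atTop_zero.comp
      ((tendsto_pow_atTop_atTop_of_one_lt t1).comp a1)).div_const 2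
    simpa using a2
  have hvol : ENNReal.ofReal τ⁻¹ ≤ volume (Wa ∪ Wb) :=
    ge_of_tendsto' ((tendsto_measure_cthickening_of_isCompact hK).comp hlim) key
  have hpos : 0 < volume (Wa ∪ Wb) :=
    lt_of_lt_of_le (ENNReal.ofReal_pos.2 (by positivity)) hvol
  have hab : 0 < volume Wa → 0 < volume Wb := rt_affine _ _ hr _ _ hb0
  have hba : 0 < volume Wb → 0 < volume Wa := rt_affine _ _ hr _ _ ha2
  by_cases h : 0 < volume Wa
  · exact ⟨h, hab h⟩
  · by_cases h' : 0 < volume Wb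
    · exact ⟨hba h', h'⟩
    · exfalso
      rw [not_lt, nonpos_iff_eq_zero] at h h'
      exact hpos.ne' (measure_union_null h h')
end

section
/- Let τ = (1+√5)/2 and let W_a, W_b be nonempty compact subsets of ℝ satisfying W_a = τ⁻²·W_a ∪ τ⁻²·(W_a − τ) ∪ τ⁻²·(W_b + τ²) and W_b = τ⁻²·(W_a − 2τ) ∪ τ⁻²·W_b. Then the topological boundaries ∂W_a and ∂W_b have Lebesgue measure zero. -/
open MeasureTheory

namespace RhoTilde

/-- Translate of `A` (flag `true`) or `B` (flag `false`). -/
def pc (A B : Set ℝ) (p : Bool × ℝ) : Set ℝ := {x | x - p.2 ∈ (if p.1 then A else B)}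

/-- Inflation of a piece. -/
def infl (τ : ℝ) (p : Bool × ℝ) : List (Bool × ℝ) :=
  if p.1 then [(true, τ ^ 2 * p.2), (true, τ ^ 2 * p.2 - τ), (false, τ ^ 2 * p.2 + τ ^ 2)]
  else [(true, τ ^ 2 * p.2 - 2 * τ), (false, τ ^ 2 * p.2)]

/-- Level-`n` pieces. -/
def lev (τ : ℝ) : ℕ → List (Bool × ℝ)
  | 0 => [(true, 0)]
  | n + 1 => (lev τ n).flatMap (infl τ)

lemma vol_tr (A : Set ℝ) (t : ℝ) : volume.real {x | x - t ∈ A} = volume.real A := by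
  have : {x | x - t ∈ A} = (fun x => x + -t) ⁻¹' A := by
    simp only [← sub_eq_add_neg]; rfl
  rw [this, measureReal_def, measure_preimage_add_right, measureReal_def]

lemma fin_tr {A : Set ℝ} (hA : volume A ≠ ⊤) (t : ℝ) : volume {x | x - t ∈ A} ≠ ⊤ := by
  have : {x | x - t ∈ A} = (fun x => x + -t) ⁻¹' A := by
    simp only [← sub_eq_add_neg]; rfl
  rwa [this, measure_preimage_add_right]

lemma vol_sc (A : Set ℝ) {c : ℝ} (hc : 0 < c) :
    volume.real {x | c⁻¹ * x ∈ A} = c * volume.real A := by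
  have : {x | c⁻¹ * x ∈ A} = (fun x => c⁻¹ * x) ⁻¹' A := rfl
  rw [this, measureReal_def, Real.volume_preimage_mul_left (by positivity), ENNReal.toReal_mul,
    inv_inv, abs_of_pos hc, ENNReal.toReal_ofReal hc.le, measureReal_def]

lemma fin_sc {A : Set ℝ} (hA : volume A ≠ ⊤) {c : ℝ} (hc : 0 < c) :
    volume {x | c⁻¹ * x ∈ A} ≠ ⊤ := by
  have : {x | c⁻¹ * x ∈ A} = (fun x => c⁻¹ * x) ⁻¹' A := rfl
  rw [this, Real.volume_preimage_mul_left (by positivity)]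
  exact ENNReal.mul_ne_top ENNReal.ofReal_ne_top hA

lemma fin_inter {A : Set ℝ} (hA : volume A ≠ ⊤) (J : Set ℝ) : volume (A ∩ J) ≠ ⊤ :=
  ne_top_of_le_ne_top hA (measure_mono Set.inter_subset_left)

/-- Hypotheses on a sub-invariant pair. -/
structure Sub (τ : ℝ) (A B : Set ℝ) : Prop where
  t1 : 1 < τ
  t2 : τ ^ 2 = τ + 1
  fa : volume A ≠ ⊤
  fb : volume B ≠ ⊤
  sa : ∀ x, (τ ^ 2)⁻¹ * x ∈ A → x ∈ A ∨ x + τ ∈ A ∨ x - τ ^ 2 ∈ B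
  sb : ∀ x, (τ ^ 2)⁻¹ * x ∈ B → x + 2 * τ ∈ A ∨ x ∈ B

variable {τ : ℝ} {A B : Set ℝ}

lemma fin_pc (h : Sub τ A B) (p : Bool × ℝ) : volume (pc A B p) ≠ ⊤ := by
  obtain ⟨b, t⟩ := p
  cases b
  · exact fin_tr h.fb t
  · exact fin_tr h.fa t

lemma cov (h : Sub τ A B) (p : Bool × ℝ) :
    ∀ x, (τ ^ 2)⁻¹ * x ∈ pc A B p → ∃ q ∈ infl τ p, x ∈ pc A B q := by
  intro x hx
  have hpos : τ ^ 2 ≠ 0 := by have := h.t1; positivity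
  have e : (τ ^ 2)⁻¹ * x - p.2 = (τ ^ 2)⁻¹ * (x - τ ^ 2 * p.2) := by
    rw [mul_sub, inv_mul_cancel_left₀ hpos]
  obtain ⟨b, t⟩ := p
  cases b
  · have hx' : (τ ^ 2)⁻¹ * (x - τ ^ 2 * t) ∈ B := by
      have : (τ ^ 2)⁻¹ * x - t ∈ B := by simpa [pc] using hx
      rwa [e] at this
    rcases h.sb _ hx' with h | h
    · refine ⟨(true, τ ^ 2 * t - 2 * τ), by simp [infl], ?_⟩
      simp only [pc, if_true, Set.mem_ofPred_eq]
      convert h using 1; ring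
    · exact ⟨(false, τ ^ 2 * t), by simp [infl], by simpa [pc] using h⟩
  · have hx' : (τ ^ 2)⁻¹ * (x - τ ^ 2 * t) ∈ A := by
      have : (τ ^ 2)⁻¹ * x - t ∈ A := by simpa [pc] using hx
      rwa [e] at this
    rcases h.sa _ hx' with h | h | h
    · exact ⟨(true, τ ^ 2 * t), by simp [infl], by simpa [pc] using h⟩
    · refine ⟨(true, τ ^ 2 * t - τ), by simp [infl], ?_⟩
      simp only [pc, if_true, Set.mem_ofPred_eq]
      convert h using 1; ring
    · refine ⟨(false, τ ^ 2 * t + τ ^ 2), by simp [infl], ?_⟩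
      simp only [pc, Set.mem_ofPred_eq]
      simpa [sub_sub] using h

lemma vol_pc (p : Bool × ℝ) :
    volume.real (pc A B p) = if p.1 then volume.real A else volume.real B := by
  obtain ⟨b, t⟩ := p
  cases b
  · exact vol_tr B t
  · exact vol_tr A t

lemma perron (h : Sub τ A B) :
    τ ^ 2 * volume.real A = 2 * volume.real A + volume.real B ∧
    τ ^ 2 * volume.real B = volume.real A + volume.real B := by
  have ht := h.t1
  have hpos : 0 < τ ^ 2 := by positivity
  have u1 : τ ^ 2 * volume.real A ≤ 2 * volume.real A + volume.real B := by
    rw [← vol_sc A hpos]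
    have : {x | (τ ^ 2)⁻¹ * x ∈ A} ⊆
        (A ∪ {x | x - (-τ) ∈ A}) ∪ {x | x - τ ^ 2 ∈ B} := by
      intro x hx
      rcases h.sa x hx with h | h | h
      · exact Or.inl (Or.inl h)
      · exact Or.inl (Or.inr (by simpa using h))
      · exact Or.inr h
    have fin1 : volume (A ∪ {x | x - (-τ) ∈ A}) ≠ ⊤ := measure_union_ne_top h.fa (fin_tr h.fa _)
    have i1 := measureReal_mono (μ := volume) this
      (measure_union_ne_top fin1 (fin_tr h.fb _))
    have i2 := measureReal_union_le (μ := volume) (A ∪ {x | x - (-τ) ∈ A}) {x | x - τ ^ 2 ∈ B}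
    have i3 := measureReal_union_le (μ := volume) A {x | x - (-τ) ∈ A}
    rw [vol_tr] at i2 i3
    linarith
  have u2 : τ ^ 2 * volume.real B ≤ volume.real A + volume.real B := by
    rw [← vol_sc B hpos]
    have : {x | (τ ^ 2)⁻¹ * x ∈ B} ⊆ {x | x - (-(2*τ)) ∈ A} ∪ B := by
      intro x hx
      rcases h.sb x hx with h | h
      · exact Or.inl (by simpa using h)
      · exact Or.inr h
    have i1 := measureReal_mono (μ := volume) this
      (measure_union_ne_top (fin_tr h.fa _) h.fb)
    have i2 := measureReal_union_le (μ := volume) {x | x - (-(2*τ)) ∈ A} B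
    rw [vol_tr] at i2
    linarith
  have t2 := h.t2
  rw [t2] at u1 u2 ⊢
  have u3 := mul_le_mul_of_nonneg_left u1 (by linarith : (0:ℝ) ≤ τ)
  have e : τ * ((τ + 1) * volume.real A) = (2 * τ + 1) * volume.real A := by
    have : τ * (τ + 1) = 2 * τ + 1 := by nlinarith
    rw [← mul_assoc, this]
  constructor
  · have : τ * (2 * volume.real A + volume.real B) ≤ τ * ((τ + 1) * volume.real A) := by
      rw [e]; nlinarith
    exact le_antisymm u1 (le_of_mul_le_mul_left this (by linarith))
  · nlinarith

lemma cov_le (h : Sub τ A B) (p : Bool × ℝ) (J : Set ℝ) :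
    volume.real ({x | (τ ^ 2)⁻¹ * x ∈ pc A B p} ∩ J) ≤
      ((infl τ p).map (fun q => volume.real (pc A B q ∩ J))).sum := by
  have gen : ∀ (l : List (Bool × ℝ)) (X : Set ℝ), (∀ x ∈ X, ∃ q ∈ l, x ∈ pc A B q) →
      volume.real (X ∩ J) ≤ (l.map (fun q => volume.real (pc A B q ∩ J))).sum := by
    intro l
    induction l with
    | nil =>
      intro X hX
      have : X = ∅ := Set.eq_empty_of_forall_notMem (fun x hx => by simpa using hX x hx)
      simp [this]
    | cons q l ih =>
      intro X hX
      have h1 := ih (X \ pc A B q) (by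
        intro x hx
        obtain ⟨q', hq', hx'⟩ := hX x hx.1
        rcases List.mem_cons.1 hq' with rfl | h'
        · exact absurd hx' hx.2
        · exact ⟨q', h', hx'⟩)
      by_cases hf : volume ((X \ pc A B q) ∩ J) = ⊤
      · -- measure infinite: real measure of `X ∩ J` is zero
        have : volume (X ∩ J) = ⊤ := by
          apply top_le_iff.1
          rw [← hf]
          exact measure_mono (Set.inter_subset_inter_left _ Set.sdiff_subset)
        rw [measureReal_def, this]
        simp only [ENNReal.toReal_top]
        apply List.sum_nonneg
        simp only [List.mem_map]
        rintro _ ⟨q, _, rfl⟩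
        exact measureReal_nonneg
      · have hs : X ∩ J ⊆ (pc A B q ∩ J) ∪ ((X \ pc A B q) ∩ J) := by
          intro x hx
          by_cases hq : x ∈ pc A B q
          · exact Or.inl ⟨hq, hx.2⟩
          · exact Or.inr ⟨⟨hx.1, hq⟩, hx.2⟩
        have i1 := measureReal_mono (μ := volume) hs
          (measure_union_ne_top (fin_inter (fin_pc h q) J) hf)
        have i2 := measureReal_union_le (μ := volume) (pc A B q ∩ J) ((X \ pc A B q) ∩ J)
        simp only [List.map_cons, List.sum_cons]
        linarith
  exact gen _ _ (cov h p)

lemma cov_eq (h : Sub τ A B) (p : Bool × ℝ) {J : Set ℝ} (hJ : MeasurableSet J) :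
    volume.real ({x | (τ ^ 2)⁻¹ * x ∈ pc A B p} ∩ J) =
      ((infl τ p).map (fun q => volume.real (pc A B q ∩ J))).sum := by
  have ht := h.t1
  have hpos : 0 < τ ^ 2 := by positivity
  have l1 := cov_le h p J
  have l2 := cov_le h p Jᶜ
  have s0 := measureReal_inter_add_sdiff (μ := volume) (s := {x | (τ ^ 2)⁻¹ * x ∈ pc A B p}) hJ
    (fin_sc (fin_pc h p) hpos)
  have sq : ∀ q, volume.real (pc A B q ∩ J) + volume.real (pc A B q ∩ Jᶜ) =
      volume.real (pc A B q) := fun q => by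
    rw [← Set.sdiff_eq]
    exact measureReal_inter_add_sdiff (μ := volume) hJ (fin_pc h q)
  rw [Set.sdiff_eq, vol_sc _ hpos, vol_pc] at s0
  have P := perron h
  apply le_antisymm l1
  obtain ⟨b, t⟩ := p
  cases b
  · have a1 := sq (true, τ ^ 2 * t - 2 * τ)
    have a2 := sq (false, τ ^ 2 * t)
    rw [vol_pc] at a1 a2
    simp [infl] at l1 l2 s0 a1 a2 ⊢
    linarith
  · have a1 := sq (true, τ ^ 2 * t)
    have a2 := sq (true, τ ^ 2 * t - τ)
    have a3 := sq (false, τ ^ 2 * t + τ ^ 2)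
    rw [vol_pc] at a1 a2 a3
    simp [infl] at l1 l2 s0 a1 a2 a3 ⊢
    linarith

lemma lev_cov (h : Sub τ A B) (n : ℕ) :
    ∀ x, ((τ ^ 2)⁻¹) ^ n * x ∈ A → ∃ q ∈ lev τ n, x ∈ pc A B q := by
  induction n with
  | zero => intro x hx; exact ⟨(true, 0), by simp [lev], by simpa [pc] using hx⟩
  | succ n ih =>
    intro x hx
    rw [pow_succ, mul_assoc] at hx
    obtain ⟨p, hp, hxp⟩ := ih _ hx
    obtain ⟨q, hq, hxq⟩ := cov h p x hxp
    exact ⟨q, by simp only [lev, List.mem_flatMap]; exact ⟨p, hp, hq⟩, hxq⟩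

lemma lev_eq (h : Sub τ A B) (n : ℕ) : ∀ {J : Set ℝ}, MeasurableSet J →
    volume.real ({x | ((τ ^ 2)⁻¹) ^ n * x ∈ A} ∩ J) =
      ((lev τ n).map (fun q => volume.real (pc A B q ∩ J))).sum := by
  have ht := h.t1
  have hpos : 0 < τ ^ 2 := by positivity
  induction n with
  | zero => intro J hJ; simp [lev, pc]
  | succ n ih =>
    intro J hJ
    have hJ' : MeasurableSet {y | τ ^ 2 * y ∈ J} := (measurable_const_mul (τ ^ 2)) hJ
    have key : ∀ X : Set ℝ, volume.real ({x | (τ ^ 2)⁻¹ * x ∈ X} ∩ J) =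
        τ ^ 2 * volume.real (X ∩ {y | τ ^ 2 * y ∈ J}) := by
      intro X
      rw [← vol_sc _ hpos]
      congr 1
      ext x
      simp [mul_inv_cancel_left₀ hpos.ne']
    have e1 : {x | ((τ ^ 2)⁻¹) ^ (n+1) * x ∈ A} =
        {x | (τ ^ 2)⁻¹ * x ∈ {x | ((τ ^ 2)⁻¹) ^ n * x ∈ A}} := by
      ext x; simp only [pow_succ, mul_assoc, Set.mem_ofPred_eq]
    rw [e1, key, ih hJ', ← List.sum_map_mul_left]
    simp only [lev]
    simp_rw [← key]
    generalize lev τ n = l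
    induction l with
    | nil => simp
    | cons p l il =>
      simp only [List.map_cons, List.sum_cons, List.flatMap_cons, List.map_append, List.sum_append]
      rw [il, cov_eq h p hJ]

/-- Uniform holes in a compact set with empty interior. -/
lemma hole_one {K : Set ℝ} (hK : IsCompact K) (hi : interior K = ∅) (r : ℝ) (hr : 0 < r) :
    ∃ s > 0, ∀ x, ∃ y, Metric.ball y s ⊆ Metric.ball x r ∧ Disjoint (Metric.ball y s) K := by
  have P : ∃ s > 0, ∀ x ∈ K, ∃ y, Metric.ball y s ⊆ Metric.ball x (r/2) ∧
      Disjoint (Metric.ball y s) K := by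
    refine hK.induction_on (p := fun S => ∃ s > 0, ∀ x ∈ S, ∃ y,
      Metric.ball y s ⊆ Metric.ball x (r/2) ∧ Disjoint (Metric.ball y s) K) ?_ ?_ ?_ ?_
    · exact ⟨1, one_pos, by simp⟩
    · rintro s t hst ⟨c, hc, h⟩
      exact ⟨c, hc, fun x hx => h x (hst hx)⟩
    · rintro s t ⟨c, hc, h⟩ ⟨d, hd, h'⟩
      refine ⟨min c d, lt_min hc hd, ?_⟩
      rintro x (hx | hx)
      · obtain ⟨y, h1, h2⟩ := h x hx
        have := Metric.ball_subset_ball (x := y) (min_le_left c d)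
        exact ⟨y, this.trans h1, h2.mono_left this⟩
      · obtain ⟨y, h1, h2⟩ := h' x hx
        have := Metric.ball_subset_ball (x := y) (min_le_right c d)
        exact ⟨y, this.trans h1, h2.mono_left this⟩
    · intro z hz
      have hd : Dense Kᶜ := interior_eq_empty_iff_dense_compl.1 hi
      obtain ⟨y, hy, hyz⟩ := hd.exists_mem_open (Metric.isOpen_ball (x := z) (ε := r/4))
        ⟨z, Metric.mem_ball_self (by linarith)⟩
      have ho : IsOpen (Kᶜ ∩ Metric.ball z (r/4)) := hK.isClosed.isOpen_compl.inter Metric.isOpen_ball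
      obtain ⟨s, hs, hsub⟩ := Metric.isOpen_iff.1 ho y ⟨hy, hyz⟩
      refine ⟨Metric.ball z (r/4), mem_nhdsWithin_of_mem_nhds (Metric.ball_mem_nhds _ (by linarith)),
        s, hs, ?_⟩
      intro x hx
      refine ⟨y, ?_, ?_⟩
      · intro w hw
        have h1 := (hsub hw).2
        rw [Metric.mem_ball] at h1 hx ⊢
        have := dist_triangle_right w x z
        linarith
      · rw [Set.disjoint_left]
        intro w hw
        exact (hsub hw).1
  obtain ⟨s, hs, h⟩ := P
  refine ⟨min s (r/2), lt_min hs (by linarith), ?_⟩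
  intro x
  by_cases hd : Disjoint (Metric.ball x (r/2)) K
  · exact ⟨x, Metric.ball_subset_ball ((min_le_right _ _).trans (by linarith)),
      hd.mono_left (Metric.ball_subset_ball (min_le_right _ _))⟩
  · obtain ⟨k, hk, hkK⟩ := Set.not_disjoint_iff.1 hd
    obtain ⟨y, h1, h2⟩ := h k hkK
    have hsub := Metric.ball_subset_ball (x := y) (min_le_left s (r/2))
    refine ⟨y, ?_, h2.mono_left hsub⟩
    intro w hw
    have h3 := h1 (hsub hw)
    rw [Metric.mem_ball] at h3 hk ⊢
    have := dist_triangle w k x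
    linarith

lemma hole_tr {K : Set ℝ} {r s : ℝ}
    (h : ∀ x, ∃ y, Metric.ball y s ⊆ Metric.ball x r ∧ Disjoint (Metric.ball y s) K) (t : ℝ) :
    ∀ x, ∃ y, Metric.ball y s ⊆ Metric.ball x r ∧ Disjoint (Metric.ball y s) {x | x - t ∈ K} := by
  intro x
  obtain ⟨y, h1, h2⟩ := h (x - t)
  have aux : ∀ w, w ∈ Metric.ball (y + t) s → w - t ∈ Metric.ball y s := by
    intro w hw
    rw [Metric.mem_ball, Real.dist_eq] at hw ⊢
    convert hw using 2; ring
  refine ⟨y + t, ?_, ?_⟩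
  · intro w hw
    have := h1 (aux w hw)
    rw [Metric.mem_ball, Real.dist_eq] at this ⊢
    convert this using 2; ring
  · rw [Set.disjoint_left]
    intro w hw
    exact Set.disjoint_left.1 h2 (aux w hw)

lemma hole_many (hA : IsCompact A) (hB : IsCompact B) (iA : interior A = ∅) (iB : interior B = ∅)
    (N : ℕ) : ∀ r > 0, ∃ s > 0, ∀ l : List (Bool × ℝ), l.length ≤ N →
      ∀ x, ∃ y, Metric.ball y s ⊆ Metric.ball x r ∧ ∀ q ∈ l, Disjoint (Metric.ball y s) (pc A B q) := by
  induction N with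
  | zero =>
    intro r hr
    refine ⟨r, hr, fun l hl x => ⟨x, le_rfl, ?_⟩⟩
    have : l = [] := List.length_eq_zero_iff.1 (by omega)
    simp [this]
  | succ N ih =>
    intro r hr
    obtain ⟨sa, hsa, ha⟩ := hole_one hA iA r hr
    obtain ⟨sb, hsb, hb⟩ := hole_one hB iB r hr
    obtain ⟨s, hs, h⟩ := ih (min sa sb) (lt_min hsa hsb)
    have hsr : ∀ x : ℝ, ∃ y : ℝ, Metric.ball y s ⊆ Metric.ball x r := by
      intro x
      obtain ⟨z, hz, _⟩ := ha x
      obtain ⟨y, hy, _⟩ := h [] (by simp) z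
      exact ⟨y, hy.trans ((Metric.ball_subset_ball (min_le_left _ _)).trans hz)⟩
    refine ⟨s, hs, ?_⟩
    intro l hl x
    cases l with
    | nil =>
      obtain ⟨y, hy⟩ := hsr x
      exact ⟨y, hy, by simp⟩
    | cons q l =>
      have hq : ∃ z, Metric.ball z (min sa sb) ⊆ Metric.ball x r ∧
          Disjoint (Metric.ball z (min sa sb)) (pc A B q) := by
        obtain ⟨b, t⟩ := q
        cases b
        · obtain ⟨z, h1, h2⟩ := hole_tr hb t x
          have := Metric.ball_subset_ball (x := z) (min_le_right sa sb)
          exact ⟨z, this.trans h1, h2.mono_left this⟩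
        · obtain ⟨z, h1, h2⟩ := hole_tr ha t x
          have := Metric.ball_subset_ball (x := z) (min_le_left sa sb)
          exact ⟨z, this.trans h1, h2.mono_left this⟩
      obtain ⟨z, h1, h2⟩ := hq
      obtain ⟨y, h3, h4⟩ := h l (by simp at hl; omega) z
      refine ⟨y, h3.trans h1, ?_⟩
      intro q' hq'
      rcases List.mem_cons.1 hq' with rfl | hq'
      · exact h2.mono_left h3
      · exact h4 q' hq'

lemma count_le {l : List (Bool × ℝ)} {f : Bool × ℝ → ℝ} (hf : ∀ q, 0 ≤ f q)
    (g : Bool × ℝ → Prop) [DecidablePred g] {m : ℝ} (hm : ∀ q, g q → m ≤ f q) :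
    (l.filter (fun q => decide (g q))).length * m ≤ (l.map f).sum := by
  induction l with
  | nil => simp
  | cons q l ih =>
    by_cases hq : g q
    · simp only [List.filter_cons, hq, decide_true, if_true, List.length_cons, List.map_cons,
        List.sum_cons]
      have := hm q hq
      push_cast
      linarith
    · simp only [List.filter_cons, hq, decide_false, List.map_cons, List.sum_cons]
      have := hf q
      simpa using by linarith

lemma bdd_pc {D : ℝ} (hA : A ⊆ Metric.closedBall 0 D) (hB : B ⊆ Metric.closedBall 0 D)
    (q : Bool × ℝ) : pc A B q ⊆ Metric.closedBall q.2 D := by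
  intro x hx
  obtain ⟨b, t⟩ := q
  have : x - t ∈ Metric.closedBall 0 D := by
    cases b
    · exact hB (by simpa [pc] using hx)
    · exact hA (by simpa [pc] using hx)
  simpa [Real.dist_eq] using this

/-- Uniform porosity forces measure zero. -/
lemma null_of_empty (h : Sub τ A B) (hA : IsCompact A) (hB : IsCompact B)
    (iA : interior A = ∅) (iB : interior B = ∅) (pa : 0 < volume.real A) (pb : 0 < volume.real B) :
    False := by
  classical
  have ht := h.t1
  have hpos : 0 < τ ^ 2 := by positivity
  obtain ⟨D, hD⟩ := (hA.union hB).isBounded.subset_closedBall 0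
  have hDA := Set.subset_union_left.trans hD
  have hDB := Set.subset_union_right.trans hD
  set m := min (volume.real A) (volume.real B) with hm
  have mpos : 0 < m := lt_min pa pb
  obtain ⟨N, hN⟩ := exists_nat_gt (volume.real (Metric.closedBall (0:ℝ) (1 + 2 * D)) / m)
  obtain ⟨s, hs, hole⟩ := hole_many hA hB iA iB N 1 one_pos
  -- the number of pieces near a point is bounded
  have cnt : ∀ n (c : ℝ), ((lev τ n).filter
      (fun q => decide (¬ Disjoint (Metric.ball c 1) (pc A B q)))).length ≤ N := by
    intro n c
    set J := Metric.closedBall c (1 + 2 * D) with hJ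
    have e := lev_eq h n (J := J) Metric.isClosed_closedBall.measurableSet
    have c1 := count_le (l := lev τ n) (f := fun q => volume.real (pc A B q ∩ J))
      (fun q => measureReal_nonneg)
      (fun q => ¬ Disjoint (Metric.ball c 1) (pc A B q)) (m := m) (by
        intro q hq
        obtain ⟨z, hz, hzq⟩ := Set.not_disjoint_iff.1 hq
        have : pc A B q ⊆ J := by
          intro w hw
          have h1 := bdd_pc hDA hDB q hw
          have h2 := bdd_pc hDA hDB q hzq
          rw [hJ, Metric.mem_closedBall]
          rw [Metric.mem_closedBall] at h1 h2
          rw [Metric.mem_ball] at hz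
          have h3 := dist_triangle w z c
          have h4 := dist_triangle_right w z q.2
          linarith
        rw [Set.inter_eq_left.2 this, vol_pc]
        split_ifs
        · exact min_le_left _ _
        · exact min_le_right _ _)
    rw [← e] at c1
    have c2 : volume.real ({x | ((τ ^ 2)⁻¹) ^ n * x ∈ A} ∩ J) ≤ volume.real J :=
      measureReal_mono Set.inter_subset_right measure_closedBall_lt_top.ne
    have c3 : volume.real J = volume.real (Metric.closedBall (0:ℝ) (1 + 2 * D)) := by
      simp only [hJ, measureReal_def, Real.volume_closedBall]
    rw [div_lt_iff₀ mpos] at hN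
    have := lt_of_le_of_lt (c1.trans c2) (c3 ▸ hN)
    exact_mod_cast (lt_of_mul_lt_mul_right this mpos.le).le
  -- holes at every scale
  have por : ∀ n x, volume.real (A ∩ Metric.closedBall x (((τ ^ 2)⁻¹) ^ n)) ≤
      (1 - s) * (2 * ((τ ^ 2)⁻¹) ^ n) := by
    intro n x
    set ρ := ((τ ^ 2)⁻¹) ^ n with hρ
    have ρpos : 0 < ρ := by positivity
    obtain ⟨y, h1, h2⟩ := hole _ (cnt n (ρ⁻¹ * x)) (ρ⁻¹ * x)
    have hsc : ∀ (u v r : ℝ), v ∈ Metric.ball (ρ * u) (ρ * r) ↔ ρ⁻¹ * v ∈ Metric.ball u r := by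
      intro u v r
      have : v - ρ * u = ρ * (ρ⁻¹ * v - u) := by field_simp
      rw [Metric.mem_ball, Metric.mem_ball, Real.dist_eq, Real.dist_eq, this, abs_mul,
        abs_of_pos ρpos, mul_lt_mul_iff_right₀ ρpos]
    have d1 : Disjoint (Metric.ball (ρ * y) (ρ * s)) A := by
      rw [Set.disjoint_left]
      intro v hv hvA
      rw [hsc] at hv
      obtain ⟨q, hq, hvq⟩ := lev_cov h n (ρ⁻¹ * v) (by
        rw [← hρ, mul_inv_cancel_left₀ ρpos.ne']; exact hvA)
      have hnd : ¬ Disjoint (Metric.ball (ρ⁻¹ * x) 1) (pc A B q) :=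
        Set.not_disjoint_iff.2 ⟨_, h1 hv, hvq⟩
      exact Set.disjoint_left.1 (h2 q (List.mem_filter.2 ⟨hq, by simpa using hnd⟩)) hv hvq
    have d2 : Metric.ball (ρ * y) (ρ * s) ⊆ Metric.closedBall x ρ := by
      intro v hv
      rw [hsc] at hv
      have := (hsc (ρ⁻¹ * x) v 1).2 (h1 hv)
      rw [mul_inv_cancel_left₀ ρpos.ne', mul_one] at this
      exact Metric.ball_subset_closedBall this
    have hsub : A ∩ Metric.closedBall x ρ ⊆ Metric.closedBall x ρ \ Metric.ball (ρ * y) (ρ * s) := by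
      intro v hv
      exact ⟨hv.2, fun hb => Set.disjoint_left.1 d1 hb hv.1⟩
    have e1 := measureReal_mono (μ := volume) hsub
      (ne_top_of_le_ne_top measure_closedBall_lt_top.ne (measure_mono Set.sdiff_subset))
    have e2 : volume.real (Metric.closedBall x ρ \ Metric.ball (ρ * y) (ρ * s)) =
        volume.real (Metric.closedBall x ρ) - volume.real (Metric.ball (ρ * y) (ρ * s)) :=
      measureReal_sdiff d2 Metric.isOpen_ball.measurableSet measure_closedBall_lt_top.ne
    have e3 : volume.real (Metric.closedBall x ρ) = 2 * ρ := by
      rw [measureReal_def, Real.volume_closedBall, ENNReal.toReal_ofReal (by positivity)]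
    have e4 : volume.real (Metric.ball (ρ * y) (ρ * s)) = 2 * (ρ * s) := by
      rw [measureReal_def, Real.volume_ball, ENNReal.toReal_ofReal (by positivity)]
    rw [e2, e3, e4] at e1
    linarith
  -- Lebesgue density
  have dens := Besicovitch.ae_tendsto_measure_inter_div (volume : Measure ℝ) A
  have : (volume.restrict A) ≠ 0 := by
    intro h0
    rw [Measure.restrict_eq_zero] at h0
    simp [measureReal_def, h0] at pa
  haveI : (ae (volume.restrict A)).NeBot := ae_neBot.2 this
  obtain ⟨x, hx⟩ := dens.exists
  have l0 : (τ ^ 2)⁻¹ < 1 := inv_lt_one_of_one_lt₀ (by nlinarith)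
  have lim : Filter.Tendsto (fun n : ℕ => ((τ ^ 2)⁻¹) ^ n) Filter.atTop (nhdsWithin 0 (Set.Ioi 0)) :=
    tendsto_nhdsWithin_iff.2 ⟨tendsto_pow_atTop_nhds_zero_of_lt_one (by positivity) l0,
      Filter.Eventually.of_forall (fun n => by simp only [Set.mem_Ioi]; positivity)⟩
  have hx2 := hx.comp lim
  have hx3 := (ENNReal.tendsto_toReal ENNReal.one_ne_top).comp hx2
  have := le_of_tendsto hx3 (b := 1 - s) (Filter.Eventually.of_forall (fun n => by
    simp only [Function.comp, ENNReal.toReal_div]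
    have hp : 0 < ((τ ^ 2)⁻¹) ^ n := by positivity
    rw [Real.volume_closedBall, ENNReal.toReal_ofReal (by positivity), div_le_iff₀ (by positivity)]
    exact por n x))
  simp at this
  linarith

lemma frontier_sub {c : ℝ} (hc : 0 < c) (t : ℝ) (K : Set ℝ) :
    frontier ((fun x : ℝ => c⁻¹ * (x + t)) '' K) = (fun x : ℝ => c⁻¹ * (x + t)) '' frontier K := by
  have := ((Homeomorph.addRight t).trans (Homeomorph.mulLeft₀ c⁻¹ (by positivity))).image_frontier K
  exact this.symm

lemma mem_img {c : ℝ} (hc : 0 < c) (t y : ℝ) (K : Set ℝ) :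
    c⁻¹ * y ∈ (fun x : ℝ => c⁻¹ * (x + t)) '' K ↔ y - t ∈ K := by
  constructor
  · rintro ⟨x, hx, e⟩
    have : x + t = y := mul_left_cancel₀ (inv_ne_zero hc.ne') e
    rw [← this]; simpa using hx
  · intro h
    exact ⟨y - t, h, by simp⟩

lemma interior_img {c : ℝ} (hc : 0 < c) (t : ℝ) {K L : Set ℝ}
    (h : (fun x : ℝ => c⁻¹ * (x + t)) '' K ⊆ L) (hL : interior L = ∅) : interior K = ∅ := by
  have := ((Homeomorph.addRight t).trans (Homeomorph.mulLeft₀ c⁻¹ (by positivity))).image_interior K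
  have h2 : (fun x : ℝ => c⁻¹ * (x + t)) '' interior K ⊆ ∅ := by
    rw [← hL]
    refine Set.Subset.trans (le_of_eq ?_) (interior_mono h)
    exact this
  simpa using h2

lemma frontier_null {FA FB : Set ℝ} (h : Sub τ A B) (h' : Sub τ FA FB)
    (hA : IsCompact A) (hB : IsCompact B) (sA : FA ⊆ A) (sB : FB ⊆ B)
    (dA : Disjoint FA (interior A)) (ne : (interior A).Nonempty) :
    volume.real FA = 0 ∨ volume.real FB = 0 := by
  have ht := h.t1
  have hpos : 0 < τ ^ 2 := by positivity
  obtain ⟨D, hD⟩ := (hA.union hB).isBounded.subset_closedBall 0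
  have hDA := Set.subset_union_left.trans hD
  have hDB := Set.subset_union_right.trans hD
  obtain ⟨x, hx⟩ := ne
  obtain ⟨ε, hε, hball⟩ := Metric.isOpen_iff.1 isOpen_interior x hx
  have l0 : (τ ^ 2)⁻¹ < 1 := inv_lt_one_of_one_lt₀ (by nlinarith)
  have lim := (tendsto_pow_atTop_nhds_zero_of_lt_one (by positivity) l0).mul_const (2 * D)
  rw [zero_mul] at lim
  obtain ⟨n, hn⟩ := (lim.eventually (gt_mem_nhds hε)).exists
  set ρ := ((τ ^ 2)⁻¹) ^ n with hρ
  have ρpos : 0 < ρ := by positivity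
  obtain ⟨q, hq, hxq⟩ := lev_cov h n (ρ⁻¹ * x) (by
    rw [← hρ, mul_inv_cancel_left₀ ρpos.ne']; exact interior_subset hx)
  set J : Set ℝ := {y | ρ * y ∈ interior A} with hJ
  have hJm : MeasurableSet J := (measurable_const_mul ρ) isOpen_interior.measurableSet
  have e := lev_eq h' n hJm
  have z : {x | ((τ ^ 2)⁻¹) ^ n * x ∈ FA} ∩ J = ∅ := by
    apply Set.eq_empty_of_forall_notMem
    rintro y ⟨h1, h2⟩
    exact Set.disjoint_left.1 dA h1 h2
  rw [z] at e
  have hsub : pc FA FB q ⊆ J := by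
    intro w hw
    have hw' : w ∈ pc A B q := by
      obtain ⟨b, t⟩ := q
      cases b
      · exact sB (by simpa [pc] using hw)
      · exact sA (by simpa [pc] using hw)
    apply hball
    have h1 := bdd_pc hDA hDB q hw'
    have h2 := bdd_pc hDA hDB q hxq
    rw [Metric.mem_closedBall] at h1 h2
    have h4 := dist_triangle_right w (ρ⁻¹ * x) q.2
    rw [Metric.mem_ball]
    have : dist (ρ * w) x = ρ * dist w (ρ⁻¹ * x) := by
      rw [Real.dist_eq, Real.dist_eq, ← abs_of_pos ρpos, ← abs_mul, abs_of_pos ρpos]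
      congr 1; field_simp
    rw [this]
    refine lt_of_le_of_lt ?_ hn
    exact mul_le_mul_of_nonneg_left (by linarith) ρpos.le
  have hle : volume.real (pc FA FB q ∩ J) ≤
      ((lev τ n).map (fun q => volume.real (pc FA FB q ∩ J))).sum :=
    List.single_le_sum (by
      simp only [List.mem_map]
      rintro _ ⟨q, _, rfl⟩
      exact measureReal_nonneg) _ (List.mem_map.2 ⟨q, hq, rfl⟩)
  rw [← e, Set.inter_eq_left.2 hsub, vol_pc] at hle
  simp only [measureReal_empty] at hle
  split_ifs at hle
  · exact Or.inl (le_antisymm hle measureReal_nonneg)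
  · exact Or.inr (le_antisymm hle measureReal_nonneg)

lemma both_zero (h : Sub τ A B) (hz : volume.real A = 0 ∨ volume.real B = 0) :
    volume A = 0 ∧ volume B = 0 := by
  have P := perron h
  have a0 : 0 ≤ volume.real A := measureReal_nonneg
  have b0 : 0 ≤ volume.real B := measureReal_nonneg
  rw [← measureReal_eq_zero_iff h.fa, ← measureReal_eq_zero_iff h.fb]
  rcases hz with hz | hz
  · rw [hz] at P; exact ⟨hz, by linarith [P.1]⟩
  · rw [hz] at P; exact ⟨by linarith [P.2], hz⟩

end RhoTilde

/-- The boundaries of the windows of the substitution ρ̃ = (a ↦ aab, b ↦ ba)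
have Lebesgue measure zero. -/
theorem rho_tilde_windows_boundary_null (τ : ℝ) (hτ : τ = (1 + Real.sqrt 5) / 2)
    (Wa Wb : Set ℝ) (hWa : Wa.Nonempty) (hWb : Wb.Nonempty)
    (hca : IsCompact Wa) (hcb : IsCompact Wb)
    (h1 : Wa = (fun x : ℝ => (τ ^ 2)⁻¹ * x) '' Wa ∪
               (fun x : ℝ => (τ ^ 2)⁻¹ * (x - τ)) '' Wa ∪
               (fun x : ℝ => (τ ^ 2)⁻¹ * (x + τ ^ 2)) '' Wb)
    (h2 : Wb = (fun x : ℝ => (τ ^ 2)⁻¹ * (x - 2 * τ)) '' Wa ∪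
               (fun x : ℝ => (τ ^ 2)⁻¹ * x) '' Wb) :
    volume (frontier Wa) = 0 ∧ volume (frontier Wb) = 0 := by
  have h5 : Real.sqrt 5 ^ 2 = 5 := Real.sq_sqrt (by norm_num)
  have h5' : 1 < Real.sqrt 5 := by
    rw [Real.lt_sqrt (by norm_num)]; norm_num
  have t1 : 1 < τ := by rw [hτ]; linarith
  have t2 : τ ^ 2 = τ + 1 := by rw [hτ]; nlinarith
  have hpos : 0 < τ ^ 2 := by positivity
  have g1 : Wa = (fun x : ℝ => (τ ^ 2)⁻¹ * (x + 0)) '' Wa ∪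
               (fun x : ℝ => (τ ^ 2)⁻¹ * (x + (-τ))) '' Wa ∪
               (fun x : ℝ => (τ ^ 2)⁻¹ * (x + τ ^ 2)) '' Wb := by
    simpa only [add_zero, ← sub_eq_add_neg] using h1
  have g2 : Wb = (fun x : ℝ => (τ ^ 2)⁻¹ * (x + (-(2 * τ)))) '' Wa ∪
               (fun x : ℝ => (τ ^ 2)⁻¹ * (x + 0)) '' Wb := by
    simpa only [add_zero, ← sub_eq_add_neg] using h2
  have S : RhoTilde.Sub τ Wa Wb := by
    refine ⟨t1, t2, hca.measure_lt_top.ne, hcb.measure_lt_top.ne, ?_, ?_⟩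
    · intro x hx
      rw [g1] at hx
      rcases hx with (hx | hx) | hx <;> rw [RhoTilde.mem_img hpos] at hx
      · left; simpa using hx
      · right; left; simpa using hx
      · right; right; exact hx
    · intro x hx
      rw [g2] at hx
      rcases hx with hx | hx <;> rw [RhoTilde.mem_img hpos] at hx
      · left; simpa using hx
      · right; simpa using hx
  have fsA : frontier Wa ⊆ Wa := hca.isClosed.frontier_subset
  have fsB : frontier Wb ⊆ Wb := hcb.isClosed.frontier_subset
  have fu : ∀ X Y : Set ℝ, frontier (X ∪ Y) ⊆ frontier X ∪ frontier Y := fun X Y =>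
    (frontier_union_subset X Y).trans
      (Set.union_subset_union Set.inter_subset_left Set.inter_subset_right)
  have S' : RhoTilde.Sub τ (frontier Wa) (frontier Wb) := by
    refine ⟨t1, t2, ne_top_of_le_ne_top S.fa (measure_mono fsA),
      ne_top_of_le_ne_top S.fb (measure_mono fsB), ?_, ?_⟩
    · intro x hx
      rw [g1] at hx
      have hx' := (fu _ _).trans (Set.union_subset_union_left _ (fu _ _)) hx
      simp only [RhoTilde.frontier_sub hpos] at hx'
      rcases hx' with (hx | hx) | hx <;> rw [RhoTilde.mem_img hpos] at hx
      · left; simpa using hx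
      · right; left; simpa using hx
      · right; right; exact hx
    · intro x hx
      rw [g2] at hx
      have hx' := fu _ _ hx
      simp only [RhoTilde.frontier_sub hpos] at hx'
      rcases hx' with hx | hx <;> rw [RhoTilde.mem_img hpos] at hx
      · left; simpa using hx
      · right; simpa using hx
  by_cases hz : volume.real Wa = 0 ∨ volume.real Wb = 0
  · obtain ⟨za, zb⟩ := RhoTilde.both_zero S hz
    exact ⟨measure_mono_null fsA za, measure_mono_null fsB zb⟩
  · push Not at hz
    have pa : 0 < volume.real Wa := lt_of_le_of_ne measureReal_nonneg hz.1.symm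
    have pb : 0 < volume.real Wb := lt_of_le_of_ne measureReal_nonneg hz.2.symm
    have ne : (interior Wa).Nonempty := by
      by_contra hne
      rw [Set.not_nonempty_iff_eq_empty] at hne
      have hneb : interior Wb = ∅ := by
        refine RhoTilde.interior_img hpos (τ ^ 2) (L := Wa) ?_ hne
        conv_rhs => rw [g1]
        exact Set.subset_union_right
      exact RhoTilde.null_of_empty S hca hcb hne hneb pa pb
    exact RhoTilde.both_zero S' (RhoTilde.frontier_null S S' hca hcb fsA fsB
      disjoint_interior_frontier.symm ne)
end

section
/- Let τ = (1+√5)/2, let W_a, W_b be nonempty compact subsets of ℝ satisfying W_a = τ⁻²·W_a ∪ τ⁻²·(W_a − τ) ∪ τ⁻²·(W_b + τ²) and W_b = τ⁻²·(W_a − 2τ) ∪ τ⁻²·W_b, and set W = W_a ∪ W_b. Then W is a Cantorval: W is compact, W equals the closure of its interior, and no connected component of W is isolated, i.e., for every x ∈ W the connected component of x in W is not an open subset of W in the subspace topology. -/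
open Set Filter Topology

/-- The graph-directed system of the substitution, with `t = 1/τ` and `q = τ⁻² = 1 - t`. -/
structure RSys (t : ℝ) (A B : Set ℝ) : Prop where
  ht : t ^ 2 = 1 - t
  t1 : (0.618 : ℝ) < t
  t2 : t < (0.6181 : ℝ)
  neA : A.Nonempty
  neB : B.Nonempty
  cA : IsCompact A
  cB : IsCompact B
  a0 : ∀ y ∈ A, (1 - t) * y ∈ A
  a1 : ∀ y ∈ A, (1 - t) * y - t ∈ A
  a2 : ∀ y ∈ B, (1 - t) * y + 1 ∈ A
  b0 : ∀ y ∈ A, (1 - t) * y - 2 * t ∈ B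
  b1 : ∀ y ∈ B, (1 - t) * y ∈ B
  eA : ∀ x ∈ A, (∃ y ∈ A, x = (1 - t) * y) ∨ (∃ y ∈ A, x = (1 - t) * y - t) ∨
    (∃ y ∈ B, x = (1 - t) * y + 1)
  eB : ∀ x ∈ B, (∃ y ∈ A, x = (1 - t) * y - 2 * t) ∨ (∃ y ∈ B, x = (1 - t) * y)

namespace RSys

variable {t : ℝ} {A B : Set ℝ}

theorem tend (h : RSys t A B) : Tendsto (fun n : ℕ => (1 - t) ^ n) atTop (𝓝 0) :=
  tendsto_pow_atTop_nhds_zero_of_lt_one (by linarith [h.t2]) (by linarith [h.t1])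

theorem qpos (h : RSys t A B) : 0 < 1 - t := by linarith [h.t2]

theorem upper (h : RSys t A B) : (∀ x ∈ A, x ≤ 1) ∧ (∀ x ∈ B, x ≤ 0) := by
  obtain ⟨a, haA, ha⟩ := h.cA.exists_isGreatest h.neA
  obtain ⟨b, hbB, hb⟩ := h.cB.exists_isGreatest h.neB
  have hq := h.qpos
  have t1 := h.t1
  have t2 := h.t2
  have ka : a ≤ 0 ∨ a ≤ (1 - t) * b + 1 := by
    rcases h.eA a haA with ⟨y, hy, e⟩ | ⟨y, hy, e⟩ | ⟨y, hy, e⟩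
    · left
      have := ha hy
      nlinarith
    · left
      have := ha hy
      nlinarith
    · right
      have := mul_le_mul_of_nonneg_left (hb hy) hq.le
      linarith
  have kb : b ≤ (1 - t) * a - 2 * t ∨ b ≤ 0 := by
    rcases h.eB b hbB with ⟨y, hy, e⟩ | ⟨y, hy, e⟩
    · left
      have := mul_le_mul_of_nonneg_left (ha hy) hq.le
      linarith
    · right
      have := hb hy
      nlinarith
  have : a ≤ 1 ∧ b ≤ 0 := by
    rcases kb with kb | kb
    · rcases ka with ka | ka
      · exact ⟨by linarith, by nlinarith⟩
      · have : a ≤ 1 := by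
          by_contra hc
          push Not at hc
          have h3 : (1 - t) * b ≤ (1 - t) * ((1 - t) * a - 2 * t) :=
            mul_le_mul_of_nonneg_left kb hq.le
          have h4 : (1 - t) * ((1 - t) * a - 2 * t) ≤ (1 - t) * a := by
            apply mul_le_mul_of_nonneg_left _ hq.le
            nlinarith
          have h5 : (1 - t) * ((1 - t) * a - 2 * t) ≤ (1 - t) * (a - 1) := by
            apply mul_le_mul_of_nonneg_left _ hq.le
            nlinarith
          nlinarith
        exact ⟨this, by nlinarith⟩
    · refine ⟨?_, kb⟩
      rcases ka with ka | ka
      · linarith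
      · nlinarith
  exact ⟨fun x hx => (ha hx).trans this.1, fun x hx => (hb hx).trans this.2⟩

theorem lower (h : RSys t A B) : (∀ x ∈ A, -1 ≤ x) ∧ (∀ x ∈ B, -(1 + t) ≤ x) := by
  obtain ⟨a, haA, ha⟩ := h.cA.exists_isLeast h.neA
  obtain ⟨b, hbB, hb⟩ := h.cB.exists_isLeast h.neB
  have hq := h.qpos
  have t1 := h.t1
  have t2 := h.t2
  have ht := h.ht
  have ka : -1 ≤ a ∨ (1 - t) * b + 1 ≤ a := by
    rcases h.eA a haA with ⟨y, hy, e⟩ | ⟨y, hy, e⟩ | ⟨y, hy, e⟩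
    · left
      have := mul_le_mul_of_nonneg_left (ha hy) hq.le
      nlinarith
    · left
      have := mul_le_mul_of_nonneg_left (ha hy) hq.le
      nlinarith
    · right
      have := mul_le_mul_of_nonneg_left (hb hy) hq.le
      linarith
  have kb : (1 - t) * a - 2 * t ≤ b ∨ 0 ≤ b := by
    rcases h.eB b hbB with ⟨y, hy, e⟩ | ⟨y, hy, e⟩
    · left
      have := mul_le_mul_of_nonneg_left (ha hy) hq.le
      linarith
    · right
      have := mul_le_mul_of_nonneg_left (hb hy) hq.le
      nlinarith
  have hA : -1 ≤ a := by
    rcases ka with ka | ka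
    · exact ka
    · rcases kb with kb | kb
      · by_contra hc
        push Not at hc
        have h3 := mul_le_mul_of_nonneg_left kb hq.le
        have h5 : (1 - t) * (a - 2 * t) ≤ (1 - t) * ((1 - t) * a - 2 * t) := by
            apply mul_le_mul_of_nonneg_left _ hq.le
            nlinarith
        nlinarith
      · nlinarith
  have hB : -(1 + t) ≤ b := by
    rcases kb with kb | kb
    · nlinarith
    · linarith
  exact ⟨fun x hx => hA.trans (ha hx), fun x hx => hB.trans (hb hx)⟩

theorem zeroA (h : RSys t A B) : (0 : ℝ) ∈ A := by
  obtain ⟨y, hy⟩ := h.neA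
  have h1 : ∀ n : ℕ, (1 - t) ^ n * y ∈ A := by
    intro n
    induction n with
    | zero => simpa using hy
    | succ n ih =>
      have := h.a0 _ ih
      rwa [← mul_assoc, ← pow_succ'] at this
  have h2 := h.tend.mul_const y
  rw [zero_mul] at h2
  exact h.cA.isClosed.mem_of_tendsto h2 (Eventually.of_forall h1)

theorem zeroB (h : RSys t A B) : (0 : ℝ) ∈ B := by
  obtain ⟨y, hy⟩ := h.neB
  have h1 : ∀ n : ℕ, (1 - t) ^ n * y ∈ B := by
    intro n
    induction n with
    | zero => simpa using hy
    | succ n ih =>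
      have := h.b1 _ ih
      rwa [← mul_assoc, ← pow_succ'] at this
  have h2 := h.tend.mul_const y
  rw [zero_mul] at h2
  exact h.cB.isClosed.mem_of_tendsto h2 (Eventually.of_forall h1)

theorem oneA (h : RSys t A B) : (1 : ℝ) ∈ A := by
  simpa using h.a2 0 h.zeroB

/-! ### Gaps accumulating at right end points -/

theorem gapB (h : RSys t A B) (k : ℕ) : -(0.7 * (1 - t) ^ k) ∉ B := by
  have hq := h.qpos
  have t1 := h.t1
  have t2 := h.t2
  have key : ∀ x ∈ B, (-0.8 : ℝ) < x → ∃ y ∈ B, x = (1 - t) * y := by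
    intro x hx hlt
    rcases h.eB x hx with ⟨y, hy, e⟩ | h'
    · have := h.upper.1 y hy
      nlinarith
    · exact h'
  induction k with
  | zero =>
    intro hx
    obtain ⟨y, hy, e⟩ := key _ hx (by norm_num)
    have := h.lower.2 y hy
    have h3 := mul_le_mul_of_nonneg_left this hq.le
    have := h.ht
    norm_num at e
    nlinarith
  | succ k ih =>
    intro hx
    have hk : (1 - t) ^ (k + 1) ≤ 1 := pow_le_one₀ hq.le (by linarith)
    obtain ⟨y, hy, e⟩ := key _ hx (by linarith)
    have : y = -(0.7 * (1 - t) ^ k) := by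
      apply mul_left_cancel₀ hq.ne'
      rw [← e]; ring
    exact ih (this ▸ hy)

theorem gapA (h : RSys t A B) (k : ℕ) : 1 - (0.7 * (1 - t) ^ (k + 1)) ∉ A := by
  have hq := h.qpos
  have t1 := h.t1
  have t2 := h.t2
  intro hx
  have hk : (1 - t) ^ (k + 1) ≤ (1 - t) := by
    rw [pow_succ]
    have : (1 - t) ^ k ≤ 1 := pow_le_one₀ hq.le (by linarith)
    nlinarith
  rcases h.eA _ hx with ⟨y, hy, e⟩ | ⟨y, hy, e⟩ | ⟨y, hy, e⟩
  · have := h.upper.1 y hy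
    nlinarith
  · have := h.upper.1 y hy
    nlinarith
  · have : y = -(0.7 * (1 - t) ^ k) := by
      apply mul_left_cancel₀ hq.ne'
      have : (1 - t) * y = - (0.7 * (1 - t) ^ (k + 1)) := by linarith
      rw [this]; ring
    exact h.gapB k (this ▸ hy)

theorem base (h : RSys t A B) {S : Set ℝ} {M : ℝ} (hM : M ∈ S) (hS : ∀ x ∈ S, x ≤ M)
    (hS' : ∀ x ∈ S, M - 2 ≤ x) (hg : ∀ k : ℕ, M - 0.7 * (1 - t) ^ (k + 1) ∉ S)
    {r ε : ℝ} {N : ℕ} (hN : (1 - t) ^ N * 2 < ε) (g : ℝ)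
    (hok : ∀ x ∈ S, (1 - t) ^ N * x + g ≤ r ∨ r + ε ≤ (1 - t) ^ N * x + g) :
    ∀ᶠ k : ℕ in atTop, ∀ x ∈ S, (1 - t) ^ N * x + g ≠ r - 0.7 * (1 - t) ^ k := by
  have hq := h.qpos
  have hp : 0 < (1 - t) ^ N := pow_pos hq N
  rcases hok M hM with h1 | h1
  · rcases h1.lt_or_eq with h2 | h2
    · have := (h.tend.const_mul 0.7).const_sub r
      rw [mul_zero, sub_zero] at this
      filter_upwards [this.eventually (lt_mem_nhds h2)] with k hk x hx e
      have := mul_le_mul_of_nonneg_left (hS x hx) hp.le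
      linarith
    · filter_upwards [eventually_ge_atTop (N + 1)] with k hk x hx e
      obtain ⟨j, rfl⟩ := Nat.exists_eq_add_of_le hk
      have : x = M - 0.7 * (1 - t) ^ (j + 1) := by
        apply mul_left_cancel₀ hp.ne'
        rw [← h2] at e
        have e2 : (1 - t) ^ N * x = (1 - t) ^ N * M - 0.7 * (1 - t) ^ (N + 1 + j) := by linarith
        rw [e2]; ring
      exact hg j (this ▸ hx)
  · refine Eventually.of_forall fun k x hx e => ?_
    have := mul_le_mul_of_nonneg_left (hS' x hx) hp.le
    have : 0 < (1 - t) ^ k := pow_pos hq k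
    nlinarith

theorem ev (h : RSys t A B) {r ε : ℝ} (hε : 0 < ε) {N : ℕ} (hN : (1 - t) ^ N * 2 < ε) (i : ℕ) :
    ∀ j, i + j = N → ∀ g : ℝ,
    ((∀ x ∈ A, (1 - t) ^ j * x + g ≤ r ∨ r + ε ≤ (1 - t) ^ j * x + g) →
      ∀ᶠ k : ℕ in atTop, ∀ x ∈ A, (1 - t) ^ j * x + g ≠ r - 0.7 * (1 - t) ^ k) ∧
    ((∀ x ∈ B, (1 - t) ^ j * x + g ≤ r ∨ r + ε ≤ (1 - t) ^ j * x + g) →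
      ∀ᶠ k : ℕ in atTop, ∀ x ∈ B, (1 - t) ^ j * x + g ≠ r - 0.7 * (1 - t) ^ k) := by
  induction i with
  | zero =>
    intro j hj g
    rw [zero_add] at hj
    subst hj
    constructor
    · exact h.base h.oneA h.upper.1 (fun x hx => by linarith [h.lower.1 x hx]) h.gapA hN g
    · exact h.base h.zeroB h.upper.2 (fun x hx => by linarith [h.lower.2 x hx, h.t2])
        (fun k => by rw [zero_sub]; exact h.gapB _) hN g
  | succ i ih =>
    intro j hj g
    have ih := ih (j + 1) (by omega)
    have e : ∀ y c : ℝ, (1 - t) ^ j * ((1 - t) * y + c) + g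
        = (1 - t) ^ (j + 1) * y + ((1 - t) ^ j * c + g) := by intro y c; ring
    constructor
    · intro hok
      have k1 := (ih ((1 - t) ^ j * 0 + g)).1 (fun x hx => by
        rw [← e, add_zero]; exact hok _ (h.a0 x hx))
      have k2 := (ih ((1 - t) ^ j * (-t) + g)).1 (fun x hx => by
        rw [← e]; exact hok _ (h.a1 x hx))
      have k3 := (ih ((1 - t) ^ j * 1 + g)).2 (fun x hx => by
        rw [← e]; exact hok _ (h.a2 x hx))
      filter_upwards [k1, k2, k3] with k m1 m2 m3 x hx
      rcases h.eA x hx with ⟨y, hy, rfl⟩ | ⟨y, hy, rfl⟩ | ⟨y, hy, rfl⟩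
      · have := m1 y hy
        rwa [← e, add_zero] at this
      · have := m2 y hy
        rwa [← e] at this
      · have := m3 y hy
        rwa [← e] at this
    · intro hok
      have k1 := (ih ((1 - t) ^ j * (-(2 * t)) + g)).1 (fun x hx => by
        rw [← e]; exact hok _ (h.b0 x hx))
      have k2 := (ih ((1 - t) ^ j * 0 + g)).2 (fun x hx => by
        rw [← e, add_zero]; exact hok _ (h.b1 x hx))
      filter_upwards [k1, k2] with k m1 m2 x hx
      rcases h.eB x hx with ⟨y, hy, rfl⟩ | ⟨y, hy, rfl⟩
      · have := m1 y hy
        rwa [← e] at this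
      · have := m2 y hy
        rwa [← e, add_zero] at this

theorem gaps (h : RSys t A B) {r ε : ℝ} (hε : 0 < ε)
    (hr : ∀ x ∈ A ∪ B, x ≤ r ∨ r + ε ≤ x) {l : ℝ} (hl : l < r) :
    ∃ y, l < y ∧ y < r ∧ y ∉ A ∪ B := by
  have h0 := h.tend.mul_const 2
  rw [zero_mul] at h0
  obtain ⟨N, hN⟩ := (h0.eventually (gt_mem_nhds hε)).exists
  have key := h.ev (r := r) hε hN N 0 (by simp) 0
  simp only [pow_zero, one_mul, add_zero] at key
  have k1 := key.1 fun x hx => hr x (Or.inl hx)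
  have k2 := key.2 fun x hx => hr x (Or.inr hx)
  have := (h.tend.const_mul 0.7).const_sub r
  rw [mul_zero, sub_zero] at this
  obtain ⟨k, ⟨m1, m2⟩, m3⟩ := ((k1.and k2).and (this.eventually (lt_mem_nhds hl))).exists
  refine ⟨_, m3, ?_, ?_⟩
  · have : 0 < (1 - t) ^ k := pow_pos h.qpos k
    linarith
  · rintro (hx | hx)
    · exact m1 _ hx rfl
    · exact m2 _ hx rfl

/-! ### Nonempty interior -/

/-- A word whose prefix positions lie in the windows prescribed by its letters. -/
def Good (t : ℝ) (A B : Set ℝ) : ℝ → List Bool → Prop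
  | _, [] => True
  | y, true :: w => y ∈ A ∧ Good t A B (y - t) w
  | y, false :: w => y ∈ B ∧ Good t A B (y + 1) w

/-- The substitution on words. -/
def sub : List Bool → List Bool
  | [] => []
  | true :: w => true :: true :: false :: sub w
  | false :: w => false :: true :: sub w

theorem sub_length (w : List Bool) : 2 * w.length ≤ (sub w).length := by
  induction w with
  | nil => simp [sub]
  | cons c w ih => cases c <;> simp only [sub, List.length_cons] <;> omega

theorem good_sub (h : RSys t A B) (w : List Bool) :
    ∀ y, Good t A B y w → Good t A B ((1 - t) * y) (sub w) := by
  have ht := h.ht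
  induction w with
  | nil => intro y _; simp [sub, Good]
  | cons c w ih =>
    intro y hy
    cases c
    · simp only [Good, sub] at hy ⊢
      have := ih _ hy.2
      refine ⟨h.b1 _ hy.1, h.a2 _ hy.1, ?_⟩
      convert this using 1
      ring
    · simp only [Good, sub] at hy ⊢
      have := ih _ hy.2
      refine ⟨h.a0 _ hy.1, h.a1 _ hy.1, ?_, ?_⟩
      · convert h.b0 _ hy.1 using 1
        ring
      · convert this using 1
        linear_combination -ht

theorem good_long (h : RSys t A B) (n : ℕ) : ∃ w : List Bool, n < w.length ∧ Good t A B 0 w := by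
  induction n with
  | zero => exact ⟨[true], by simp, h.zeroA, trivial⟩
  | succ n ih =>
    obtain ⟨w, hw, hg⟩ := ih
    refine ⟨sub w, ?_, ?_⟩
    · have := sub_length w
      omega
    · simpa using h.good_sub w 0 hg

theorem good_mem (w : List Bool) : ∀ (y : ℝ) (i : ℕ), i < w.length → Good t A B y w →
    ∃ k : ℤ, y + i + k * (1 + t) ∈ A ∪ B := by
  induction w with
  | nil => intro y i hi; simp at hi
  | cons c w ih =>
    intro y i hi hg
    cases i with
    | zero =>
      refine ⟨0, ?_⟩
      cases c
      · exact Or.inr (by simpa using hg.1)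
      · exact Or.inl (by simpa using hg.1)
    | succ i =>
      have hi' : i < w.length := by simpa using hi
      cases c
      · obtain ⟨k, hk⟩ := ih _ i hi' hg.2
        refine ⟨k, ?_⟩
        convert hk using 1
        push_cast; ring
      · obtain ⟨k, hk⟩ := ih _ i hi' hg.2
        refine ⟨k - 1, ?_⟩
        convert hk using 1
        push_cast; ring

theorem covers (h : RSys t A B) (hirr : Irrational (1 + t)) (x : ℝ) :
    ∃ k : ℤ, x + k * (1 + t) ∈ A ∪ B := by
  have hd : DenseRange (fun n : ℤ => n • ((1 : ℝ) : AddCircle (1 + t))) :=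
    AddCircle.denseRange_zsmul_coe_iff.2 (by rw [one_div]; exact hirr.inv)
  haveI : Fact (0 < 1 + t) := ⟨by linarith [h.t1]⟩
  rw [denseRange_zsmul_iff_nsmul] at hd
  have hc : IsClosed ((fun x : ℝ => (x : AddCircle (1 + t))) '' (A ∪ B)) :=
    ((h.cA.union h.cB).image (AddCircle.continuous_mk' _)).isClosed
  have hsub : range (fun n : ℕ => n • ((1 : ℝ) : AddCircle (1 + t))) ⊆
      (fun x : ℝ => (x : AddCircle (1 + t))) '' (A ∪ B) := by
    rintro _ ⟨n, rfl⟩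
    obtain ⟨w, hw, hg⟩ := h.good_long n
    obtain ⟨k, hk⟩ := good_mem w 0 n hw hg
    refine ⟨_, hk, ?_⟩
    have : (0 + (n : ℝ) + k * (1 + t)) = n • (1 : ℝ) + k • (1 + t) := by
      simp only [nsmul_eq_mul, zsmul_eq_mul]; ring
    simp only [this, AddCircle.coe_add, AddCircle.coe_nsmul, AddCircle.coe_zsmul,
      AddCircle.coe_period, smul_zero, add_zero]
  have := closure_minimal hsub hc (hd (x : AddCircle (1 + t)))
  obtain ⟨z, hz, e⟩ := this
  have e' : ((z - x : ℝ) : AddCircle (1 + t)) = 0 := by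
    rw [AddCircle.coe_sub]; exact sub_eq_zero.2 e
  obtain ⟨k, hk⟩ := (AddCircle.coe_eq_zero_iff (1 + t)).1 e'
  refine ⟨k, ?_⟩
  rw [zsmul_eq_mul] at hk
  rw [hk]
  simpa using hz

theorem int_union (h : RSys t A B) (hirr : Irrational (1 + t)) :
    (interior (A ∪ B)).Nonempty := by
  have hc : IsClosed (A ∪ B) := (h.cA.union h.cB).isClosed
  obtain ⟨k, x, hx⟩ := nonempty_interior_of_iUnion_of_closed
    (f := fun k : ℤ => (Homeomorph.addRight ((k : ℝ) * (1 + t))) ⁻¹' (A ∪ B))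
    (fun k => hc.preimage (Homeomorph.continuous _))
    (by
      rw [eq_univ_iff_forall]
      intro x
      obtain ⟨k, hk⟩ := h.covers hirr x
      exact mem_iUnion.2 ⟨k, hk⟩)
  rw [← Homeomorph.preimage_interior] at hx
  exact ⟨_, hx⟩

theorem map_int (h : RSys t A B) {S T : Set ℝ} (c : ℝ) (hST : ∀ y ∈ S, (1 - t) * y + c ∈ T) :
    ∀ y ∈ closure (interior S), (1 - t) * y + c ∈ closure (interior T) := by
  have hq := h.qpos
  have hcont : Continuous (fun y : ℝ => (1 - t) * y + c) := by fun_prop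
  have hopen : IsOpenMap (fun y : ℝ => (1 - t) * y + c) :=
    ((Homeomorph.mulLeft₀ (1 - t) hq.ne').trans (Homeomorph.addRight c)).isOpenMap
  have hm : MapsTo (fun y : ℝ => (1 - t) * y + c) (interior S) (interior T) := by
    rw [mapsTo_iff_image_subset]
    apply interior_maximal _ (hopen _ isOpen_interior)
    rintro _ ⟨y, hy, rfl⟩
    exact hST y (interior_subset hy)
  exact fun y hy => hm.closure hcont hy

theorem approx (h : RSys t A B) {K L : Set ℝ} (hK : K ⊆ A) (hL : L ⊆ B)
    (nK : K.Nonempty) (nL : L.Nonempty)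
    (a0 : ∀ y ∈ K, (1 - t) * y + 0 ∈ K) (a1 : ∀ y ∈ K, (1 - t) * y + -t ∈ K)
    (a2 : ∀ y ∈ L, (1 - t) * y + 1 ∈ K)
    (b0 : ∀ y ∈ K, (1 - t) * y + -(2 * t) ∈ L) (b1 : ∀ y ∈ L, (1 - t) * y + 0 ∈ L) (n : ℕ) :
    (∀ x ∈ A, ∃ y ∈ K, |x - y| ≤ 2 * (1 - t) ^ n) ∧
    (∀ x ∈ B, ∃ y ∈ L, |x - y| ≤ 2 * (1 - t) ^ n) := by
  have hq := h.qpos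
  have step : ∀ x y c : ℝ, ∀ n : ℕ, |x - y| ≤ 2 * (1 - t) ^ n →
      |((1 - t) * x + c) - ((1 - t) * y + c)| ≤ 2 * (1 - t) ^ (n + 1) := by
    intro x y c n hxy
    have : ((1 - t) * x + c) - ((1 - t) * y + c) = (1 - t) * (x - y) := by ring
    rw [this, abs_mul, abs_of_pos hq, pow_succ]
    nlinarith
  induction n with
  | zero =>
    obtain ⟨k, hk⟩ := nK
    obtain ⟨l, hl⟩ := nL
    have t2 := h.t2
    refine ⟨fun x hx => ⟨k, hk, ?_⟩, fun x hx => ⟨l, hl, ?_⟩⟩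
    · rw [abs_le]
      have := h.upper.1 x hx
      have := h.lower.1 x hx
      have := h.upper.1 k (hK hk)
      have := h.lower.1 k (hK hk)
      constructor <;> simp <;> linarith
    · rw [abs_le]
      have := h.upper.2 x hx
      have := h.lower.2 x hx
      have := h.upper.2 l (hL hl)
      have := h.lower.2 l (hL hl)
      constructor <;> simp <;> linarith
  | succ n ih =>
    constructor
    · intro x hx
      rcases h.eA x hx with ⟨y, hy, rfl⟩ | ⟨y, hy, rfl⟩ | ⟨y, hy, rfl⟩
      · obtain ⟨z, hz, e⟩ := ih.1 y hy
        exact ⟨_, a0 z hz, by simpa using step y z 0 n e⟩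
      · obtain ⟨z, hz, e⟩ := ih.1 y hy
        exact ⟨_, a1 z hz, step y z (-t) n e⟩
      · obtain ⟨z, hz, e⟩ := ih.2 y hy
        exact ⟨_, a2 z hz, step y z 1 n e⟩
    · intro x hx
      rcases h.eB x hx with ⟨y, hy, rfl⟩ | ⟨y, hy, rfl⟩
      · obtain ⟨z, hz, e⟩ := ih.1 y hy
        exact ⟨_, b0 z hz, step y z (-(2 * t)) n e⟩
      · obtain ⟨z, hz, e⟩ := ih.2 y hy
        exact ⟨_, b1 z hz, by simpa using step y z 0 n e⟩

theorem mem_of_approx (h : RSys t A B) {K : Set ℝ} (hK : IsClosed K) {x : ℝ}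
    (hx : ∀ n : ℕ, ∃ y ∈ K, |x - y| ≤ 2 * (1 - t) ^ n) : x ∈ K := by
  rw [← hK.closure_eq, Metric.mem_closure_iff]
  intro ε hε
  have h0 := h.tend.const_mul 2
  rw [mul_zero] at h0
  obtain ⟨N, hN⟩ := (h0.eventually (gt_mem_nhds hε)).exists
  obtain ⟨y, hy, e⟩ := hx N
  exact ⟨y, hy, by rw [Real.dist_eq]; linarith⟩

theorem regular (h : RSys t A B) (hirr : Irrational (1 + t)) :
    closure (interior (A ∪ B)) = A ∪ B := by
  have a0 := h.map_int (S := A) (T := A) 0 (fun y hy => by simpa using h.a0 y hy)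
  have a1 := h.map_int (S := A) (T := A) (-t) h.a1
  have a2 := h.map_int (S := B) (T := A) 1 h.a2
  have b0 := h.map_int (S := A) (T := B) (-(2 * t)) h.b0
  have b1 := h.map_int (S := B) (T := B) 0 (fun y hy => by simpa using h.b1 y hy)
  have clA := h.cA.isClosed
  have clB := h.cB.isClosed
  have hor : (interior A).Nonempty ∨ (interior B).Nonempty := by
    by_contra hc
    push Not at hc
    have := interior_union_isClosed_of_interior_empty clA hc.2
    have h3 := h.int_union hirr
    rw [this, hc.1] at h3
    simp at h3
  have nK : (closure (interior A)).Nonempty := by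
    rcases hor with ⟨x, hx⟩ | ⟨x, hx⟩
    · exact ⟨x, subset_closure hx⟩
    · exact ⟨_, a2 x (subset_closure hx)⟩
  have nL : (closure (interior B)).Nonempty := by
    obtain ⟨x, hx⟩ := nK
    exact ⟨_, b0 x hx⟩
  have key := h.approx (closure_minimal interior_subset clA)
    (closure_minimal interior_subset clB) nK nL a0 a1 a2 b0 b1
  apply subset_antisymm
  · exact closure_minimal interior_subset (clA.union clB)
  · rintro x (hx | hx)
    · exact closure_mono (interior_mono subset_union_left)
        (h.mem_of_approx isClosed_closure fun n => (key n).1 x hx)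
    · exact closure_mono (interior_mono subset_union_right)
        (h.mem_of_approx isClosed_closure fun n => (key n).2 x hx)

theorem nonisolated (h : RSys t A B) (hirr : Irrational (1 + t)) (x : ℝ) (hx : x ∈ A ∪ B) :
    ¬ IsOpen (Subtype.val ⁻¹' connectedComponentIn (A ∪ B) x : Set (A ∪ B : Set ℝ)) := by
  intro ho
  have hcW : IsCompact (A ∪ B) := h.cA.union h.cB
  set C := connectedComponentIn (A ∪ B) x with hC
  have hxC : x ∈ C := mem_connectedComponentIn hx
  have hCW : C ⊆ A ∪ B := connectedComponentIn_subset _ _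
  have hpre : IsPreconnected C := isPreconnected_connectedComponentIn
  have hcl : IsClosed C := by
    have hs : closure C ⊆ C :=
      hpre.closure.subset_connectedComponentIn (subset_closure hxC)
        (closure_minimal hCW hcW.isClosed)
    exact isClosed_of_closure_subset hs
  obtain ⟨r, hrC, hr⟩ := (hcW.of_isClosed_subset hcl hCW).exists_isGreatest ⟨x, hxC⟩
  obtain ⟨U, hU, hUe⟩ := isOpen_induced_iff.1 ho
  have hUC : ∀ y ∈ A ∪ B, y ∈ U ↔ y ∈ C := by
    intro y hy
    have := Set.ext_iff.1 hUe ⟨y, hy⟩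
    simpa using this
  have hrU : r ∈ U := (hUC r (hCW hrC)).2 hrC
  obtain ⟨ε, hε, hball⟩ := Metric.isOpen_iff.1 hU r hrU
  have hgap : ∀ y ∈ A ∪ B, y ≤ r ∨ r + ε ≤ y := by
    intro y hy
    by_contra hc
    push Not at hc
    have : y ∈ U := hball (by rw [Metric.mem_ball, Real.dist_eq, abs_lt]; constructor <;> linarith)
    exact absurd (hr ((hUC y hy).1 this)) (not_le.2 hc.1)
  have hsing : ∀ l ∈ C, l = r := by
    intro l hl
    by_contra hne
    have hlr : l < r := lt_of_le_of_ne (hr hl) hne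
    obtain ⟨y, h1, h2, h3⟩ := h.gaps hε hgap hlr
    exact h3 (hCW (hpre.ordConnected.out hl hrC ⟨h1.le, h2.le⟩))
  have hrc : r ∈ closure (interior (A ∪ B)) := by
    rw [h.regular hirr]; exact hCW hrC
  obtain ⟨z, hzU, hzI⟩ := mem_closure_iff.1 hrc U hU hrU
  have hsub : U ∩ interior (A ∪ B) ⊆ {r} := fun y hy =>
    hsing y ((hUC y (interior_subset hy.2)).1 hy.1)
  have hop : IsOpen (U ∩ interior (A ∪ B)) := hU.inter isOpen_interior
  have : (U ∩ interior (A ∪ B)) ⊆ interior {r} := interior_maximal hsub hop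
  rw [interior_singleton] at this
  exact this ⟨hzU, hzI⟩

end RSys

/-- The union $W = W_a ∪ W_b$ of the windows of ρ̃ = (a ↦ aab, b ↦ ba) is a
Cantorval: compact, equal to the closure of its interior, and no connected
component of $W$ is open in the subspace topology of $W$. -/
theorem rho_tilde_window_is_Cantorval (τ : ℝ) (hτ : τ = (1 + Real.sqrt 5) / 2)
    (Wa Wb : Set ℝ) (hWa : Wa.Nonempty) (hWb : Wb.Nonempty)
    (hca : IsCompact Wa) (hcb : IsCompact Wb)
    (h1 : Wa = (fun x : ℝ => (τ ^ 2)⁻¹ * x) '' Wa ∪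
               (fun x : ℝ => (τ ^ 2)⁻¹ * (x - τ)) '' Wa ∪
               (fun x : ℝ => (τ ^ 2)⁻¹ * (x + τ ^ 2)) '' Wb)
    (h2 : Wb = (fun x : ℝ => (τ ^ 2)⁻¹ * (x - 2 * τ)) '' Wa ∪
               (fun x : ℝ => (τ ^ 2)⁻¹ * x) '' Wb) :
    IsCompact (Wa ∪ Wb) ∧
    closure (interior (Wa ∪ Wb)) = Wa ∪ Wb ∧
    ∀ x ∈ Wa ∪ Wb,
      ¬ IsOpen (Subtype.val ⁻¹' connectedComponentIn (Wa ∪ Wb) x :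
          Set (Wa ∪ Wb : Set ℝ)) := by
  have hs : Real.sqrt 5 ^ 2 = 5 := Real.sq_sqrt (by norm_num)
  have hs0 : 0 ≤ Real.sqrt 5 := Real.sqrt_nonneg 5
  have hsq : τ ^ 2 = τ + 1 := by rw [hτ]; linear_combination hs / 4
  have hlo : (1.618 : ℝ) < τ := by
    rw [hτ]; nlinarith
  have hhi : τ < (1.6181 : ℝ) := by
    rw [hτ]; nlinarith
  have hirr : Irrational (1 + (τ - 1)) := by
    have : 1 + (τ - 1) = Real.goldenRatio := by
      rw [Real.goldenRatio, ← hτ]; ring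
    rw [this]; exact Real.goldenRatio_irrational
  have hinv : (τ ^ 2)⁻¹ = 1 - (τ - 1) := by
    apply inv_eq_of_mul_eq_one_right
    rw [hsq]
    linear_combination (-1) * hsq
  have e1 : ∀ y, (τ ^ 2)⁻¹ * (y - τ) = (1 - (τ - 1)) * y - (τ - 1) := by
    intro y; rw [hinv]; linear_combination hsq
  have e2 : ∀ y, (τ ^ 2)⁻¹ * (y + τ ^ 2) = (1 - (τ - 1)) * y + 1 := by
    intro y
    rw [mul_add, inv_mul_cancel₀ (by positivity), hinv]
  have e3 : ∀ y, (τ ^ 2)⁻¹ * (y - 2 * τ) = (1 - (τ - 1)) * y - 2 * (τ - 1) := by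
    intro y; rw [hinv]; linear_combination 2 * hsq
  simp only [e1, e2, e3] at h1 h2
  rw [hinv] at h1 h2
  have S : RSys (τ - 1) Wa Wb :=
    { ht := by linear_combination hsq
      t1 := by linarith
      t2 := by linarith
      neA := hWa
      neB := hWb
      cA := hca
      cB := hcb
      a0 := fun y hy => by rw [h1]; exact Or.inl (Or.inl ⟨y, hy, rfl⟩)
      a1 := fun y hy => by rw [h1]; exact Or.inl (Or.inr ⟨y, hy, rfl⟩)
      a2 := fun y hy => by rw [h1]; exact Or.inr ⟨y, hy, rfl⟩
      b0 := fun y hy => by rw [h2]; exact Or.inl ⟨y, hy, rfl⟩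
      b1 := fun y hy => by rw [h2]; exact Or.inr ⟨y, hy, rfl⟩
      eA := fun x hx => by
        rw [h1] at hx
        rcases hx with (⟨y, hy, e⟩ | ⟨y, hy, e⟩) | ⟨y, hy, e⟩
        · exact Or.inl ⟨y, hy, e.symm⟩
        · exact Or.inr (Or.inl ⟨y, hy, e.symm⟩)
        · exact Or.inr (Or.inr ⟨y, hy, e.symm⟩)
      eB := fun x hx => by
        rw [h2] at hx
        rcases hx with ⟨y, hy, e⟩ | ⟨y, hy, e⟩
        · exact Or.inl ⟨y, hy, e.symm⟩
        · exact Or.inr ⟨y, hy, e.symm⟩ }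
  exact ⟨hca.union hcb, S.regular hirr, S.nonisolated hirr⟩
end

section
/- Let τ = (1+√5)/2, let W_a, W_b be nonempty compact subsets of ℝ satisfying W_a = τ⁻²·W_a ∪ τ⁻²·(W_a − τ) ∪ τ⁻²·(W_b + τ²) and W_b = τ⁻²·(W_a − 2τ) ∪ τ⁻²·W_b, and set W = W_a ∪ W_b. Then the Hausdorff dimension of the topological boundary of W equals log(1+√2)/(2·log τ), and the boundaries ∂W_a and ∂W_b have this same Hausdorff dimension. -/
open MeasureTheory Set Filter Topology

/-- The working form of the hypotheses: both set equations in expanding form. -/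
structure RSys_s11 (τ : ℝ) (A B : Set ℝ) : Prop where
  t2 : τ * τ = τ + 1
  lo : 1.618 < τ
  hi : τ < 1.6181
  irr : Irrational τ
  ca : IsCompact A
  cb : IsCompact B
  na : A.Nonempty
  nb : B.Nonempty
  ia : ∀ x, x ∈ A ↔ (τ + 1) * x ∈ A ∨ (τ + 1) * x + τ ∈ A ∨ (τ + 1) * x - (τ + 1) ∈ B
  ib : ∀ x, x ∈ B ↔ (τ + 1) * x + 2 * τ ∈ A ∨ (τ + 1) * x ∈ B

lemma le_of_geom {l R x b : ℝ} (h0 : 0 ≤ l) (h1 : l < 1) (h : ∀ n : ℕ, x ≤ b + R * l ^ n) : x ≤ b := by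
  have ht : Tendsto (fun n : ℕ => b + R * l ^ n) atTop (𝓝 (b + R * 0)) :=
    ((tendsto_pow_atTop_nhds_zero_of_lt_one h0 h1).const_mul R).const_add b
  rw [mul_zero, add_zero] at ht
  exact ge_of_tendsto' ht h

namespace RSys_s11

variable {τ : ℝ} {A B : Set ℝ}


lemma lt (S : RSys_s11 τ A B) : (2 - τ) * (τ + 1) = 1 := by have := S.t2; nlinarith

lemma inv (S : RSys_s11 τ A B) (x : ℝ) : x = (2 - τ) * ((τ + 1) * x) := by
  rw [← mul_assoc, S.lt, one_mul]

lemma inv' (S : RSys_s11 τ A B) (x : ℝ) : (τ + 1) * ((2 - τ) * x) = x := by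
  rw [← mul_assoc, mul_comm (τ + 1), S.lt, one_mul]

lemma l0 (S : RSys_s11 τ A B) : 0 < 2 - τ := by have := S.hi; linarith

lemma l1 (S : RSys_s11 τ A B) : 2 - τ < 1 := by have := S.lo; linarith

lemma hull_aux (S : RSys_s11 τ A B) {r : ℝ}
    (ha : ∀ x ∈ A, -1 - r ≤ x ∧ x ≤ 1 + r) (hb : ∀ x ∈ B, -τ - r ≤ x ∧ x ≤ r) :
    (∀ x ∈ A, -1 - r * (2 - τ) ≤ x ∧ x ≤ 1 + r * (2 - τ)) ∧
      (∀ x ∈ B, -τ - r * (2 - τ) ≤ x ∧ x ≤ r * (2 - τ)) := by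
  have t2 := S.t2
  have l0 := S.l0
  have lo := S.lo
  have hi := S.hi
  have key : ∀ x y c : ℝ, y = (τ + 1) * x + c → ∀ p q, p ≤ y → y ≤ q →
      (2 - τ) * (p - c) ≤ x ∧ x ≤ (2 - τ) * (q - c) := by
    intro x y c h p q h1 h2
    have e := S.inv x
    constructor
    · calc (2 - τ) * (p - c) ≤ (2 - τ) * ((τ + 1) * x) :=
            mul_le_mul_of_nonneg_left (by linarith) l0.le
        _ = x := e.symm
    · calc x = (2 - τ) * ((τ + 1) * x) := e
        _ ≤ _ := mul_le_mul_of_nonneg_left (by linarith) l0.le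
  constructor
  · intro x hx
    rcases (S.ia x).1 hx with h | h | h
    · obtain ⟨u, v⟩ := key x _ 0 (by ring) _ _ (ha _ h).1 (ha _ h).2
      constructor <;> nlinarith
    · obtain ⟨u, v⟩ := key x _ τ (by ring) _ _ (ha _ h).1 (ha _ h).2
      constructor <;> nlinarith
    · obtain ⟨u, v⟩ := key x _ (-(τ + 1)) (by ring) _ _ (hb _ h).1 (hb _ h).2
      constructor <;> nlinarith
  · intro x hx
    rcases (S.ib x).1 hx with h | h
    · obtain ⟨u, v⟩ := key x _ (2 * τ) (by ring) _ _ (ha _ h).1 (ha _ h).2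
      constructor <;> nlinarith
    · obtain ⟨u, v⟩ := key x _ 0 (by ring) _ _ (hb _ h).1 (hb _ h).2
      constructor <;> nlinarith

lemma hull (S : RSys_s11 τ A B) : (∀ x ∈ A, -1 ≤ x ∧ x ≤ 1) ∧ (∀ x ∈ B, -τ ≤ x ∧ x ≤ 0) := by
  obtain ⟨R1, h1⟩ := S.ca.isBounded.exists_norm_le
  obtain ⟨R2, h2⟩ := S.cb.isBounded.exists_norm_le
  have lo := S.lo
  set R := max 0 (max R1 R2) with hR
  have hR1 : R1 ≤ R := (le_max_left _ _).trans (le_max_right _ _)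
  have hR2 : R2 ≤ R := (le_max_right _ _).trans (le_max_right _ _)
  have hR0 : 0 ≤ R := le_max_left _ _
  have main : ∀ n : ℕ, (∀ x ∈ A, -1 - R * (2 - τ) ^ n ≤ x ∧ x ≤ 1 + R * (2 - τ) ^ n) ∧
      (∀ x ∈ B, -τ - R * (2 - τ) ^ n ≤ x ∧ x ≤ R * (2 - τ) ^ n) := by
    intro n
    induction n with
    | zero =>
      constructor
      · intro x hx
        have := abs_le.1 (h1 x hx)
        constructor <;> simp <;> linarith
      · intro x hx
        have := abs_le.1 (h2 x hx)
        constructor <;> simp <;> linarith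
    | succ n ih =>
      have := S.hull_aux ih.1 ih.2
      simpa only [pow_succ, mul_assoc] using this
  refine ⟨fun x hx => ⟨?_, ?_⟩, fun x hx => ⟨?_, ?_⟩⟩
  · have : -x ≤ 1 := le_of_geom (R := R) S.l0.le S.l1 fun n => by have := ((main n).1 x hx).1; linarith
    linarith
  · exact le_of_geom (R := R) S.l0.le S.l1 fun n => ((main n).1 x hx).2
  · have : -x ≤ τ := le_of_geom (R := R) S.l0.le S.l1 fun n => by have := ((main n).2 x hx).1; linarith
    linarith
  · exact le_of_geom (R := R) S.l0.le S.l1 fun n => by have := ((main n).2 x hx).2; linarith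

/-- Points of a set that shrinks into itself or falls in a closed set. -/
lemma absorb (S : RSys_s11 τ A B) {P Q : Set ℝ} (hQ : IsClosed Q) (R : ℝ) (hb : ∀ x ∈ P, ∀ y ∈ Q, |x - y| ≤ R)
    (hQn : Q.Nonempty) (hQs : ∀ y ∈ Q, (2 - τ) * y ∈ Q)
    (hP : ∀ x ∈ P, x ∈ Q ∨ (τ + 1) * x ∈ P) : P ⊆ Q := by
  obtain ⟨y0, hy0⟩ := hQn
  have main : ∀ n : ℕ, ∀ x ∈ P, x ∈ Q ∨ ∃ y ∈ Q, |x - y| ≤ R * (2 - τ) ^ n := by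
    intro n
    induction n with
    | zero => intro x hx; exact Or.inr ⟨y0, hy0, by simpa using hb x hx y0 hy0⟩
    | succ n ih =>
      intro x hx
      rcases hP x hx with h | h
      · exact Or.inl h
      · right
        have e := S.inv x
        rcases ih _ h with h' | ⟨y, hy, hxy⟩
        · refine ⟨x, by rw [e]; exact hQs _ h', ?_⟩
          have h00 : 0 ≤ R := (abs_nonneg _).trans (hb x hx y0 hy0)
          have := pow_nonneg S.l0.le (n + 1)
          simp only [sub_self, abs_zero]; positivity
        · refine ⟨_, hQs y hy, ?_⟩
          have : x - (2 - τ) * y = (2 - τ) * ((τ + 1) * x - y) := by rw [mul_sub, ← e]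
          rw [this, abs_mul, abs_of_pos S.l0, pow_succ]
          nlinarith [S.l0]
  intro x hx
  by_contra hn
  have hR0 : Tendsto (fun n : ℕ => R * (2 - τ) ^ n) atTop (𝓝 (R * 0)) :=
    (tendsto_pow_atTop_nhds_zero_of_lt_one S.l0.le S.l1).const_mul R
  rw [mul_zero] at hR0
  have := (Metric.isOpen_iff.1 hQ.isOpen_compl) x hn
  obtain ⟨ε, hε, hsub⟩ := this
  obtain ⟨n, hn2⟩ := (hR0.eventually (gt_mem_nhds hε)).exists
  rcases main n x hx with h | ⟨y, hy, hxy⟩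
  · exact hn h
  · exact hsub (show y ∈ Metric.ball x ε by rw [Metric.mem_ball, dist_comm, Real.dist_eq]; linarith) hy

lemma zero_a (S : RSys_s11 τ A B) : (0 : ℝ) ∈ A := by
  have : ({0} : Set ℝ) ⊆ A := by
    refine S.absorb S.ca.isClosed 1 ?_ S.na ?_ ?_
    · intro x hx y hy
      have := S.hull.1 y hy
      rw [mem_singleton_iff.1 hx, abs_le]; constructor <;> linarith
    · intro y hy; exact (S.ia _).2 (Or.inl (by rwa [S.inv']))
    · intro x hx; right; simp [mem_singleton_iff.1 hx]
  exact this rfl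

lemma zero_b (S : RSys_s11 τ A B) : (0 : ℝ) ∈ B := by
  have : ({0} : Set ℝ) ⊆ B := by
    refine S.absorb S.cb.isClosed 2 ?_ S.nb ?_ ?_
    · intro x hx y hy
      have := S.hull.2 y hy
      have := S.hi
      rw [mem_singleton_iff.1 hx, abs_le]; constructor <;> linarith
    · intro y hy; exact (S.ib _).2 (Or.inr (by rwa [S.inv']))
    · intro x hx; right; simp [mem_singleton_iff.1 hx]
  exact this rfl

/-- Domain exchange. -/
lemma exchange (S : RSys_s11 τ A B) : ∀ x, (x + (τ - 1) ∈ A ∨ x - 1 ∈ B) ↔ x ∈ A ∪ B := by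
  have t2 := S.t2
  have lo := S.lo
  have hi := S.hi
  have hA := S.hull.1
  have hB := S.hull.2
  set D : Set ℝ := (fun x => x + (τ - 1)) ⁻¹' A ∪ (fun x => x - 1) ⁻¹' B with hD
  have hDc : IsClosed D :=
    (S.ca.isClosed.preimage (by fun_prop)).union (S.cb.isClosed.preimage (by fun_prop))
  have hWc : IsClosed (A ∪ B) := S.ca.isClosed.union S.cb.isClosed
  have e1 : ∀ x, (τ + 1) * (x + (τ - 1)) = (τ + 1) * x + τ := fun x => by linarith
  have e2 : ∀ x, (τ + 1) * (x - 1) = (τ + 1) * x - (τ + 1) := fun x => by ring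
  have bdD : ∀ x ∈ D, -2 ≤ x ∧ x ≤ 2 := by
    rintro x (h | h)
    · have := hA _ h; constructor <;> linarith
    · have := hB _ h; constructor <;> linarith
  have bdW : ∀ x ∈ A ∪ B, -2 ≤ x ∧ x ≤ 2 := by
    rintro x (h | h)
    · have := hA _ h; constructor <;> linarith
    · have := hB _ h; constructor <;> linarith
  have memD : ∀ x, x ∈ D ↔ x + (τ - 1) ∈ A ∨ x - 1 ∈ B := fun x => Iff.rfl
  have h1 : ∀ x, x ∈ D ↔ ((τ + 1) * x + τ ∈ A ∨ (τ + 1) * x + 2 * τ ∈ A ∨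
      (τ + 1) * x - (τ + 1) ∈ B) ∨ (τ + 1) * x ∈ D := by
    intro x
    rw [memD, memD, S.ia (x + (τ - 1)), S.ib (x - 1), e1, e2]
    have a1 : (τ + 1) * x + τ + τ = (τ + 1) * x + 2 * τ := by ring
    have a2 : (τ + 1) * x + τ - (τ + 1) = (τ + 1) * x - 1 := by ring
    have a3 : (τ + 1) * x - (τ + 1) + 2 * τ = (τ + 1) * x + (τ - 1) := by ring
    rw [a1, a2, a3]; tauto
  have h2 : ∀ x, x ∈ A ∪ B ↔ ((τ + 1) * x + τ ∈ A ∨ (τ + 1) * x + 2 * τ ∈ A ∨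
      (τ + 1) * x - (τ + 1) ∈ B) ∨ (τ + 1) * x ∈ A ∪ B := by
    intro x
    rw [mem_union, mem_union, S.ia x, S.ib x]; tauto
  intro x
  rw [← memD]
  constructor
  · intro hx
    refine S.absorb (P := D) hWc 4 ?_ (S.na.inl) ?_ ?_ hx
    · intro x hx y hy
      have := bdD x hx; have := bdW y hy
      rw [abs_le]; constructor <;> linarith
    · intro y hy; rw [h2, S.inv']; exact Or.inr hy
    · intro x hx; rw [h2]; rw [h1] at hx; tauto
  · intro hx
    refine S.absorb (P := A ∪ B) hDc 4 ?_ ?_ ?_ ?_ hx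
    · intro x hx y hy
      have := bdW x hx; have := bdD y hy
      rw [abs_le]; constructor <;> linarith
    · exact ⟨0 - (τ - 1), Or.inl (by simpa using S.zero_a)⟩
    · intro y hy; rw [h1, S.inv']; exact Or.inr hy
    · intro x hx; rw [h1]; rw [h2] at hx; tauto

open scoped Pointwise in
lemma cover (S : RSys_s11 τ A B) (x : ℝ) : ∃ k : ℤ, x - k * τ ∈ A ∪ B := by
  set U : Set ℝ := {x | ∃ k : ℤ, x - k * τ ∈ A ∪ B} with hU
  have hcl : IsClosed U := by
    have h : IsClosed ((AddSubgroup.zmultiples τ : Set ℝ) + (A ∪ B)) :=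
      IsClosed.add_right_of_isCompact AddSubgroup.isClosed_of_discrete (S.ca.union S.cb)
    convert h using 1
    ext y
    simp only [hU, mem_ofPred_eq, Set.mem_add, SetLike.mem_coe, AddSubgroup.mem_zmultiples_iff]
    constructor
    · rintro ⟨k, hk⟩
      exact ⟨k • τ, ⟨k, rfl⟩, _, hk, by simp⟩
    · rintro ⟨_, ⟨k, rfl⟩, w, hw, rfl⟩
      exact ⟨k, by simpa using hw⟩
  have hp : ∀ y, y ∈ U ↔ y + 1 ∈ U := by
    intro y
    constructor
    · rintro ⟨k, hk | hk⟩
      · exact ⟨k + 1, (S.exchange _).1 (Or.inl (by push_cast; convert hk using 1; ring))⟩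
      · exact ⟨k, (S.exchange _).1 (Or.inr (by convert hk using 1; ring))⟩
    · rintro ⟨k, hk⟩
      rcases (S.exchange _).2 hk with hk | hk
      · exact ⟨k - 1, Or.inl (by push_cast; convert hk using 1; ring)⟩
      · exact ⟨k, Or.inr (by convert hk using 1; ring)⟩
  have hq : ∀ y, y ∈ U ↔ y + τ ∈ U := by
    intro y
    constructor
    · rintro ⟨k, hk⟩
      exact ⟨k + 1, by push_cast; convert hk using 1; ring⟩
    · rintro ⟨k, hk⟩
      exact ⟨k - 1, by push_cast; convert hk using 1; ring⟩
  have hsub : (AddSubgroup.closure {τ, 1} : Set ℝ) ⊆ U := by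
    intro g hg
    have : ∀ y, y ∈ U ↔ y + g ∈ U := by
      refine AddSubgroup.closure_induction (p := fun g _ => ∀ y, y ∈ U ↔ y + g ∈ U) ?_ ?_ ?_ ?_ hg
      · rintro g (rfl | hg)
        · exact hq
        · rw [mem_singleton_iff.1 hg]; exact hp
      · simp
      · intro a b _ _ ha hb y
        rw [ha, hb, add_assoc]
      · intro a _ ha y
        rw [ha (y + -a)]; simp
    have h0 : (0 : ℝ) ∈ U := ⟨0, Or.inl (by simpa using S.zero_a)⟩
    simpa using (this 0).1 h0
  have hd : Dense (AddSubgroup.closure {τ, 1} : Set ℝ) := by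
    rw [dense_addSubgroupClosure_pair_iff, div_one]; exact S.irr
  have : closure (AddSubgroup.closure {τ, 1} : Set ℝ) ⊆ U := closure_minimal hsub hcl
  rw [hd.closure_eq] at this
  exact this (mem_univ x)

end RSys_s11

/-- The pairwise intersections of tiles. -/
def kX (A B : Set ℝ) : Set ℝ := {x | x ∈ A ∧ x ∈ B}
def kY (τ : ℝ) (A : Set ℝ) : Set ℝ := {x | x ∈ A ∧ x + τ ∈ A}
def kZ (τ : ℝ) (A B : Set ℝ) : Set ℝ := {x | x ∈ A ∧ x - τ ∈ B}
def kV (A : Set ℝ) : Set ℝ := {x | x ∈ A ∧ x + 1 ∈ A}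

lemma superadd {P1 P2 P3 T : Set ℝ} (h1 : volume P1 ≠ ⊤) (h2 : volume P2 ≠ ⊤) (h3 : volume P3 ≠ ⊤)
    (hT : MeasurableSet T)
    (h : volume.real P1 + volume.real P2 + volume.real P3 ≤ volume.real (P1 ∪ P2 ∪ P3)) :
    volume.real (P1 ∩ T) + volume.real (P2 ∩ T) + volume.real (P3 ∩ T)
      ≤ volume.real ((P1 ∪ P2 ∪ P3) ∩ T) := by
  have e1 := measureReal_inter_add_sdiff (μ := volume) (s := P1) (t := T) hT h1
  have e2 := measureReal_inter_add_sdiff (μ := volume) (s := P2) (t := T) hT h2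
  have e3 := measureReal_inter_add_sdiff (μ := volume) (s := P3) (t := T) hT h3
  have hu : volume (P1 ∪ P2 ∪ P3) ≠ ⊤ :=
    measure_union_ne_top (measure_union_ne_top h1 h2) h3
  have e := measureReal_inter_add_sdiff (μ := volume) (s := P1 ∪ P2 ∪ P3) (t := T) hT hu
  have hd : volume.real ((P1 ∪ P2 ∪ P3) \ T) ≤
      volume.real (P1 \ T) + volume.real (P2 \ T) + volume.real (P3 \ T) := by
    rw [union_sdiff_distrib, union_sdiff_distrib]
    exact (measureReal_union_le _ _).trans (add_le_add_left (measureReal_union_le _ _) _)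
  linarith

namespace RSys_s11

variable {τ : ℝ} {A B : Set ℝ}


lemma X_up (S : RSys_s11 τ A B) {x : ℝ} (h : x ∈ kX A B) :
    (τ + 1) * x ∈ kX A B ∨ (τ + 1) * x + τ ∈ kY τ A ∨ (τ + 1) * x + τ ∈ kZ τ A B := by
  have hA := S.hull.1
  have hB := S.hull.2
  have lo := S.lo
  have hi := S.hi
  rcases (S.ia x).1 h.1 with h1 | h1 | h1 <;> rcases (S.ib x).1 h.2 with h2 | h2
  · have := hA _ h1; have := hA _ h2; linarith
  · exact Or.inl ⟨h1, h2⟩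
  · exact Or.inr (Or.inl ⟨h1, by convert h2 using 1; ring⟩)
  · exact Or.inr (Or.inr ⟨h1, by convert h2 using 1; ring⟩)
  · have := hB _ h1; have := hA _ h2; linarith
  · have := hB _ h1; have := hB _ h2; linarith

lemma X_dn1 (S : RSys_s11 τ A B) {x : ℝ} (h : (τ + 1) * x ∈ kX A B) : x ∈ kX A B :=
  ⟨(S.ia x).2 (Or.inl h.1), (S.ib x).2 (Or.inr h.2)⟩

lemma X_dn2 (S : RSys_s11 τ A B) {x : ℝ} (h : (τ + 1) * x + τ ∈ kY τ A) : x ∈ kX A B :=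
  ⟨(S.ia x).2 (Or.inr (Or.inl h.1)), (S.ib x).2 (Or.inl (by convert h.2 using 1; ring))⟩

lemma X_dn3 (S : RSys_s11 τ A B) {x : ℝ} (h : (τ + 1) * x + τ ∈ kZ τ A B) : x ∈ kX A B :=
  ⟨(S.ia x).2 (Or.inr (Or.inl h.1)), (S.ib x).2 (Or.inr (by convert h.2 using 1; ring))⟩

lemma Y_up (S : RSys_s11 τ A B) {x : ℝ} (h : x ∈ kY τ A) : (τ + 1) * x + τ ∈ kX A B := by
  have hA := S.hull.1
  have hB := S.hull.2
  have lo := S.lo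
  have hi := S.hi
  have t2 := S.t2
  have e : (τ + 1) * (x + τ) = (τ + 1) * x + 2 * τ + 1 := by linarith
  rcases (S.ia x).1 h.1 with h1 | h1 | h1 <;> rcases (S.ia _).1 h.2 with h2 | h2 | h2 <;>
    rw [e] at h2
  · have := hA _ h1; have := hA _ h2; linarith
  · have := hA _ h1; have := hA _ h2; linarith
  · have := hA _ h1; have := hB _ h2; linarith
  · have := hA _ h1; have := hA _ h2; linarith
  · have := hA _ h1; have := hA _ h2; linarith
  · exact ⟨h1, by convert h2 using 1; ring⟩
  · have := hB _ h1; have := hA _ h2; linarith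
  · have := hB _ h1; have := hA _ h2; linarith
  · have := hB _ h1; have := hB _ h2; linarith

lemma Y_dn (S : RSys_s11 τ A B) {x : ℝ} (h : (τ + 1) * x + τ ∈ kX A B) : x ∈ kY τ A := by
  have t2 := S.t2
  exact ⟨(S.ia x).2 (Or.inr (Or.inl h.1)),
    (S.ia _).2 (Or.inr (Or.inr (by convert h.2 using 1; linarith)))⟩

lemma Z_up (S : RSys_s11 τ A B) {x : ℝ} (h : x ∈ kZ τ A B) :
    (τ + 1) * x - 1 ∈ kV A ∨ (τ + 1) * x - 1 ∈ kZ τ A B ∨ x = 1 := by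
  have hA := S.hull.1
  have hB := S.hull.2
  have lo := S.lo
  have hi := S.hi
  have t2 := S.t2
  have e : (τ + 1) * (x - τ) = (τ + 1) * x - 2 * τ - 1 := by linarith
  rcases (S.ia x).1 h.1 with h1 | h1 | h1 <;> rcases (S.ib _).1 h.2 with h2 | h2 <;>
    rw [e] at h2
  · exact Or.inl ⟨by convert h2 using 1; ring, by convert h1 using 1; ring⟩
  · have := hA _ h1; have := hB _ h2; linarith
  · have := hA _ h1; have := hA _ h2; linarith
  · have := hA _ h1; have := hB _ h2; linarith
  · exact Or.inr (Or.inl ⟨by convert h2 using 1; ring, by convert h1 using 1; ring⟩)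
  · have := hB _ h1; have := hB _ h2
    right; right
    nlinarith

lemma Z_dn1 (S : RSys_s11 τ A B) {x : ℝ} (h : (τ + 1) * x - 1 ∈ kV A) : x ∈ kZ τ A B := by
  have t2 := S.t2
  exact ⟨(S.ia x).2 (Or.inl (by convert h.2 using 1; ring)),
    (S.ib _).2 (Or.inl (by convert h.1 using 1; linarith))⟩

lemma Z_dn2 (S : RSys_s11 τ A B) {x : ℝ} (h : (τ + 1) * x - 1 ∈ kZ τ A B) : x ∈ kZ τ A B := by
  have t2 := S.t2
  exact ⟨(S.ia x).2 (Or.inr (Or.inr (by convert h.2 using 1; ring))),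
    (S.ib _).2 (Or.inl (by convert h.1 using 1; linarith))⟩

lemma V_up (S : RSys_s11 τ A B) {x : ℝ} (h : x ∈ kV A) :
    (τ + 1) * x ∈ kX A B ∨ (τ + 1) * x + τ ∈ kV A ∨ (τ + 1) * x + τ ∈ kZ τ A B := by
  have hA := S.hull.1
  have hB := S.hull.2
  have lo := S.lo
  have hi := S.hi
  have t2 := S.t2
  have e : (τ + 1) * (x + 1) = (τ + 1) * x + τ + 1 := by ring
  rcases (S.ia x).1 h.1 with h1 | h1 | h1 <;> rcases (S.ia _).1 h.2 with h2 | h2 | h2 <;>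
    rw [e] at h2
  · have := hA _ h1; have := hA _ h2; linarith
  · have := hA _ h1; have := hA _ h2; linarith
  · exact Or.inl ⟨h1, by convert h2 using 1; ring⟩
  · exact Or.inr (Or.inl ⟨h1, h2⟩)
  · have := hA _ h1; have := hA _ h2; linarith
  · exact Or.inr (Or.inr ⟨h1, by convert h2 using 1; ring⟩)
  · have := hB _ h1; have := hA _ h2; linarith
  · have := hB _ h1; have := hA _ h2; linarith
  · have := hB _ h1; have := hB _ h2; linarith

lemma V_dn1 (S : RSys_s11 τ A B) {x : ℝ} (h : (τ + 1) * x ∈ kX A B) : x ∈ kV A :=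
  ⟨(S.ia x).2 (Or.inl h.1), (S.ia _).2 (Or.inr (Or.inr (by convert h.2 using 1; ring)))⟩

lemma V_dn2 (S : RSys_s11 τ A B) {x : ℝ} (h : (τ + 1) * x + τ ∈ kV A) : x ∈ kV A :=
  ⟨(S.ia x).2 (Or.inr (Or.inl h.1)), (S.ia _).2 (Or.inl (by convert h.2 using 1; ring))⟩

lemma V_dn3 (S : RSys_s11 τ A B) {x : ℝ} (h : (τ + 1) * x + τ ∈ kZ τ A B) : x ∈ kV A :=
  ⟨(S.ia x).2 (Or.inr (Or.inl h.1)), (S.ia _).2 (Or.inr (Or.inr (by convert h.2 using 1; ring)))⟩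

lemma X_ne (S : RSys_s11 τ A B) : (kX A B).Nonempty := ⟨0, S.zero_a, S.zero_b⟩

lemma V_ne (S : RSys_s11 τ A B) : (kV A).Nonempty := ⟨0, S.V_dn1 (by simpa using ⟨S.zero_a, S.zero_b⟩)⟩

lemma Y_ne (S : RSys_s11 τ A B) : (kY τ A).Nonempty := by
  refine ⟨(2 - τ) * (0 - τ), S.Y_dn ?_⟩
  rw [S.inv']; simpa using ⟨S.zero_a, S.zero_b⟩

lemma Z_ne (S : RSys_s11 τ A B) : (kZ τ A B).Nonempty := by
  obtain ⟨v, hv⟩ := S.V_ne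
  refine ⟨(2 - τ) * (v + 1), S.Z_dn1 ?_⟩
  rw [S.inv']; simpa using hv

/-! Lebesgue measure. -/

lemma fin_a (S : RSys_s11 τ A B) : volume A ≠ ⊤ := S.ca.measure_lt_top.ne
lemma fin_b (S : RSys_s11 τ A B) : volume B ≠ ⊤ := S.cb.measure_lt_top.ne

lemma vol_pre' (S : RSys_s11 τ A B) (c : ℝ) (s : Set ℝ) :
    volume ((fun x => (τ + 1) * x + c) ⁻¹' s) = ENNReal.ofReal (2 - τ) * volume s := by
  have lo := S.lo
  have : (fun x => (τ + 1) * x + c) ⁻¹' s = (fun x => (τ + 1) * x) ⁻¹' ((fun x => x + c) ⁻¹' s) := rfl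
  rw [this, Real.volume_preimage_mul_left (by linarith), measure_preimage_add_right]
  congr 2
  rw [abs_of_pos (by rw [inv_pos]; linarith)]
  exact inv_eq_of_mul_eq_one_left S.lt

lemma vol_pre (S : RSys_s11 τ A B) (c : ℝ) (s : Set ℝ) :
    volume.real ((fun x => (τ + 1) * x + c) ⁻¹' s) = (2 - τ) * volume.real s := by
  rw [Measure.real, S.vol_pre', ENNReal.toReal_mul, ENNReal.toReal_ofReal S.l0.le, Measure.real]

lemma fin_pre (S : RSys_s11 τ A B) (c : ℝ) {s : Set ℝ} (h : volume s ≠ ⊤) :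
    volume ((fun x => (τ + 1) * x + c) ⁻¹' s) ≠ ⊤ := by
  rw [S.vol_pre']; exact ENNReal.mul_ne_top ENNReal.ofReal_ne_top h

lemma eq_a (S : RSys_s11 τ A B) : A = (fun x => (τ + 1) * x + 0) ⁻¹' A ∪ (fun x => (τ + 1) * x + τ) ⁻¹' A ∪
    (fun x => (τ + 1) * x + -(τ + 1)) ⁻¹' B := by
  ext x
  simp only [mem_union, mem_preimage, add_zero]
  rw [S.ia x, ← sub_eq_add_neg]; tauto

lemma eq_b (S : RSys_s11 τ A B) : B = (fun x => (τ + 1) * x + 2 * τ) ⁻¹' A ∪ (fun x => (τ + 1) * x + 0) ⁻¹' B ∪ ∅ := by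
  ext x
  simp only [mem_union, mem_preimage, add_zero, union_empty]
  rw [S.ib x]

lemma vol_eq (S : RSys_s11 τ A B) : volume.real A = (2 - τ) * (2 * volume.real A + volume.real B) ∧
    volume.real B = (2 - τ) * (volume.real A + volume.real B) := by
  have ha : volume.real A ≤ (2 - τ) * (2 * volume.real A + volume.real B) := by
    conv_lhs => rw [S.eq_a]
    refine (measureReal_union_le _ _).trans ((add_le_add_left (measureReal_union_le _ _) _).trans ?_)
    rw [S.vol_pre, S.vol_pre, S.vol_pre]; linarith
  have hb : volume.real B ≤ (2 - τ) * (volume.real A + volume.real B) := by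
    conv_lhs => rw [S.eq_b, union_empty]
    refine (measureReal_union_le _ _).trans ?_
    rw [S.vol_pre, S.vol_pre]; linarith
  have t2 := S.t2
  have lo := S.lo
  have key : τ * ((2 - τ) * (2 * volume.real A + volume.real B))
      + (2 - τ) * (volume.real A + volume.real B) = τ * volume.real A + volume.real B := by
    have : (τ * τ - τ - 1) = 0 := by linarith
    linear_combination (-2 * volume.real A - volume.real B) * this
  constructor <;> nlinarith

lemma sup_a (S : RSys_s11 τ A B) {T : Set ℝ} (hT : MeasurableSet T) :
    volume.real ((fun x => (τ + 1) * x + 0) ⁻¹' A ∩ T) +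
    volume.real ((fun x => (τ + 1) * x + τ) ⁻¹' A ∩ T) +
    volume.real ((fun x => (τ + 1) * x + -(τ + 1)) ⁻¹' B ∩ T) ≤ volume.real (A ∩ T) := by
  have := superadd (S.fin_pre 0 S.fin_a) (S.fin_pre τ S.fin_a) (S.fin_pre (-(τ + 1)) S.fin_b) hT (by
    rw [← S.eq_a, S.vol_pre, S.vol_pre, S.vol_pre]; linarith [S.vol_eq.1])
  rwa [← S.eq_a] at this

lemma sup_b (S : RSys_s11 τ A B) {T : Set ℝ} (hT : MeasurableSet T) :
    volume.real ((fun x => (τ + 1) * x + 2 * τ) ⁻¹' A ∩ T) +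
    volume.real ((fun x => (τ + 1) * x + 0) ⁻¹' B ∩ T) ≤ volume.real (B ∩ T) := by
  have := superadd (S.fin_pre (2 * τ) S.fin_a) (S.fin_pre 0 S.fin_b) (P3 := ∅) (by simp) hT (by
    rw [← S.eq_b, S.vol_pre, S.vol_pre]; simp; linarith [S.vol_eq.2])
  rw [← S.eq_b] at this
  simpa using this

lemma pos_ab (S : RSys_s11 τ A B) : 0 < volume.real A ∧ 0 < volume.real B := by
  have hab : 0 < volume.real A + volume.real B := by
    by_contra hn
    have h1 : volume.real A = 0 := by linarith [measureReal_nonneg (μ := volume) (s := A), measureReal_nonneg (μ := volume) (s := B)]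
    have h2 : volume.real B = 0 := by linarith [measureReal_nonneg (μ := volume) (s := A), measureReal_nonneg (μ := volume) (s := B)]
    rw [measureReal_eq_zero_iff S.fin_a] at h1
    rw [measureReal_eq_zero_iff S.fin_b] at h2
    have hW : volume (A ∪ B) = 0 := measure_union_null h1 h2
    have : (univ : Set ℝ) = ⋃ k : ℤ, (fun x => x + -(k * τ)) ⁻¹' (A ∪ B) := by
      ext x
      simpa [sub_eq_add_neg] using S.cover x
    have h0 : volume (univ : Set ℝ) = 0 := by
      rw [this, measure_iUnion_null_iff]
      intro k
      rw [measure_preimage_add_right, hW]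
    simp at h0
  obtain ⟨h1, h2⟩ := S.vol_eq
  have l0 := S.l0
  have a0 := measureReal_nonneg (μ := volume) (s := A)
  have b0 := measureReal_nonneg (μ := volume) (s := B)
  constructor
  · rw [h1]; apply mul_pos l0; linarith
  · rw [h2]; apply mul_pos l0; linarith

lemma null_Y (S : RSys_s11 τ A B) : volume (kY τ A) = 0 := by
  have hT : MeasurableSet ((fun x => (τ + 1) * x + τ) ⁻¹' A) :=
    (S.ca.isClosed.preimage (by fun_prop)).measurableSet
  have h := S.sup_a hT
  rw [inter_self] at h
  have hle : volume.real (A ∩ (fun x => (τ + 1) * x + τ) ⁻¹' A) ≤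
      volume.real ((fun x => (τ + 1) * x + τ) ⁻¹' A) :=
    measureReal_mono inter_subset_right (S.fin_pre τ S.fin_a)
  have h3 := measureReal_nonneg (μ := volume) (s := (fun x => (τ + 1) * x + -(τ + 1)) ⁻¹' B ∩ (fun x => (τ + 1) * x + τ) ⁻¹' A)
  have h0 : volume.real ((fun x => (τ + 1) * x + 0) ⁻¹' A ∩ (fun x => (τ + 1) * x + τ) ⁻¹' A) = 0 :=
    le_antisymm (by linarith) measureReal_nonneg
  have e : (fun x => (τ + 1) * x + 0) ⁻¹' A ∩ (fun x => (τ + 1) * x + τ) ⁻¹' A =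
      (fun x => (τ + 1) * x + 0) ⁻¹' (kY τ A) := by
    ext x; simp [kY]
  have hf : volume (kY τ A) ≠ ⊤ := measure_ne_top_of_subset (fun x hx => hx.1) S.fin_a
  rw [e, S.vol_pre] at h0
  rw [← measureReal_eq_zero_iff hf]
  exact (mul_eq_zero.1 h0).resolve_left S.l0.ne'

lemma null_X (S : RSys_s11 τ A B) : volume (kX A B) = 0 := by
  have h : volume ((fun x => (τ + 1) * x + τ) ⁻¹' (kX A B)) = 0 :=
    measure_mono_null (fun x hx => S.Y_dn hx) S.null_Y
  rw [S.vol_pre', mul_eq_zero, ENNReal.ofReal_eq_zero] at h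
  exact h.resolve_left (by have := S.l0; linarith)

lemma null_Z (S : RSys_s11 τ A B) : volume (kZ τ A B) = 0 := by
  have h : volume ((fun x => (τ + 1) * x + τ) ⁻¹' (kZ τ A B)) = 0 :=
    measure_mono_null (fun x hx => S.X_dn3 hx) S.null_X
  rw [S.vol_pre', mul_eq_zero, ENNReal.ofReal_eq_zero] at h
  exact h.resolve_left (by have := S.l0; linarith)

/-- Every neighbourhood of a point of a tile meets the tile in positive measure. -/
lemma dens (S : RSys_s11 τ A B) (n : ℕ) :
    (∀ x ∈ A, volume (A ∩ Ioo (x - 3 * (2 - τ) ^ n) (x + 3 * (2 - τ) ^ n)) ≠ 0) ∧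
    (∀ x ∈ B, volume (B ∩ Ioo (x - 3 * (2 - τ) ^ n) (x + 3 * (2 - τ) ^ n)) ≠ 0) := by
  have hA := S.hull.1
  have hB := S.hull.2
  have lo := S.lo
  have hi := S.hi
  have l0 := S.l0
  have step : ∀ (P Q : Set ℝ) (x c r : ℝ), (∀ y, (τ + 1) * y + c ∈ P → y ∈ Q) →
      volume (P ∩ Ioo ((τ + 1) * x + c - r) ((τ + 1) * x + c + r)) ≠ 0 →
      volume (Q ∩ Ioo (x - r * (2 - τ)) (x + r * (2 - τ))) ≠ 0 := by
    intro P Q x c r h h1 h2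
    have : volume ((fun y => (τ + 1) * y + c) ⁻¹'
        (P ∩ Ioo ((τ + 1) * x + c - r) ((τ + 1) * x + c + r))) = 0 := by
      refine measure_mono_null ?_ h2
      rintro y ⟨hy, hy1, hy2⟩
      have e1 := S.inv x
      have e2 := S.inv y
      have g1 : (2 - τ) * ((τ + 1) * x) - (2 - τ) * r < (2 - τ) * ((τ + 1) * y) := by
        rw [← mul_sub]; apply mul_lt_mul_of_pos_left _ l0; linarith
      have g2 : (2 - τ) * ((τ + 1) * y) < (2 - τ) * ((τ + 1) * x) + (2 - τ) * r := by
        rw [← mul_add]; apply mul_lt_mul_of_pos_left _ l0; linarith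
      rw [← e1, ← e2] at g1 g2
      exact ⟨h y hy, by linarith, by linarith⟩
    rw [S.vol_pre', mul_eq_zero, ENNReal.ofReal_eq_zero] at this
    exact h1 (this.resolve_left (by linarith))
  induction n with
  | zero =>
    obtain ⟨pa, pb⟩ := S.pos_ab
    constructor
    · intro x hx h0
      rw [inter_eq_left.2] at h0
      · simp [Measure.real, h0] at pa
      · intro y hy
        have := hA x hx; have := hA y hy
        constructor <;> simp <;> linarith
    · intro x hx h0
      rw [inter_eq_left.2] at h0
      · simp [Measure.real, h0] at pb
      · intro y hy
        have := hB x hx; have := hB y hy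
        constructor <;> simp <;> linarith
  | succ n ih =>
    simp only [pow_succ, ← mul_assoc]
    constructor
    · intro x hx
      rcases (S.ia x).1 hx with h | h | h
      · exact step A A x 0 _ (fun y hy => (S.ia y).2 (Or.inl (by simpa using hy)))
          (by simpa using ih.1 _ h)
      · exact step A A x τ _ (fun y hy => (S.ia y).2 (Or.inr (Or.inl hy))) (ih.1 _ h)
      · exact step B A x (-(τ + 1)) _ (fun y hy => (S.ia y).2 (Or.inr (Or.inr hy))) (ih.2 _ h)
    · intro x hx
      rcases (S.ib x).1 hx with h | h
      · exact step A B x (2 * τ) _ (fun y hy => (S.ib y).2 (Or.inl hy)) (ih.1 _ h)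
      · exact step B B x 0 _ (fun y hy => (S.ib y).2 (Or.inr (by simpa using hy)))
          (by simpa using ih.2 _ h)

lemma exists_small (S : RSys_s11 τ A B) {ε : ℝ} (hε : 0 < ε) : ∃ n : ℕ, 3 * (2 - τ) ^ n < ε := by
  obtain ⟨n, hn⟩ := exists_pow_lt_of_lt_one (div_pos hε (by norm_num : (0:ℝ) < 3)) S.l1
  exact ⟨n, by linarith [(lt_div_iff₀ (by norm_num : (0:ℝ) < 3)).1 hn]⟩

lemma dens_a (S : RSys_s11 τ A B) {x ε : ℝ} (hx : x ∈ A) (hε : 0 < ε) : volume (A ∩ Metric.ball x ε) ≠ 0 := by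
  obtain ⟨n, hn⟩ := S.exists_small hε
  intro h
  refine (S.dens n).1 x hx (measure_mono_null (inter_subset_inter_right _ ?_) h)
  rw [Real.ball_eq_Ioo]
  exact Ioo_subset_Ioo (by linarith) (by linarith)

lemma dens_b (S : RSys_s11 τ A B) {x ε : ℝ} (hx : x ∈ B) (hε : 0 < ε) : volume (B ∩ Metric.ball x ε) ≠ 0 := by
  obtain ⟨n, hn⟩ := S.exists_small hε
  intro h
  refine (S.dens n).2 x hx (measure_mono_null (inter_subset_inter_right _ ?_) h)
  rw [Real.ball_eq_Ioo]
  exact Ioo_subset_Ioo (by linarith) (by linarith)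

lemma X_sub_fa (S : RSys_s11 τ A B) : kX A B ⊆ frontier A := by
  rintro x ⟨h1, h2⟩
  rw [S.ca.isClosed.frontier_eq]
  refine ⟨h1, fun hi => ?_⟩
  obtain ⟨ε, hε, hs⟩ := Metric.mem_nhds_iff.1 (mem_interior_iff_mem_nhds.1 hi)
  exact S.dens_b h2 hε (measure_mono_null (t := kX A B) (fun y hy => ⟨hs hy.2, hy.1⟩) S.null_X)

lemma X_sub_fb (S : RSys_s11 τ A B) : kX A B ⊆ frontier B := by
  rintro x ⟨h1, h2⟩
  rw [S.cb.isClosed.frontier_eq]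
  refine ⟨h2, fun hi => ?_⟩
  obtain ⟨ε, hε, hs⟩ := Metric.mem_nhds_iff.1 (mem_interior_iff_mem_nhds.1 hi)
  exact S.dens_a h1 hε (measure_mono_null (t := kX A B) (fun y hy => ⟨hy.1, hs hy.2⟩) S.null_X)

lemma Y_sub_f (S : RSys_s11 τ A B) : kY τ A ⊆ frontier (A ∪ B) := by
  rintro x ⟨h1, h2⟩
  rw [(S.ca.isClosed.union S.cb.isClosed).frontier_eq]
  refine ⟨Or.inl h1, fun hi => ?_⟩
  obtain ⟨ε, hε, hs⟩ := Metric.mem_nhds_iff.1 (mem_interior_iff_mem_nhds.1 hi)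
  refine S.dens_a h2 hε (measure_mono_null (t := (fun y => y + -τ) ⁻¹' (kY τ A) ∪ kZ τ A B) ?_ ?_)
  · rintro y ⟨hy, hy2⟩
    have hb : y - τ ∈ Metric.ball x ε := by
      rw [Metric.mem_ball, Real.dist_eq] at hy2 ⊢
      rwa [show y - τ - x = y - (x + τ) by ring]
    rcases hs hb with h | h
    · left
      exact ⟨by simpa [sub_eq_add_neg] using h, by simpa using hy⟩
    · right
      exact ⟨hy, h⟩
  · exact measure_union_null (by rw [measure_preimage_add_right]; exact S.null_Y) S.null_Z

/-- The frontiers are contained in finitely many pairwise intersections. -/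
lemma front_sub (S : RSys_s11 τ A B) {F : Set ℝ} (hF : F = A ∨ F = B ∨ F = A ∪ B) :
    frontier F ⊆ kX A B ∪ kY τ A ∪ (fun y => y + -τ) ⁻¹' (kY τ A) ∪ kZ τ A B ∪
      (fun y => y + τ) ⁻¹' (kZ τ A B) ∪ {0, -τ} := by
  have hA := S.hull.1
  have hB := S.hull.2
  have lo := S.lo
  have hi := S.hi
  have hFc : IsClosed F := by
    rcases hF with rfl | rfl | rfl
    · exact S.ca.isClosed
    · exact S.cb.isClosed
    · exact S.ca.isClosed.union S.cb.isClosed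
  have hFs : F ⊆ A ∪ B := by
    rcases hF with rfl | rfl | rfl
    · exact subset_union_left
    · exact subset_union_right
    · exact subset_rfl
  intro x hx
  rw [frontier_eq_closure_inter_closure, hFc.closure_eq] at hx
  obtain ⟨hxF, hxc⟩ := hx
  have hxW := hFs hxF
  set W := A ∪ B with hW
  have hWc : IsClosed W := S.ca.isClosed.union S.cb.isClosed
  have hWb : ∀ y ∈ W, -τ ≤ y ∧ y ≤ 1 := by
    rintro y (h | h)
    · have := hA y h; constructor <;> linarith
    · have := hB y h; constructor <;> linarith
  -- the closed set catching the complement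
  have main : (x ∈ A ∧ x ∈ B) ∨ x - τ ∈ W ∨ x + τ ∈ W := by
    set C : Set ℝ := closure (W \ F) with hC
    have hsub : Fᶜ ⊆ closure (W \ F) ∪ (fun y => y - τ) ⁻¹' W ∪ (fun y => y + τ) ⁻¹' W ∪ Iic (1 - 2 * τ) ∪ Ici τ := by
      intro y hy
      obtain ⟨k, hk⟩ := S.cover y
      rcases lt_or_ge k (-1) with h | h
      · have h' : (k : ℝ) ≤ -2 := by exact_mod_cast (by omega : k ≤ -2)
        left; right
        have := hWb _ hk
        show y ≤ 1 - 2 * τ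
        nlinarith
      rcases lt_or_ge 1 k with h2 | h2
      · have h' : (2 : ℝ) ≤ k := by exact_mod_cast (by omega : 2 ≤ k)
        right
        have := hWb _ hk
        show τ ≤ y
        nlinarith
      have : k = -1 ∨ k = 0 ∨ k = 1 := by omega
      rcases this with rfl | rfl | rfl
      · left; left; right
        simpa [hW] using hk
      · left; left; left; left
        exact subset_closure ⟨by simpa [hW] using hk, hy⟩
      · left; left; left; right
        simpa [hW] using hk
    have hcl : IsClosed (closure (W \ F) ∪ (fun y => y - τ) ⁻¹' W ∪ (fun y => y + τ) ⁻¹' W ∪ Iic (1 - 2 * τ) ∪ Ici τ) :=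
      (((isClosed_closure.union (hWc.preimage (by fun_prop))).union
        (hWc.preimage (by fun_prop))).union isClosed_Iic).union isClosed_Ici
    rcases closure_minimal hsub hcl hxc with (((h | h) | h) | h) | h
    · left
      rcases hF with rfl | rfl | rfl
      · have : closure (W \ F) ⊆ B := closure_minimal (fun y hy => hy.1.resolve_left hy.2) S.cb.isClosed
        exact ⟨hxF, this h⟩
      · have : closure (W \ F) ⊆ A := closure_minimal (fun y hy => hy.1.resolve_right hy.2) S.ca.isClosed
        exact ⟨this h, hxF⟩
      · simp at h
    · exact Or.inr (Or.inl h)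
    · exact Or.inr (Or.inr h)
    · have := hWb _ hxW
      have : x ≤ 1 - 2 * τ := h
      linarith
    · have := hWb _ hxW
      have : τ ≤ x := h
      linarith
  simp only [mem_union, mem_preimage, mem_insert_iff, mem_singleton_iff]
  rcases main with h | h | h
  · exact Or.inl (Or.inl (Or.inl (Or.inl (Or.inl h))))
  · rcases hxW with h1 | h1 <;> rcases h with h2 | h2
    · left; left; left; right
      exact ⟨by simpa [sub_eq_add_neg] using h2, by simpa using h1⟩
    · left; left; right
      exact ⟨h1, h2⟩
    · have := hB _ h1; have := hA _ h2; linarith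
    · have := hB _ h1; have := hB _ h2
      right; left; linarith
  · rcases hxW with h1 | h1 <;> rcases h with h2 | h2
    · left; left; left; left; right
      exact ⟨h1, h2⟩
    · have := hA _ h1; have := hB _ h2; linarith
    · left; right
      exact ⟨h2, by simpa using h1⟩
    · have := hB _ h1; have := hB _ h2
      right; right; linarith

end RSys_s11

/-- `K` is covered by at most `N` closed intervals of radius `δ`. -/
def Cov (K : Set ℝ) (N δ : ℝ) : Prop :=
  ∃ F : Finset ℝ, (F.card : ℝ) ≤ N ∧ ∀ x ∈ K, ∃ c ∈ F, |x - c| ≤ δ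

lemma Cov.union {K L : Set ℝ} {N M δ : ℝ} (h : Cov K N δ) (h' : Cov L M δ) :
    Cov (K ∪ L) (N + M) δ := by
  classical
  obtain ⟨F, hF, h1⟩ := h
  obtain ⟨G, hG, h2⟩ := h'
  refine ⟨F ∪ G, ?_, ?_⟩
  · have : ((F ∪ G).card : ℝ) ≤ F.card + G.card := by exact_mod_cast Finset.card_union_le F G
    linarith
  · rintro x (hx | hx)
    · obtain ⟨c, hc, h⟩ := h1 x hx
      exact ⟨c, Finset.mem_union_left _ hc, h⟩
    · obtain ⟨c, hc, h⟩ := h2 x hx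
      exact ⟨c, Finset.mem_union_right _ hc, h⟩

lemma Cov.mono {K L : Set ℝ} {N M δ : ℝ} (h : Cov K N δ) (hs : L ⊆ K) (hN : N ≤ M) : Cov L M δ := by
  obtain ⟨F, hF, h1⟩ := h
  exact ⟨F, hF.trans hN, fun x hx => h1 x (hs hx)⟩

lemma Cov.single (x δ : ℝ) (hδ : 0 ≤ δ) : Cov {x} 1 δ :=
  ⟨{x}, by simp, fun y hy => ⟨x, by simp, by rw [mem_singleton_iff.1 hy]; simpa using hδ⟩⟩

lemma cov_finite {K : Set ℝ} {C s l d : ℝ} (hs : 0 < s) (hl0 : 0 < l) (hl1 : l < 1)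
    (hd : l ^ d * s = 1) (hd0 : 0 < d) (h : ∀ n : ℕ, Cov K (C * s ^ n) (3 * l ^ n)) :
    Measure.hausdorffMeasure d K ≠ ⊤ := by
  choose F hF hK using h
  have hdiam : ∀ n (c : ℝ), Metric.ediam (Metric.closedBall c (3 * l ^ n)) ≤ ENNReal.ofReal (6 * l ^ n) := by
    intro n c
    rw [Real.closedBall_eq_Icc, Real.ediam_Icc]
    apply ENNReal.ofReal_le_ofReal; linarith
  have key : Measure.hausdorffMeasure d K ≤ liminf (fun n : ℕ => ∑ i : F n,
      Metric.ediam (Metric.closedBall (i : ℝ) (3 * l ^ n)) ^ d) atTop := by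
    refine Measure.hausdorffMeasure_le_liminf_sum d K (fun n : ℕ => ENNReal.ofReal (6 * l ^ n)) ?_
      (fun n (i : F n) => Metric.closedBall (i : ℝ) (3 * l ^ n)) ?_ ?_
    · rw [← ENNReal.ofReal_zero, ← mul_zero (6 : ℝ)]
      exact ENNReal.tendsto_ofReal ((tendsto_pow_atTop_nhds_zero_of_lt_one hl0.le hl1).const_mul 6)
    · exact Eventually.of_forall fun n i => hdiam n i
    · refine Eventually.of_forall fun n x hx => ?_
      obtain ⟨c, hc, h⟩ := hK n x hx
      exact mem_iUnion.2 ⟨⟨c, hc⟩, by rwa [Metric.mem_closedBall, Real.dist_eq]⟩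
  have bound : ∀ n : ℕ, ∑ i : F n, Metric.ediam (Metric.closedBall (i : ℝ) (3 * l ^ n)) ^ d
      ≤ ENNReal.ofReal (C * 6 ^ d) := by
    intro n
    have hln : 0 < l ^ n := pow_pos hl0 n
    calc ∑ i : F n, Metric.ediam (Metric.closedBall (i : ℝ) (3 * l ^ n)) ^ d
        ≤ ∑ i : F n, ENNReal.ofReal ((6 * l ^ n) ^ d) := by
          refine Finset.sum_le_sum fun i _ => ?_
          rw [← ENNReal.ofReal_rpow_of_pos (by positivity)]
          exact ENNReal.rpow_le_rpow (hdiam n i) hd0.le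
      _ = ENNReal.ofReal ((F n).card * (6 * l ^ n) ^ d) := by
          rw [Finset.sum_const, nsmul_eq_mul, Finset.card_univ, Fintype.card_coe,
            ENNReal.ofReal_mul (by positivity), ENNReal.ofReal_natCast]
      _ ≤ ENNReal.ofReal (C * 6 ^ d) := by
          apply ENNReal.ofReal_le_ofReal
          have e : (6 * l ^ n) ^ d = 6 ^ d * (l ^ d) ^ n := by
            rw [Real.mul_rpow (by norm_num) hln.le, ← Real.rpow_natCast, ← Real.rpow_natCast,
              ← Real.rpow_mul hl0.le, ← Real.rpow_mul hl0.le, mul_comm d]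
          have h6 : 0 < (6 : ℝ) ^ d := by positivity
          calc (F n).card * (6 * l ^ n) ^ d ≤ (C * s ^ n) * (6 * l ^ n) ^ d :=
                mul_le_mul_of_nonneg_right (hF n) (by positivity)
            _ = C * 6 ^ d * (l ^ d * s) ^ n := by rw [e, mul_pow]; ring
            _ = C * 6 ^ d := by rw [hd, one_pow, mul_one]
  have h2 : liminf (fun n : ℕ => ∑ i : F n,
      Metric.ediam (Metric.closedBall (i : ℝ) (3 * l ^ n)) ^ d) atTop ≤ ENNReal.ofReal (C * 6 ^ d) := by
    refine (liminf_le_liminf (Eventually.of_forall bound)).trans ?_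
    simp
  exact ne_top_of_le_ne_top ENNReal.ofReal_ne_top (key.trans h2)

namespace RSys_s11

variable {τ : ℝ} {A B : Set ℝ}


lemma cov_step (S : RSys_s11 τ A B) {K : Set ℝ} {N δ : ℝ} (h : Cov K N δ) (c : ℝ) :
    Cov ((fun x => (τ + 1) * x + c) ⁻¹' K) N (δ * (2 - τ)) := by
  classical
  obtain ⟨F, hF, h1⟩ := h
  refine ⟨F.image (fun y => (2 - τ) * (y - c)), ?_, ?_⟩
  · have : ((F.image (fun y => (2 - τ) * (y - c))).card : ℝ) ≤ F.card := by
      exact_mod_cast Finset.card_image_le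
    linarith
  · intro x hx
    obtain ⟨y, hy, h⟩ := h1 _ hx
    refine ⟨_, Finset.mem_image_of_mem _ hy, ?_⟩
    have e : x - (2 - τ) * (y - c) = (2 - τ) * ((τ + 1) * x + c - y) := by
      have := S.inv x
      linear_combination this
    rw [e, abs_mul, abs_of_pos S.l0, mul_comm]
    exact mul_le_mul_of_nonneg_right h S.l0.le

lemma covs (S : RSys_s11 τ A B) {σ : ℝ} (hσ : σ * σ = 2) (hσ1 : 1.414 < σ) (n : ℕ) :
    Cov (kX A B) (3 * (1 + σ) ^ n) (3 * (2 - τ) ^ n) ∧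
    Cov (kY τ A) (3 * (σ - 1) * (1 + σ) ^ n) (3 * (2 - τ) ^ n) ∧
    Cov (kZ τ A B) (3 * (1 + σ) ^ n) (3 * (2 - τ) ^ n) ∧
    Cov (kV A) (3 * σ * (1 + σ) ^ n - 1) (3 * (2 - τ) ^ n) := by
  induction n with
  | zero =>
    have hA := S.hull.1
    have base : ∀ K : Set ℝ, K ⊆ A → Cov K 1 (3 * (2 - τ) ^ 0) := by
      intro K hK
      refine ⟨{0}, by simp, fun x hx => ⟨0, by simp, ?_⟩⟩
      have := hA x (hK hx)
      rw [abs_le]; constructor <;> simp <;> linarith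
    refine ⟨(base _ fun x hx => hx.1).mono subset_rfl ?_, (base _ fun x hx => hx.1).mono subset_rfl ?_,
      (base _ fun x hx => hx.1).mono subset_rfl ?_, (base _ fun x hx => hx.1).mono subset_rfl ?_⟩ <;>
      simp <;> linarith
  | succ n ih =>
    obtain ⟨hX, hY, hZ, hV⟩ := ih
    have l0 := S.l0
    have hp : 0 < (1 + σ) ^ n := by positivity
    have hl : 0 ≤ 3 * (2 - τ) ^ n * (2 - τ) := by positivity
    simp only [pow_succ, ← mul_assoc]
    refine ⟨?_, ?_, ?_, ?_⟩
    · refine (((S.cov_step hX 0).union (S.cov_step hY τ)).union (S.cov_step hZ τ)).mono ?_ ?_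
      · intro x hx
        rcases S.X_up hx with h | h | h
        · exact Or.inl (Or.inl (by simpa using h))
        · exact Or.inl (Or.inr h)
        · exact Or.inr h
      · apply le_of_eq; ring
    · refine (S.cov_step hX τ).mono (fun x hx => S.Y_up hx) ?_
      apply le_of_eq
      linear_combination (-3 * (1 + σ) ^ n) * hσ
    · refine (((S.cov_step hV (-1)).union (S.cov_step hZ (-1))).union (Cov.single 1 _ hl)).mono ?_ ?_
      · intro x hx
        rcases S.Z_up hx with h | h | h
        · exact Or.inl (Or.inl h)
        · exact Or.inl (Or.inr h)
        · exact Or.inr h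
      · apply le_of_eq; ring
    · refine (((S.cov_step hX 0).union (S.cov_step hV τ)).union (S.cov_step hZ τ)).mono ?_ ?_
      · intro x hx
        rcases S.V_up hx with h | h | h
        · exact Or.inl (Or.inl (by simpa using h))
        · exact Or.inl (Or.inr h)
        · exact Or.inr h
      · apply le_of_eq
        linear_combination (-3 * (1 + σ) ^ n) * hσ

lemma upper_s11 (S : RSys_s11 τ A B) {σ : ℝ} (hσ : σ * σ = 2) (hσ1 : 1.414 < σ) {d : NNReal} (hd0 : 0 < d)
    (hd : (2 - τ) ^ (d : ℝ) * (1 + σ) = 1) {F : Set ℝ} (hF : F = A ∨ F = B ∨ F = A ∪ B) :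
    dimH (frontier F) ≤ d := by
  have hs : 0 < 1 + σ := by linarith
  have hX : dimH (kX A B) ≤ d := dimH_le_of_hausdorffMeasure_ne_top
    (cov_finite hs S.l0 S.l1 hd (by exact_mod_cast hd0) fun n => (S.covs hσ hσ1 n).1)
  have hY : dimH (kY τ A) ≤ d := dimH_le_of_hausdorffMeasure_ne_top
    (cov_finite hs S.l0 S.l1 hd (by exact_mod_cast hd0) fun n => (S.covs hσ hσ1 n).2.1)
  have hZ : dimH (kZ τ A B) ≤ d := dimH_le_of_hausdorffMeasure_ne_top
    (cov_finite hs S.l0 S.l1 hd (by exact_mod_cast hd0) fun n => (S.covs hσ hσ1 n).2.2.1)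
  refine (dimH_mono (S.front_sub hF)).trans ?_
  have tr : ∀ (c : ℝ) (K : Set ℝ), dimH ((fun y => y + c) ⁻¹' K) = dimH K :=
    fun c K => (IsometryEquiv.addRight c).dimH_preimage K
  have hfin : dimH ({0, -τ} : Set ℝ) = 0 := dimH_finite (by simp)
  simp only [dimH_union, tr, hfin]
  simp [hX, hY, hZ]

end RSys_s11

open Classical in
/-- Indicator of the event that `K` meets `(p, q)`. -/
noncomputable def ind (K : Set ℝ) (p q : ℝ) : ℝ := if (K ∩ Ioo p q).Nonempty then 1 else 0

lemma ind_nonneg (K : Set ℝ) (p q : ℝ) : 0 ≤ ind K p q := by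
  unfold ind; split_ifs <;> norm_num

lemma ind_le_one (K : Set ℝ) (p q : ℝ) : ind K p q ≤ 1 := by
  unfold ind; split_ifs <;> norm_num

lemma ind_of_mem {K : Set ℝ} {p q x : ℝ} (h : x ∈ K) (hx : x ∈ Ioo p q) : ind K p q = 1 := by
  unfold ind; rw [if_pos ⟨x, h, hx⟩]

lemma ind_cases (K : Set ℝ) (p q : ℝ) : (∃ x ∈ K, x ∈ Ioo p q) ∨ ind K p q = 0 := by
  by_cases h : (K ∩ Ioo p q).Nonempty
  · obtain ⟨x, hx, hx2⟩ := h
    exact Or.inl ⟨x, hx, hx2⟩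
  · right; unfold ind; rw [if_neg h]

/-- Number of level `n` subtiles of `A` (`true`) or `B` (`false`) meeting `(p, q)`. -/
noncomputable def tcount (τ : ℝ) (A B : Set ℝ) : ℕ → Bool → ℝ → ℝ → ℝ
  | 0, true, p, q => ind A p q
  | 0, false, p, q => ind B p q
  | n + 1, true, p, q => tcount τ A B n true ((τ + 1) * p) ((τ + 1) * q)
      + tcount τ A B n true ((τ + 1) * p + τ) ((τ + 1) * q + τ)
      + tcount τ A B n false ((τ + 1) * p - (τ + 1)) ((τ + 1) * q - (τ + 1))
  | n + 1, false, p, q => tcount τ A B n true ((τ + 1) * p + 2 * τ) ((τ + 1) * q + 2 * τ)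
      + tcount τ A B n false ((τ + 1) * p) ((τ + 1) * q)

/-- States of the boundary graph. -/
inductive KS
  | X | Y | Z | V

/-- Sets attached to states. -/
def kset (τ : ℝ) (A B : Set ℝ) : KS → Set ℝ
  | .X => kX A B
  | .Y => kY τ A
  | .Z => kZ τ A B
  | .V => kV A

/-- Perron weights. -/
noncomputable def wt (σ : ℝ) : KS → ℝ
  | .X => 1
  | .Y => σ - 1
  | .Z => 1
  | .V => σ

/-- Weighted number of level `n` boundary pieces meeting `(p, q)`. -/
noncomputable def bcount (τ σ : ℝ) (A B : Set ℝ) : ℕ → KS → ℝ → ℝ → ℝ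
  | 0, i, p, q => wt σ i * ind (kset τ A B i) p q
  | n + 1, .X, p, q => bcount τ σ A B n .X ((τ + 1) * p) ((τ + 1) * q)
      + bcount τ σ A B n .Y ((τ + 1) * p + τ) ((τ + 1) * q + τ)
      + bcount τ σ A B n .Z ((τ + 1) * p + τ) ((τ + 1) * q + τ)
  | n + 1, .Y, p, q => bcount τ σ A B n .X ((τ + 1) * p + τ) ((τ + 1) * q + τ)
  | n + 1, .Z, p, q => bcount τ σ A B n .V ((τ + 1) * p - 1) ((τ + 1) * q - 1)
      + bcount τ σ A B n .Z ((τ + 1) * p - 1) ((τ + 1) * q - 1)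
  | n + 1, .V, p, q => bcount τ σ A B n .X ((τ + 1) * p) ((τ + 1) * q)
      + bcount τ σ A B n .V ((τ + 1) * p + τ) ((τ + 1) * q + τ)
      + bcount τ σ A B n .Z ((τ + 1) * p + τ) ((τ + 1) * q + τ)

lemma tcount_nonneg (τ : ℝ) (A B : Set ℝ) (n : ℕ) : ∀ i p q, 0 ≤ tcount τ A B n i p q := by
  induction n with
  | zero => rintro (_ | _) p q <;> exact ind_nonneg _ _ _
  | succ n ih =>
    rintro (_ | _) p q
    · exact add_nonneg (ih _ _ _) (ih _ _ _)
    · exact add_nonneg (add_nonneg (ih _ _ _) (ih _ _ _)) (ih _ _ _)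

namespace RSys_s11

variable {τ : ℝ} {A B : Set ℝ}


lemma vol_piece (S : RSys_s11 τ A B) (K : Set ℝ) (n : ℕ) (p q c : ℝ) :
    volume.real ((fun x => (τ + 1) * x + c) ⁻¹' K ∩
      Ioo (p - 3 * (2 - τ) ^ (n + 1)) (q + 3 * (2 - τ) ^ (n + 1))) =
    (2 - τ) * volume.real (K ∩ Ioo ((τ + 1) * p + c - 3 * (2 - τ) ^ n) ((τ + 1) * q + c + 3 * (2 - τ) ^ n)) := by
  rw [← S.vol_pre c]
  congr 1
  ext x
  have hL : 0 < τ + 1 := by have := S.lo; linarith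
  have e : (τ + 1) * (3 * (2 - τ) ^ (n + 1)) = 3 * (2 - τ) ^ n := by
    have := S.lt
    rw [pow_succ]
    linear_combination (3 * (2 - τ) ^ n) * this
  simp only [mem_inter_iff, mem_preimage, mem_Ioo]
  refine and_congr_right fun _ => and_congr ?_ ?_
  · rw [← mul_lt_mul_iff_right₀ hL, mul_sub, e]
    constructor <;> intro h <;> linarith
  · rw [← mul_lt_mul_iff_right₀ hL, mul_add, e]
    constructor <;> intro h <;> linarith

lemma tcount_vol (S : RSys_s11 τ A B) {v : ℝ} (hv0 : 0 ≤ v) (hva : v ≤ volume.real A) (hvb : v ≤ volume.real B) (n : ℕ) :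
    ∀ p q, tcount τ A B n true p q * (v * (2 - τ) ^ n) ≤
        volume.real (A ∩ Ioo (p - 3 * (2 - τ) ^ n) (q + 3 * (2 - τ) ^ n)) ∧
      tcount τ A B n false p q * (v * (2 - τ) ^ n) ≤
        volume.real (B ∩ Ioo (p - 3 * (2 - τ) ^ n) (q + 3 * (2 - τ) ^ n)) := by
  have hA := S.hull.1
  have hB := S.hull.2
  have lo := S.lo
  have hi := S.hi
  have l0 := S.l0
  induction n with
  | zero =>
    intro p q
    constructor
    · rcases ind_cases A p q with ⟨x, hx, hx1, hx2⟩ | h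
      · rw [inter_eq_left.2]
        · have := ind_le_one A p q
          simp only [tcount, pow_zero, mul_one]; nlinarith
        · intro y hy
          have := hA x hx; have := hA y hy
          constructor <;> simp <;> linarith
      · simp only [tcount, h, zero_mul]; exact measureReal_nonneg
    · rcases ind_cases B p q with ⟨x, hx, hx1, hx2⟩ | h
      · rw [inter_eq_left.2]
        · have := ind_le_one B p q
          simp only [tcount, pow_zero, mul_one]; nlinarith
        · intro y hy
          have := hB x hx; have := hB y hy
          constructor <;> simp <;> linarith
      · simp only [tcount, h, zero_mul]; exact measureReal_nonneg
  | succ n ih =>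
    intro p q
    constructor
    · have h := S.sup_a (T := Ioo (p - 3 * (2 - τ) ^ (n + 1)) (q + 3 * (2 - τ) ^ (n + 1))) measurableSet_Ioo
      rw [S.vol_piece, S.vol_piece, S.vol_piece] at h
      refine le_trans ?_ h
      have h1 := mul_le_mul_of_nonneg_left (ih ((τ + 1) * p + 0) ((τ + 1) * q + 0)).1 l0.le
      have h2 := mul_le_mul_of_nonneg_left (ih ((τ + 1) * p + τ) ((τ + 1) * q + τ)).1 l0.le
      have h3 := mul_le_mul_of_nonneg_left (ih ((τ + 1) * p + -(τ + 1)) ((τ + 1) * q + -(τ + 1))).2 l0.le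
      refine le_trans (le_of_eq ?_) (add_le_add (add_le_add h1 h2) h3)
      simp only [tcount, add_zero, ← sub_eq_add_neg]
      ring
    · have h := S.sup_b (T := Ioo (p - 3 * (2 - τ) ^ (n + 1)) (q + 3 * (2 - τ) ^ (n + 1))) measurableSet_Ioo
      rw [S.vol_piece, S.vol_piece] at h
      refine le_trans ?_ h
      have h1 := mul_le_mul_of_nonneg_left (ih ((τ + 1) * p + 2 * τ) ((τ + 1) * q + 2 * τ)).1 l0.le
      have h2 := mul_le_mul_of_nonneg_left (ih ((τ + 1) * p + 0) ((τ + 1) * q + 0)).2 l0.le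
      refine le_trans (le_of_eq ?_) (add_le_add h1 h2)
      simp only [tcount, add_zero]
      ring

lemma bcount_nonneg (S : RSys_s11 τ A B) {σ : ℝ} (hσ1 : 1.414 < σ) (n : ℕ) : ∀ i p q, 0 ≤ bcount τ σ A B n i p q := by
  induction n with
  | zero =>
    rintro i p q
    refine mul_nonneg ?_ (ind_nonneg _ _ _)
    cases i <;> simp only [wt] <;> linarith
  | succ n ih =>
    rintro (_ | _ | _ | _) p q
    · exact add_nonneg (add_nonneg (ih _ _ _) (ih _ _ _)) (ih _ _ _)
    · exact ih _ _ _
    · exact add_nonneg (ih _ _ _) (ih _ _ _)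
    · exact add_nonneg (add_nonneg (ih _ _ _) (ih _ _ _)) (ih _ _ _)

lemma bcount_le (S : RSys_s11 τ A B) {σ : ℝ} (hσ1 : 1.414 < σ) (hσ2 : σ < 1.415) (n : ℕ) : ∀ p q,
    bcount τ σ A B n .X p q ≤ 2 * (tcount τ A B n true p q * tcount τ A B n false p q) ∧
    bcount τ σ A B n .Y p q ≤ 2 * (tcount τ A B n true p q * tcount τ A B n true (p + τ) (q + τ)) ∧
    bcount τ σ A B n .Z p q ≤ 2 * (tcount τ A B n true p q * tcount τ A B n false (p - τ) (q - τ)) ∧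
    bcount τ σ A B n .V p q ≤ 2 * (tcount τ A B n true p q * tcount τ A B n true (p + 1) (q + 1)) := by
  have t2 := S.t2
  induction n with
  | zero =>
    intro p q
    have base : ∀ (K P Q : Set ℝ) (c w : ℝ), w ≤ 2 → (∀ x ∈ K, x ∈ P ∧ x + c ∈ Q) →
        w * ind K p q ≤ 2 * (ind P p q * ind Q (p + c) (q + c)) := by
      intro K P Q c w hw h
      rcases ind_cases K p q with ⟨x, hx, hx1, hx2⟩ | h0
      · rw [ind_of_mem hx ⟨hx1, hx2⟩, ind_of_mem (h x hx).1 ⟨hx1, hx2⟩,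
          ind_of_mem (h x hx).2 ⟨by linarith, by linarith⟩]
        linarith
      · rw [h0, mul_zero]
        exact mul_nonneg (by norm_num) (mul_nonneg (ind_nonneg _ _ _) (ind_nonneg _ _ _))
    refine ⟨?_, ?_, ?_, ?_⟩
    · have hb := base (kX A B) A B 0 1 (by norm_num) (fun x hx => ⟨hx.1, by simpa using hx.2⟩)
      rw [add_zero, add_zero] at hb
      exact hb
    · exact base (kY τ A) A A τ (σ - 1) (by linarith) (fun x hx => hx)
    · exact base (kZ τ A B) A B (-τ) 1 (by linarith) (fun x hx => hx)
    · exact base (kV A) A A 1 σ (by linarith) (fun x hx => hx)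
  | succ n ih =>
    intro p q
    have nn := tcount_nonneg τ A B n
    refine ⟨?_, ?_, ?_, ?_⟩
    · simp only [bcount, tcount]
      have i1 := (ih ((τ + 1) * p) ((τ + 1) * q)).1
      have i2 := (ih ((τ + 1) * p + τ) ((τ + 1) * q + τ)).2.1
      have i3 := (ih ((τ + 1) * p + τ) ((τ + 1) * q + τ)).2.2.1
      rw [add_sub_cancel_right, add_sub_cancel_right] at i3
      rw [show (τ + 1) * p + τ + τ = (τ + 1) * p + 2 * τ by ring,
        show (τ + 1) * q + τ + τ = (τ + 1) * q + 2 * τ by ring] at i2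
      have a1 := nn true ((τ + 1) * p) ((τ + 1) * q)
      have a2 := nn true ((τ + 1) * p + τ) ((τ + 1) * q + τ)
      have a3 := nn false ((τ + 1) * p - (τ + 1)) ((τ + 1) * q - (τ + 1))
      have b1 := nn true ((τ + 1) * p + 2 * τ) ((τ + 1) * q + 2 * τ)
      have b2 := nn false ((τ + 1) * p) ((τ + 1) * q)
      linarith [mul_nonneg a1 b1, mul_nonneg a3 b1, mul_nonneg a3 b2]
    · simp only [bcount, tcount]
      have i1 := (ih ((τ + 1) * p + τ) ((τ + 1) * q + τ)).1
      have e : ∀ x, (τ + 1) * (x + τ) - (τ + 1) = (τ + 1) * x + τ := fun x => by linarith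
      rw [e, e]
      have a1 := nn true ((τ + 1) * p) ((τ + 1) * q)
      have a2 := nn true ((τ + 1) * p + τ) ((τ + 1) * q + τ)
      have a3 := nn false ((τ + 1) * p - (τ + 1)) ((τ + 1) * q - (τ + 1))
      have b1 := nn true ((τ + 1) * (p + τ)) ((τ + 1) * (q + τ))
      have b2 := nn true ((τ + 1) * (p + τ) + τ) ((τ + 1) * (q + τ) + τ)
      have b3 := nn false ((τ + 1) * p + τ) ((τ + 1) * q + τ)
      linarith [mul_nonneg a1 b1, mul_nonneg a1 b2, mul_nonneg a1 b3, mul_nonneg a2 b1,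
        mul_nonneg a2 b2, mul_nonneg a3 b1, mul_nonneg a3 b2, mul_nonneg a3 b3]
    · simp only [bcount, tcount]
      have i1 := (ih ((τ + 1) * p - 1) ((τ + 1) * q - 1)).2.2.2
      have i2 := (ih ((τ + 1) * p - 1) ((τ + 1) * q - 1)).2.2.1
      have e : ∀ x, (τ + 1) * (x - τ) + 2 * τ = (τ + 1) * x - 1 := fun x => by linarith
      rw [e, e]
      rw [sub_add_cancel, sub_add_cancel] at i1
      have e2 : ∀ x, (τ + 1) * x - 1 - τ = (τ + 1) * x - (τ + 1) := fun x => by ring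
      rw [e2, e2] at i2
      have a1 := nn true ((τ + 1) * p) ((τ + 1) * q)
      have a2 := nn true ((τ + 1) * p + τ) ((τ + 1) * q + τ)
      have a3 := nn false ((τ + 1) * p - (τ + 1)) ((τ + 1) * q - (τ + 1))
      have b1 := nn true ((τ + 1) * p - 1) ((τ + 1) * q - 1)
      have b2 := nn false ((τ + 1) * (p - τ)) ((τ + 1) * (q - τ))
      linarith [mul_nonneg a1 b2, mul_nonneg a2 b1, mul_nonneg a2 b2, mul_nonneg a3 b2]
    · simp only [bcount, tcount]
      have i1 := (ih ((τ + 1) * p) ((τ + 1) * q)).1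
      have i2 := (ih ((τ + 1) * p + τ) ((τ + 1) * q + τ)).2.2.2
      have i3 := (ih ((τ + 1) * p + τ) ((τ + 1) * q + τ)).2.2.1
      rw [add_sub_cancel_right, add_sub_cancel_right] at i3
      have e1 : ∀ x, (τ + 1) * (x + 1) - (τ + 1) = (τ + 1) * x := fun x => by ring
      have e2 : ∀ x, (τ + 1) * x + τ + 1 = (τ + 1) * (x + 1) := fun x => by ring
      rw [e1, e1]
      rw [e2, e2] at i2
      have a1 := nn true ((τ + 1) * p) ((τ + 1) * q)
      have a2 := nn true ((τ + 1) * p + τ) ((τ + 1) * q + τ)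
      have a3 := nn false ((τ + 1) * p - (τ + 1)) ((τ + 1) * q - (τ + 1))
      have b1 := nn true ((τ + 1) * (p + 1)) ((τ + 1) * (q + 1))
      have b2 := nn true ((τ + 1) * (p + 1) + τ) ((τ + 1) * (q + 1) + τ)
      have b3 := nn false ((τ + 1) * p) ((τ + 1) * q)
      linarith [mul_nonneg a1 b1, mul_nonneg a1 b2, mul_nonneg a2 b2, mul_nonneg a3 b1,
        mul_nonneg a3 b2, mul_nonneg a3 b3]

lemma scale_mem (S : RSys_s11 τ A B) {x p q c : ℝ} (h : (τ + 1) * x + c ∈ Ioo ((τ + 1) * p + c) ((τ + 1) * q + c)) :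
    x ∈ Ioo p q := by
  have hL : 0 < τ + 1 := by have := S.lo; linarith
  exact ⟨by nlinarith [h.1], by nlinarith [h.2]⟩

lemma mem_scale (S : RSys_s11 τ A B) {x p q : ℝ} (c : ℝ) (h : x ∈ Ioo p q) :
    (τ + 1) * x + c ∈ Ioo ((τ + 1) * p + c) ((τ + 1) * q + c) := by
  have hL : 0 < τ + 1 := by have := S.lo; linarith
  exact ⟨by nlinarith [h.1], by nlinarith [h.2]⟩

lemma ind_step (S : RSys_s11 τ A B) {K L : Set ℝ} {c : ℝ} (h : ∀ x, (τ + 1) * x + c ∈ K → x ∈ L) (p q : ℝ) :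
    ind K ((τ + 1) * p + c) ((τ + 1) * q + c) ≤ ind L p q := by
  rcases ind_cases K ((τ + 1) * p + c) ((τ + 1) * q + c) with ⟨y, hy, hy2⟩ | h0
  · have e : (τ + 1) * ((2 - τ) * (y - c)) + c = y := by rw [S.inv']; ring
    rw [← e] at hy hy2
    rw [ind_of_mem (h _ hy) (S.scale_mem hy2)]
    exact ind_le_one _ _ _
  · rw [h0]; exact ind_nonneg _ _ _

lemma bcount_succ_le (S : RSys_s11 τ A B) {σ : ℝ} (hσ : σ * σ = 2) (hσ1 : 1.414 < σ) (n : ℕ) : ∀ i p q,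
    bcount τ σ A B (n + 1) i p q ≤ (1 + σ) * bcount τ σ A B n i p q := by
  induction n with
  | zero =>
    rintro (_ | _ | _ | _) p q <;> simp only [bcount, wt, kset]
    · have h1 := S.ind_step (K := kX A B) (L := kX A B) (c := 0) (fun x hx => S.X_dn1 (by simpa using hx)) p q
      have h2 := S.ind_step (fun x hx => S.X_dn2 hx) p q
      have h3 := S.ind_step (fun x hx => S.X_dn3 hx) p q
      simp only [add_zero] at h1
      nlinarith
    · have h1 := S.ind_step (fun x hx => S.Y_dn hx) p q
      have : (1 + σ) * ((σ - 1) * ind (kY τ A) p q) = ind (kY τ A) p q := by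
        linear_combination (ind (kY τ A) p q) * hσ
      linarith
    · have h1 := S.ind_step (c := -1) (fun x hx => S.Z_dn1 hx) p q
      have h2 := S.ind_step (c := -1) (fun x hx => S.Z_dn2 hx) p q
      simp only [← sub_eq_add_neg] at h1 h2
      nlinarith
    · have h1 := S.ind_step (K := kX A B) (L := kV A) (c := 0) (fun x hx => S.V_dn1 (by simpa using hx)) p q
      have h2 := S.ind_step (fun x hx => S.V_dn2 hx) p q
      have h3 := S.ind_step (fun x hx => S.V_dn3 hx) p q
      simp only [add_zero] at h1
      have : (1 + σ) * (σ * ind (kV A) p q) = (σ + 2) * ind (kV A) p q := by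
        linear_combination (ind (kV A) p q) * hσ
      nlinarith
  | succ n ih =>
    rintro (_ | _ | _ | _) p q <;> rw [bcount]
    · conv_rhs => rw [bcount]
      linarith [ih .X ((τ + 1) * p) ((τ + 1) * q), ih .Y ((τ + 1) * p + τ) ((τ + 1) * q + τ),
        ih .Z ((τ + 1) * p + τ) ((τ + 1) * q + τ)]
    · conv_rhs => rw [bcount]
      exact ih _ _ _
    · conv_rhs => rw [bcount]
      linarith [ih .V ((τ + 1) * p - 1) ((τ + 1) * q - 1), ih .Z ((τ + 1) * p - 1) ((τ + 1) * q - 1)]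
    · conv_rhs => rw [bcount]
      linarith [ih .X ((τ + 1) * p) ((τ + 1) * q), ih .V ((τ + 1) * p + τ) ((τ + 1) * q + τ),
        ih .Z ((τ + 1) * p + τ) ((τ + 1) * q + τ)]

lemma bcount_add_le (S : RSys_s11 τ A B) {σ : ℝ} (hσ : σ * σ = 2) (hσ1 : 1.414 < σ) (n k : ℕ) (i : KS) (p q : ℝ) :
    bcount τ σ A B (n + k) i p q ≤ (1 + σ) ^ k * bcount τ σ A B n i p q := by
  induction k with
  | zero => simp
  | succ k ih =>
    calc bcount τ σ A B (n + k + 1) i p q ≤ (1 + σ) * bcount τ σ A B (n + k) i p q :=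
          S.bcount_succ_le hσ hσ1 _ _ _ _
      _ ≤ (1 + σ) * ((1 + σ) ^ k * bcount τ σ A B n i p q) :=
          mul_le_mul_of_nonneg_left ih (by linarith)
      _ = _ := by ring

lemma bcount_cover (S : RSys_s11 τ A B) {σ : ℝ} (hσ : σ * σ = 2) (hσ1 : 1.414 < σ) (F : Finset ℕ) (n : ℕ) :
    ∀ (i : KS) (p q : ℕ → ℝ), (∀ x ∈ kset τ A B i, ∃ j ∈ F, x ∈ Ioo (p j) (q j)) →
      wt σ i * (1 + σ) ^ n ≤ ∑ j ∈ F, bcount τ σ A B n i (p j) (q j) := by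
  induction n with
  | zero =>
    intro i p q h
    have hne : (kset τ A B i).Nonempty := by
      cases i
      · exact S.X_ne
      · exact S.Y_ne
      · exact S.Z_ne
      · exact S.V_ne
    obtain ⟨x, hx⟩ := hne
    obtain ⟨j, hj, hxj⟩ := h x hx
    have h1 := Finset.single_le_sum (f := fun j => bcount τ σ A B 0 i (p j) (q j))
      (fun j _ => S.bcount_nonneg hσ1 0 i (p j) (q j)) hj
    refine le_trans (le_of_eq ?_) h1
    simp only [bcount, pow_zero]
    rw [ind_of_mem hx hxj]
  | succ n ih =>
    have push : ∀ (i k : KS) (c : ℝ) (p q : ℕ → ℝ),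
        (∀ x ∈ kset τ A B i, ∃ j ∈ F, x ∈ Ioo (p j) (q j)) →
        (∀ x, (τ + 1) * x + c ∈ kset τ A B k → x ∈ kset τ A B i) →
        wt σ k * (1 + σ) ^ n ≤ ∑ j ∈ F, bcount τ σ A B n k ((τ + 1) * p j + c) ((τ + 1) * q j + c) := by
      intro i k c p q h hk
      refine ih k (fun j => (τ + 1) * p j + c) (fun j => (τ + 1) * q j + c) ?_
      intro y hy
      have e : (τ + 1) * ((2 - τ) * (y - c)) + c = y := by rw [S.inv']; ring
      rw [← e] at hy
      obtain ⟨j, hj, hm⟩ := h _ (hk _ hy)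
      refine ⟨j, hj, ?_⟩
      have := S.mem_scale c hm
      rwa [e] at this
    rintro (_ | _ | _ | _) p q h <;> simp only [bcount, Finset.sum_add_distrib]
    · have h1 := push .X .X 0 p q h (fun x hx => S.X_dn1 (by rw [add_zero] at hx; exact hx))
      have h2 := push .X .Y τ p q h (fun x hx => S.X_dn2 hx)
      have h3 := push .X .Z τ p q h (fun x hx => S.X_dn3 hx)
      simp only [add_zero, wt] at h1 h2 h3 ⊢
      rw [pow_succ]; linarith
    · have h1 := push .Y .X τ p q h (fun x hx => S.Y_dn hx)
      simp only [wt] at h1 ⊢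
      have : (σ - 1) * (1 + σ) ^ (n + 1) = 1 * (1 + σ) ^ n := by
        rw [pow_succ]; linear_combination ((1 + σ) ^ n) * hσ
      rw [this]; exact h1
    · have h1 := push .Z .V (-1) p q h (fun x hx => S.Z_dn1 hx)
      have h2 := push .Z .Z (-1) p q h (fun x hx => S.Z_dn2 hx)
      simp only [← sub_eq_add_neg, wt] at h1 h2 ⊢
      rw [pow_succ]; linarith
    · have h1 := push .V .X 0 p q h (fun x hx => S.V_dn1 (by rw [add_zero] at hx; exact hx))
      have h2 := push .V .V τ p q h (fun x hx => S.V_dn2 hx)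
      have h3 := push .V .Z τ p q h (fun x hx => S.V_dn3 hx)
      simp only [add_zero, wt] at h1 h2 h3 ⊢
      have : σ * (1 + σ) ^ (n + 1) = (σ + 2) * (1 + σ) ^ n := by
        rw [pow_succ]; linear_combination ((1 + σ) ^ n) * hσ
      rw [this]; linarith

lemma holder (S : RSys_s11 τ A B) {σ : ℝ} (hσ : σ * σ = 2) (hσ1 : 1.414 < σ) (hσ2 : σ < 1.415) {d : ℝ} (hd0 : 0 < d)
    (hd : (2 - τ) ^ d * (1 + σ) = 1) :
    ∃ C : ℝ, 0 < C ∧ ∀ p q, p < q → ∃ n0 : ℕ, ∀ N, n0 ≤ N →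
      bcount τ σ A B N .X p q ≤ C * (1 + σ) ^ N * (q - p) ^ d := by
  obtain ⟨pa, pb⟩ := S.pos_ab
  have l0 := S.l0
  set v := min (volume.real A) (volume.real B) with hv
  have v0 : 0 < v := lt_min pa pb
  have s0 : 0 < 1 + σ := by linarith
  set C := max 1 (2 * (7 / v * (7 / v)) * (1 + σ)) with hC
  have C1 : 1 ≤ C := le_max_left _ _
  have C2 : 2 * (7 / v * (7 / v)) * (1 + σ) ≤ C := le_max_right _ _
  refine ⟨C, by linarith, fun p q hpq => ?_⟩
  rcases lt_or_ge 1 (q - p) with h | h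
  · refine ⟨0, fun N _ => ?_⟩
    have h1 := S.bcount_add_le hσ hσ1 0 N .X p q
    have h2 : bcount τ σ A B 0 .X p q ≤ 1 := by
      simp only [bcount, wt, one_mul]; exact ind_le_one _ _ _
    have h3 : 1 ≤ (q - p) ^ d := Real.one_le_rpow h.le hd0.le
    rw [zero_add] at h1
    have sN : 0 < (1 + σ) ^ N := pow_pos s0 N
    calc bcount τ σ A B N .X p q ≤ (1 + σ) ^ N * bcount τ σ A B 0 .X p q := h1
      _ ≤ (1 + σ) ^ N * 1 := mul_le_mul_of_nonneg_left h2 sN.le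
      _ = 1 * (1 + σ) ^ N * 1 := by ring
      _ ≤ C * (1 + σ) ^ N * (q - p) ^ d := by gcongr
  · obtain ⟨n, hn1, hn2⟩ := exists_nat_pow_near_of_lt_one (sub_pos.2 hpq) h l0 S.l1
    refine ⟨n, fun N hN => ?_⟩
    obtain ⟨k, rfl⟩ := Nat.exists_eq_add_of_le hN
    have ln : 0 < (2 - τ) ^ n := pow_pos l0 n
    have tb : ∀ (K : Set ℝ) (t : ℝ), t * (v * (2 - τ) ^ n) ≤
        volume.real (K ∩ Ioo (p - 3 * (2 - τ) ^ n) (q + 3 * (2 - τ) ^ n)) → t ≤ 7 / v := by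
      intro K t ht
      have h1 : volume.real (K ∩ Ioo (p - 3 * (2 - τ) ^ n) (q + 3 * (2 - τ) ^ n)) ≤
          7 * (2 - τ) ^ n := by
        refine (measureReal_mono inter_subset_right (by simp)).trans ?_
        rw [Real.volume_real_Ioo_of_le (by linarith)]; linarith
      rw [le_div_iff₀ v0]
      have : t * v * (2 - τ) ^ n ≤ 7 * (2 - τ) ^ n := by linarith
      exact le_of_mul_le_mul_right this ln
    obtain ⟨g1, g2⟩ := S.tcount_vol v0.le (min_le_left _ _) (min_le_right _ _) n p q
    have k1 := tb _ _ g1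
    have k2 := tb _ _ g2
    have b1 : bcount τ σ A B n .X p q ≤ 2 * (7 / v * (7 / v)) := by
      refine ((S.bcount_le hσ1 hσ2 n p q).1).trans ?_
      have := tcount_nonneg τ A B n false p q
      have := tcount_nonneg τ A B n true p q
      gcongr
    have b2 := S.bcount_add_le hσ hσ1 n k .X p q
    have e : ((2 - τ) ^ (n + 1)) ^ d * (1 + σ) ^ (n + 1) = 1 := by
      rw [← Real.rpow_natCast, ← Real.rpow_mul l0.le, mul_comm _ d, Real.rpow_mul l0.le,
        Real.rpow_natCast, ← mul_pow, hd, one_pow]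
    have b3 : 1 ≤ (q - p) ^ d * (1 + σ) ^ (n + 1) := by
      calc (1 : ℝ) = ((2 - τ) ^ (n + 1)) ^ d * (1 + σ) ^ (n + 1) := e.symm
        _ ≤ _ := mul_le_mul_of_nonneg_right
          (Real.rpow_le_rpow (by positivity) hn1.le hd0.le) (by positivity)
    calc bcount τ σ A B (n + k) .X p q ≤ (1 + σ) ^ k * bcount τ σ A B n .X p q := b2
      _ ≤ (1 + σ) ^ k * (2 * (7 / v * (7 / v))) * 1 := by rw [mul_one]; gcongr
      _ ≤ (1 + σ) ^ k * (2 * (7 / v * (7 / v))) * ((q - p) ^ d * (1 + σ) ^ (n + 1)) := by gcongr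
      _ = (2 * (7 / v * (7 / v)) * (1 + σ)) * (1 + σ) ^ (n + k) * (q - p) ^ d := by
          rw [pow_succ, pow_add]; ring
      _ ≤ C * (1 + σ) ^ (n + k) * (q - p) ^ d := by
          have : 0 ≤ (q - p) ^ d := Real.rpow_nonneg (by linarith) _
          gcongr

lemma lower_s11 (S : RSys_s11 τ A B) {σ : ℝ} (hσ : σ * σ = 2) (hσ1 : 1.414 < σ) (hσ2 : σ < 1.415) {d : ℝ} (hd0 : 0 < d)
    (hd : (2 - τ) ^ d * (1 + σ) = 1) : Measure.hausdorffMeasure d (kX A B) ≠ 0 := by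
  obtain ⟨C, hC, hol⟩ := S.holder hσ hσ1 hσ2 hd0 hd
  intro h0
  have s0 : 0 < 1 + σ := by linarith
  have h4 : 0 < (4 : ℝ) ^ d := by positivity
  set ε : ℝ := 1 / (C * 4 ^ d * 6) with hε
  have ε0 : 0 < ε := by positivity
  rw [Measure.hausdorffMeasure_apply] at h0
  have h1 : (⨅ (t : ℕ → Set ℝ) (_ : kX A B ⊆ ⋃ n, t n) (_ : ∀ n, Metric.ediam (t n) ≤ 1),
      ∑' n, ⨆ _ : (t n).Nonempty, Metric.ediam (t n) ^ d) < ENNReal.ofReal ε := by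
    refine lt_of_le_of_lt ?_ (ENNReal.ofReal_pos.2 ε0)
    rw [← h0]
    exact le_iSup₂_of_le (1 : ENNReal) one_pos le_rfl
  simp only [iInf_lt_iff] at h1
  obtain ⟨t, hcov, hdm, hsum⟩ := h1
  have hterm : ∀ n, Metric.ediam (t n) ^ d ≤ ⨆ _ : (t n).Nonempty, Metric.ediam (t n) ^ d := by
    intro n
    rcases (t n).eq_empty_or_nonempty with he | he
    · rw [he, Metric.ediam_empty, ENNReal.zero_rpow_of_pos hd0]; exact zero_le
    · exact le_iSup (fun _ : (t n).Nonempty => Metric.ediam (t n) ^ d) he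
  have hfin : ∀ n, Metric.ediam (t n) ≠ ⊤ := fun n => ne_top_of_le_ne_top ENNReal.one_ne_top (hdm n)
  set a : ℕ → ℝ := fun n => (Metric.ediam (t n)).toReal with ha
  have a0 : ∀ n, 0 ≤ a n := fun n => ENNReal.toReal_nonneg
  have hsumF : ∀ F : Finset ℕ, ∑ n ∈ F, a n ^ d ≤ ε := by
    intro F
    have h2 : ∑ n ∈ F, Metric.ediam (t n) ^ d ≤ ENNReal.ofReal ε :=
      ((Finset.sum_le_sum fun n _ => hterm n).trans (ENNReal.sum_le_tsum F)).trans hsum.le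
    have h3 : ∑ n ∈ F, a n ^ d = (∑ n ∈ F, Metric.ediam (t n) ^ d).toReal := by
      rw [ENNReal.toReal_sum fun n _ => ENNReal.rpow_ne_top_of_nonneg hd0.le (hfin n)]
      exact Finset.sum_congr rfl fun n _ => by rw [← ENNReal.toReal_rpow]
    rw [h3]
    exact ENNReal.toReal_le_of_le_ofReal ε0.le h2
  set η : ℕ → ℝ := fun n => (ε * (1 / 2) ^ n) ^ (1 / d) with hη
  have η0 : ∀ n, 0 < η n := fun n => by positivity
  have ηd : ∀ n, η n ^ d = ε * (1 / 2) ^ n := by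
    intro n
    simp only [hη]
    rw [← Real.rpow_mul (by positivity), one_div_mul_cancel hd0.ne', Real.rpow_one]
  have hηF : ∀ F : Finset ℕ, ∑ n ∈ F, η n ^ d ≤ ε * 2 := by
    intro F
    simp only [ηd]
    rw [← Finset.mul_sum]
    refine mul_le_mul_of_nonneg_left ?_ ε0.le
    exact (summable_geometric_two.sum_le_tsum F (fun n _ => by positivity)).trans
      tsum_geometric_two.le
  have hpt : ∀ n, ∃ x, ∀ y ∈ t n, y ∈ Ioo (x - (a n + η n)) (x + (a n + η n)) := by
    intro n
    rcases (t n).eq_empty_or_nonempty with he | ⟨x, hx⟩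
    · exact ⟨0, by simp [he]⟩
    · refine ⟨x, fun y hy => ?_⟩
      have h2 : dist y x ≤ a n := by
        rw [dist_edist]
        exact ENNReal.toReal_mono (hfin n) (Metric.edist_le_ediam_of_mem hy hx)
      rw [Real.dist_eq, abs_le] at h2
      have := η0 n
      constructor <;> linarith
  choose x hx using hpt
  have hK : IsCompact (kX A B) := S.ca.inter_right S.cb.isClosed
  obtain ⟨F, hF⟩ := hK.elim_finite_subcover (fun n => Ioo (x n - (a n + η n)) (x n + (a n + η n)))
    (fun n => isOpen_Ioo) (hcov.trans (iUnion_mono fun n y hy => hx n y hy))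
  have hpq : ∀ n, x n - (a n + η n) < x n + (a n + η n) := fun n => by
    have := η0 n; have := a0 n; linarith
  choose n0 hn0 using fun n => hol _ _ (hpq n)
  set N := F.sup n0 with hN
  have sN : 0 < (1 + σ) ^ N := pow_pos s0 N
  have c1 := S.bcount_cover hσ hσ1 F N .X (fun n => x n - (a n + η n)) (fun n => x n + (a n + η n))
    (by
      intro y hy
      obtain ⟨j, hj, hm⟩ := mem_iUnion₂.1 (hF hy)
      exact ⟨j, hj, hm⟩)
  have c2 : ∑ n ∈ F, bcount τ σ A B N .X (x n - (a n + η n)) (x n + (a n + η n)) ≤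
      ∑ n ∈ F, C * (1 + σ) ^ N * (4 ^ d * (a n ^ d + η n ^ d)) := by
    refine Finset.sum_le_sum fun n hn => (hn0 n N (Finset.le_sup hn)).trans ?_
    refine mul_le_mul_of_nonneg_left ?_ (by positivity)
    have hm : x n + (a n + η n) - (x n - (a n + η n)) ≤ 4 * max (a n) (η n) := by
      have := le_max_left (a n) (η n); have := le_max_right (a n) (η n); linarith
    have hm0 : 0 ≤ max (a n) (η n) := (a0 n).trans (le_max_left _ _)
    calc _ ≤ (4 * max (a n) (η n)) ^ d := Real.rpow_le_rpow (by linarith [hpq n]) hm hd0.le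
      _ = 4 ^ d * max (a n) (η n) ^ d := Real.mul_rpow (by norm_num) hm0
      _ ≤ _ := by
        refine mul_le_mul_of_nonneg_left ?_ h4.le
        have p1 := Real.rpow_nonneg (a0 n) d
        have p2 := Real.rpow_nonneg (η0 n).le d
        rcases max_choice (a n) (η n) with h | h <;> rw [h] <;> linarith
  rw [← Finset.mul_sum, ← Finset.mul_sum, Finset.sum_add_distrib] at c2
  have c3 : 1 * (1 + σ) ^ N ≤ C * (1 + σ) ^ N * (4 ^ d * (ε * 3)) := by
    refine (c1.trans c2).trans ?_
    have := hsumF F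
    have := hηF F
    gcongr
    linarith
  have c4 : C * (1 + σ) ^ N * (4 ^ d * (ε * 3)) = (1 + σ) ^ N / 2 := by
    rw [hε]; field_simp; norm_num
  linarith

end RSys_s11

/-- The Hausdorff dimension of the boundary of the window $W = W_a ∪ W_b$ of
ρ̃ = (a ↦ aab, b ↦ ba) equals $\log(1+\sqrt 2)/(2\log τ)$, and the boundaries
of $W_a$ and $W_b$ have the same Hausdorff dimension. -/
theorem rho_tilde_boundary_dimH (τ : ℝ) (hτ : τ = (1 + Real.sqrt 5) / 2)
    (Wa Wb : Set ℝ) (hWa : Wa.Nonempty) (hWb : Wb.Nonempty)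
    (hca : IsCompact Wa) (hcb : IsCompact Wb)
    (h1 : Wa = (fun x : ℝ => (τ ^ 2)⁻¹ * x) '' Wa ∪
               (fun x : ℝ => (τ ^ 2)⁻¹ * (x - τ)) '' Wa ∪
               (fun x : ℝ => (τ ^ 2)⁻¹ * (x + τ ^ 2)) '' Wb)
    (h2 : Wb = (fun x : ℝ => (τ ^ 2)⁻¹ * (x - 2 * τ)) '' Wa ∪
               (fun x : ℝ => (τ ^ 2)⁻¹ * x) '' Wb) :
    dimH (frontier (Wa ∪ Wb)) =
      ENNReal.ofReal (Real.log (1 + Real.sqrt 2) / (2 * Real.log τ)) ∧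
    dimH (frontier Wa) = dimH (frontier (Wa ∪ Wb)) ∧
    dimH (frontier Wb) = dimH (frontier (Wa ∪ Wb)) := by
  have s5 : Real.sqrt 5 * Real.sqrt 5 = 5 := Real.mul_self_sqrt (by norm_num)
  have s5a : 2.236 < Real.sqrt 5 := Real.lt_sqrt_of_sq_lt (by norm_num)
  have s5b : Real.sqrt 5 < 2.2362 := (Real.sqrt_lt' (by norm_num)).2 (by norm_num)
  have t2 : τ * τ = τ + 1 := by rw [hτ]; linarith
  have lo : 1.618 < τ := by rw [hτ]; linarith
  have hi : τ < 1.6181 := by rw [hτ]; linarith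
  have tsq : τ ^ 2 = τ + 1 := by rw [sq, t2]
  have linv : (τ ^ 2)⁻¹ = 2 - τ := by
    rw [tsq]; exact inv_eq_of_mul_eq_one_left (by linarith)
  have pull : ∀ (c x : ℝ) (K : Set ℝ),
      x ∈ (fun y : ℝ => (2 - τ) * (y + c)) '' K ↔ (τ + 1) * x - c ∈ K := by
    intro c x K
    have e : (2 - τ) * (τ + 1) = 1 := by linarith
    constructor
    · rintro ⟨y, hy, rfl⟩
      convert hy using 1
      linear_combination (y + c) * e
    · intro h
      refine ⟨_, h, ?_⟩
      show (2 - τ) * ((τ + 1) * x - c + c) = x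
      linear_combination x * e
  have pullm : ∀ (c x : ℝ) (K : Set ℝ),
      x ∈ (fun y : ℝ => (2 - τ) * (y - c)) '' K ↔ (τ + 1) * x + c ∈ K := by
    intro c x K
    have := pull (-c) x K
    simp only [sub_neg_eq_add, ← sub_eq_add_neg] at this
    exact this
  have pull0 : ∀ (x : ℝ) (K : Set ℝ),
      x ∈ (fun y : ℝ => (2 - τ) * y) '' K ↔ (τ + 1) * x ∈ K := by
    intro x K
    simpa using pull 0 x K
  rw [linv] at h1 h2
  have S : RSys_s11 τ Wa Wb :=
    { t2 := t2, lo := lo, hi := hi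
      irr := by
        have : τ = Real.goldenRatio := hτ
        rw [this]; exact Real.goldenRatio_irrational
      ca := hca, cb := hcb, na := hWa, nb := hWb
      ia := by
        intro x
        conv_lhs => rw [h1]
        simp only [mem_union, pull0, pullm, pull, tsq]
        tauto
      ib := by
        intro x
        conv_lhs => rw [h2]
        simp only [mem_union, pull0, pullm] }
  have hσ : Real.sqrt 2 * Real.sqrt 2 = 2 := Real.mul_self_sqrt (by norm_num)
  have hσ1 : 1.414 < Real.sqrt 2 := Real.lt_sqrt_of_sq_lt (by norm_num)
  have hσ2 : Real.sqrt 2 < 1.415 := (Real.sqrt_lt' (by norm_num)).2 (by norm_num)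
  set d : ℝ := Real.log (1 + Real.sqrt 2) / (2 * Real.log τ) with hd
  have hlt : 0 < Real.log τ := Real.log_pos (by linarith)
  have hls : 0 < Real.log (1 + Real.sqrt 2) := Real.log_pos (by linarith)
  have d0 : 0 < d := by positivity
  have hdim : (2 - τ) ^ d * (1 + Real.sqrt 2) = 1 := by
    rw [Real.rpow_def_of_pos S.l0, ← linv, Real.log_inv, Real.log_pow]
    have : -(((2 : ℕ) : ℝ) * Real.log τ) * d = -Real.log (1 + Real.sqrt 2) := by
      rw [hd]; push_cast; field_simp
    rw [this, Real.exp_neg, Real.exp_log (by linarith)]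
    exact inv_mul_cancel₀ (by linarith)
  have dn : ((d.toNNReal : NNReal) : ℝ) = d := Real.coe_toNNReal _ d0.le
  have hX : (d.toNNReal : ENNReal) ≤ dimH (kX Wa Wb) := by
    apply le_dimH_of_hausdorffMeasure_ne_zero
    rw [dn]
    exact S.lower_s11 hσ hσ1 hσ2 d0 hdim
  have hup : ∀ {F : Set ℝ}, (F = Wa ∨ F = Wb ∨ F = Wa ∪ Wb) → dimH (frontier F) ≤ d.toNNReal :=
    fun hF => S.upper_s11 hσ hσ1 (Real.toNNReal_pos.2 d0) (by rw [dn]; exact hdim) hF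
  have hY : dimH (kX Wa Wb) ≤ dimH (kY τ Wa) := by
    have hsub : kX Wa Wb ⊆ (fun y => (τ + 1) * y + τ) '' kY τ Wa := by
      intro y hy
      have e : (τ + 1) * ((2 - τ) * (y - τ)) + τ = y := by rw [S.inv']; ring
      exact ⟨(2 - τ) * (y - τ), S.Y_dn (by rwa [e]), e⟩
    have hl : LipschitzWith (τ + 1).toNNReal (fun y => (τ + 1) * y + τ) := by
      refine LipschitzWith.of_dist_le_mul fun u w => ?_
      rw [Real.coe_toNNReal _ (by linarith), Real.dist_eq, Real.dist_eq,
        show (τ + 1) * u + τ - ((τ + 1) * w + τ) = (τ + 1) * (u - w) by ring, abs_mul,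
        abs_of_pos (by linarith : 0 < τ + 1)]
    exact (dimH_mono hsub).trans (hl.dimH_image_le _)
  have eW : dimH (frontier (Wa ∪ Wb)) = d.toNNReal :=
    le_antisymm (hup (Or.inr (Or.inr rfl))) (hX.trans (hY.trans (dimH_mono S.Y_sub_f)))
  have eA : dimH (frontier Wa) = d.toNNReal :=
    le_antisymm (hup (Or.inl rfl)) (hX.trans (dimH_mono S.X_sub_fa))
  have eB : dimH (frontier Wb) = d.toNNReal :=
    le_antisymm (hup (Or.inr (Or.inl rfl))) (hX.trans (dimH_mono S.X_sub_fb))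
  exact ⟨eW, by rw [eA, eW], by rw [eB, eW]⟩
end
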